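/- arXiv:1810.06039 — 2 statements merged into one kernel-verified Lean document; each statement's English description precedes it below -/
import Mathlib

section
/- Let 1 < p ≤ 2 and u be a weak solution of ∂_t(|u|^{p-2}u) − div A(x,t,u,Du) = div(|F|^{p-2}F) in Ω_T. Then on any cylinder Q_ρ^{(μ)}(z_o) ⊆ Ω_T with ρ, μ > 0 that is μ-sub-intrinsic with constant K, one has ⨍⨍_{Q_ρ^{(μ)}(z_o)} |u − (u)_{z_o;ρ}^{(μ)}|^p/ρ^p dx dt ≤ c [⨍⨍_{Q_ρ^{(μ)}(z_o)} |u^⟨p/2⟩ − ((u)_{z_o;ρ}^{(μ)})^⟨p/2⟩|^2/(μ^{p−2}ρ^p) dx dt]^{p/2} · [⨍⨍_{Q_ρ^{(μ)}(z_o)} (|Du|^p + |F|^p) dx dt]^{(2−p)/2}, where c = c(p,K). -/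
open MeasureTheory Set Filter
open scoped ENNReal Topology BigOperators

noncomputable section

abbrev Spc (n : ℕ) := EuclideanSpace ℝ (Fin n)
abbrev Vec (N : ℕ) := EuclideanSpace ℝ (Fin N)
abbrev Mat (N n : ℕ) := EuclideanSpace ℝ (Fin N × Fin n)

variable {n N : ℕ}

/-- Spatial partial derivative in direction `j` of a scalar function on space-time. -/
def pderivS (j : Fin n) (f : Spc n × ℝ → ℝ) (z : Spc n × ℝ) : ℝ :=
  fderiv ℝ (fun y => f (y, z.2)) z.1 (EuclideanSpace.single j 1)

/-- Time derivative of a vector-valued function on space-time. -/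
def tderiv (φ : Spc n × ℝ → Vec N) (z : Spc n × ℝ) : Vec N :=
  deriv (fun s => φ (z.1, s)) z.2

/-- Pairing `M · Dφ = ∑_{i,j} M_{ij} ∂_j φ_i` of a matrix field with the spatial gradient of a
test function. -/
def gradPair (M : Spc n × ℝ → Mat N n) (φ : Spc n × ℝ → Vec N) (z : Spc n × ℝ) : ℝ :=
  ∑ i : Fin N, ∑ j : Fin n, M z (i, j) * pderivS j (fun w => φ w i) z

/-- The power `w^⟨α⟩ := |w|^{α-1} w` of a vector. -/
def pw (α : ℝ) (w : Vec N) : Vec N := ‖w‖ ^ (α - 1) • w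

/-- Weak solution of the doubly nonlinear system
`∂_t(|u|^{p-2}u) − div A(x,t,u,Du) = div(|F|^{p-2}F)` in `Ω_T = Ω × (0,T)`. -/
structure WeakSolution (p ν L T : ℝ) (Ω : Set (Spc n))
    (A : Spc n × ℝ → Vec N → Mat N n → Mat N n)
    (F : Spc n × ℝ → Mat N n)
    (u : Spc n × ℝ → Vec N) (Du : Spc n × ℝ → Mat N n) : Prop where
  hn : 1 ≤ n
  hT : 0 < T
  openΩ : IsOpen Ω
  bddΩ : Bornology.IsBounded Ω
  connΩ : IsConnected Ω
  hν : 0 < ν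
  hνL : ν ≤ L
  measA : ∀ (v : Vec N) (ξ : Mat N n), Measurable fun z => A z v ξ
  contA : ∀ᵐ z ∂(volume.restrict (Ω ×ˢ Ioo 0 T)),
    Continuous fun q : Vec N × Mat N n => A z q.1 q.2
  coercivity : ∀ᵐ z ∂(volume.restrict (Ω ×ˢ Ioo 0 T)),
    ∀ (v : Vec N) (ξ : Mat N n), ν * ‖ξ‖ ^ p ≤ (inner ℝ (A z v ξ) ξ : ℝ)
  growth : ∀ᵐ z ∂(volume.restrict (Ω ×ˢ Ioo 0 T)),
    ∀ (v : Vec N) (ξ : Mat N n), ‖A z v ξ‖ ≤ L * ‖ξ‖ ^ (p - 1)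
  measu : Measurable u
  measDu : Measurable Du
  measF : Measurable F
  memLp_u : MemLp u (ENNReal.ofReal p) (volume.restrict (Ω ×ˢ Ioo 0 T))
  memLp_Du : MemLp Du (ENNReal.ofReal p) (volume.restrict (Ω ×ˢ Ioo 0 T))
  memLp_F : MemLp F (ENNReal.ofReal p) (volume.restrict (Ω ×ˢ Ioo 0 T))
  sliceLp : ∀ t ∈ Icc (0:ℝ) T,
    MemLp (fun x => u (x, t)) (ENNReal.ofReal p) (volume.restrict Ω)
  timeCont : ∀ t₀ ∈ Icc (0:ℝ) T,
    Tendsto (fun t => ∫ x in Ω, ‖u (x, t) - u (x, t₀)‖ ^ p) (𝓝[Icc (0:ℝ) T] t₀) (𝓝 0)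
  weakGrad : ∀ ψ : Spc n × ℝ → ℝ, ContDiff ℝ (⊤ : ℕ∞) ψ → HasCompactSupport ψ →
    tsupport ψ ⊆ Ω ×ˢ Ioo 0 T → ∀ (i : Fin N) (j : Fin n),
      ∫ z in Ω ×ˢ Ioo 0 T, u z i * pderivS j ψ z
        = - ∫ z in Ω ×ˢ Ioo 0 T, Du z (i, j) * ψ z
  weakForm : ∀ φ : Spc n × ℝ → Vec N, ContDiff ℝ (⊤ : ℕ∞) φ → HasCompactSupport φ →
    tsupport φ ⊆ Ω ×ˢ Ioo 0 T →
      ∫ z in Ω ×ˢ Ioo 0 T,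
        (‖u z‖ ^ (p - 2) * (inner ℝ (u z) (tderiv φ z) : ℝ)
          - gradPair (fun w => A w (u w) (Du w)) φ z)
        = ∫ z in Ω ×ˢ Ioo 0 T, ‖F z‖ ^ (p - 2) * gradPair F φ z

/-- The scaled parabolic cylinder `Q_ρ^{(μ)}(z₀)`:
`B_ρ(x₀) × (t₀ − μ^{p−2}ρ^p, t₀ + μ^{p−2}ρ^p)` if `p < 2`, and
`B_{μ^{(2−p)/p}ρ}(x₀) × (t₀ − ρ^p, t₀ + ρ^p)` if `p ≥ 2`. -/
def parCyl (p μ ρ : ℝ) (z₀ : Spc n × ℝ) : Set (Spc n × ℝ) :=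
  if p < 2 then
    Metric.ball z₀.1 ρ ×ˢ Ioo (z₀.2 - μ ^ (p - 2) * ρ ^ p) (z₀.2 + μ ^ (p - 2) * ρ ^ p)
  else
    Metric.ball z₀.1 (μ ^ ((2 - p) / p) * ρ) ×ˢ Ioo (z₀.2 - ρ ^ p) (z₀.2 + ρ ^ p)

/-- `Q_ρ^{(μ)}(z₀)` is `μ`-sub-intrinsic with constant `K`:
`⨍⨍ |u|^p/(μ^{2−𝔭}ρ^p) ≤ K μ^p ⨍⨍ (|Du|^p + |F|^p)`, where `𝔭 = max{p,2}`. -/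
def SubIntrinsic (p K μ ρ : ℝ) (z₀ : Spc n × ℝ) (u : Spc n × ℝ → Vec N)
    (Du F : Spc n × ℝ → Mat N n) : Prop :=
  ⨍ z in parCyl p μ ρ z₀, ‖u z‖ ^ p / (μ ^ (2 - max p 2) * ρ ^ p)
    ≤ K * μ ^ p * ⨍ z in parCyl p μ ρ z₀, (‖Du z‖ ^ p + ‖F z‖ ^ p)

/-- `Q_ρ^{(μ)}(z₀)` is `μ`-super-intrinsic with constant `K`:
either `μ^p ⨍⨍ (|Du|^p + |F|^p) ≤ K ⨍⨍ |u|^p/(μ^{2−𝔭}ρ^p)` or `μ^p ≤ K`. -/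
def SuperIntrinsic (p K μ ρ : ℝ) (z₀ : Spc n × ℝ) (u : Spc n × ℝ → Vec N)
    (Du F : Spc n × ℝ → Mat N n) : Prop :=
  (μ ^ p * ⨍ z in parCyl p μ ρ z₀, (‖Du z‖ ^ p + ‖F z‖ ^ p)
      ≤ K * ⨍ z in parCyl p μ ρ z₀, ‖u z‖ ^ p / (μ ^ (2 - max p 2) * ρ ^ p))
    ∨ μ ^ p ≤ K

/-!
The inequality is pointwise at heart: for `0 < α ≤ 1` and `|b| ≤ |a|`, writing
`a - b = |a|^{1-α} (a^⟨α⟩ - b^⟨α⟩) + (|a|^{1-α} - |b|^{1-α}) b^⟨α⟩` and bounding the second term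
by weighted AM-GM gives `|a - b| ≤ α⁻¹ |a|^{1-α} |a^⟨α⟩ - b^⟨α⟩|`. With `α = p/2` and `b` the mean
of `u`, Hölder's inequality with weights `p/2` and `(2-p)/2` separates the oscillation of
`u^⟨p/2⟩` from the size of `u`; by Jensen the mean contributes no more to the latter than `u`
itself. Sub-intrinsicity finally trades `⨍⨍ |u|^p` for `⨍⨍ (|Du|^p + |F|^p)`.
-/

theorem rpow_one_sub_sub_mul_rpow_le {α r s : ℝ} (hα : 0 < α) (hα1 : α ≤ 1) (hr : 0 ≤ r)
    (hs : 0 ≤ s) :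
    (r ^ (1 - α) - s ^ (1 - α)) * s ^ α ≤ (α⁻¹ - 1) * (r ^ (1 - α) * (r ^ α - s ^ α)) := by
  have rpow_factor {t : ℝ} (ht : 0 ≤ t) : t ^ (1 - α) * t ^ α = t := by
    rw [← Real.rpow_add' ht (by simp), sub_add_cancel, Real.rpow_one]
  rw [sub_mul, mul_sub, rpow_factor hr, rpow_factor hs]
  have am_gm : α⁻¹ * (r ^ (1 - α) * s ^ α) ≤ α⁻¹ * ((1 - α) * r + α * s) := by
    gcongr
    exact Real.geom_mean_le_arith_mean2_weighted (by linarith) hα.le hr hs (by ring)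
  have expand : α⁻¹ * ((1 - α) * r + α * s) = (α⁻¹ - 1) * r + s := by
    field_simp
  linarith

section VectorPow

variable {E : Type*} [NormedAddCommGroup E] [NormedSpace ℝ E]

/-- The power `w^⟨α⟩ = |w|^{α-1} w` in an arbitrary real normed space; for `E = Vec N` it is
definitionally `pw`. -/
def vectorPow (α : ℝ) (w : E) : E := ‖w‖ ^ (α - 1) • w

theorem norm_vectorPow {α : ℝ} (hα : α ≠ 0) (w : E) : ‖vectorPow α w‖ = ‖w‖ ^ α := by
  rcases eq_or_ne w 0 with rfl | hw
  · simp [vectorPow, Real.zero_rpow hα]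
  · rw [vectorPow, norm_smul, Real.norm_of_nonneg (by positivity),
      ← Real.rpow_add_one (norm_ne_zero_iff.2 hw), sub_add_cancel]

theorem norm_rpow_one_sub_smul_vectorPow (α : ℝ) (w : E) :
    ‖w‖ ^ (1 - α) • vectorPow α w = w := by
  rcases eq_or_ne w 0 with rfl | hw
  · simp [vectorPow]
  · rw [vectorPow, smul_smul, ← Real.rpow_add (norm_pos_iff.2 hw)]
    simp

theorem norm_sub_le_norm_rpow_mul_norm_vectorPow_sub {α : ℝ} (hα : 0 < α) (hα1 : α ≤ 1)
    {a b : E} (hba : ‖b‖ ≤ ‖a‖) :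
    ‖a - b‖ ≤ α⁻¹ * ‖a‖ ^ (1 - α) * ‖vectorPow α a - vectorPow α b‖ := by
  have decomposition : a - b = ‖a‖ ^ (1 - α) • (vectorPow α a - vectorPow α b)
      + (‖a‖ ^ (1 - α) - ‖b‖ ^ (1 - α)) • vectorPow α b := by
    rw [smul_sub, sub_smul, norm_rpow_one_sub_smul_vectorPow, norm_rpow_one_sub_smul_vectorPow]
    abel
  have coefficient_nonneg : 0 ≤ ‖a‖ ^ (1 - α) - ‖b‖ ^ (1 - α) :=
    sub_nonneg.2 (Real.rpow_le_rpow (norm_nonneg b) hba (by linarith))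
  have norm_diff_le : ‖a‖ ^ α - ‖b‖ ^ α ≤ ‖vectorPow α a - vectorPow α b‖ := by
    rw [← norm_vectorPow hα.ne', ← norm_vectorPow hα.ne']
    exact norm_sub_norm_le _ _
  have constant_nonneg : 0 ≤ α⁻¹ - 1 := sub_nonneg.2 ((one_le_inv₀ hα).2 hα1)
  calc ‖a - b‖
      = ‖‖a‖ ^ (1 - α) • (vectorPow α a - vectorPow α b)
          + (‖a‖ ^ (1 - α) - ‖b‖ ^ (1 - α)) • vectorPow α b‖ := by rw [← decomposition]
    _ ≤ ‖a‖ ^ (1 - α) * ‖vectorPow α a - vectorPow α b‖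
          + (‖a‖ ^ (1 - α) - ‖b‖ ^ (1 - α)) * ‖b‖ ^ α := by
        refine (norm_add_le _ _).trans_eq ?_
        rw [norm_smul, norm_smul, norm_vectorPow hα.ne', Real.norm_of_nonneg (by positivity),
          Real.norm_of_nonneg coefficient_nonneg]
    _ ≤ ‖a‖ ^ (1 - α) * ‖vectorPow α a - vectorPow α b‖
          + (α⁻¹ - 1) * (‖a‖ ^ (1 - α) * ‖vectorPow α a - vectorPow α b‖) := by
        grw [rpow_one_sub_sub_mul_rpow_le hα hα1 (norm_nonneg a) (norm_nonneg b), norm_diff_le]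
    _ = α⁻¹ * ‖a‖ ^ (1 - α) * ‖vectorPow α a - vectorPow α b‖ := by ring

theorem norm_sub_le_max_norm_rpow_mul_norm_vectorPow_sub {α : ℝ} (hα : 0 < α) (hα1 : α ≤ 1)
    (a b : E) :
    ‖a - b‖ ≤ α⁻¹ * max ‖a‖ ‖b‖ ^ (1 - α) * ‖vectorPow α a - vectorPow α b‖ := by
  rcases le_total ‖b‖ ‖a‖ with h | h
  · rw [max_eq_left h]
    exact norm_sub_le_norm_rpow_mul_norm_vectorPow_sub hα hα1 h
  · rw [max_eq_right h, norm_sub_rev, norm_sub_rev (vectorPow α a)]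
    exact norm_sub_le_norm_rpow_mul_norm_vectorPow_sub hα hα1 h

theorem norm_sub_rpow_le_norm_vectorPow_sub {p : ℝ} (hp : 0 < p) (hp2 : p ≤ 2) (a b : E) :
    ‖a - b‖ ^ p ≤ (2 / p) ^ p * ((‖vectorPow (p / 2) a - vectorPow (p / 2) b‖ ^ 2) ^ (p / 2)
      * (‖a‖ ^ p + ‖b‖ ^ p) ^ ((2 - p) / 2)) := by
  have max_nonneg : 0 ≤ max ‖a‖ ‖b‖ := le_max_of_le_left (norm_nonneg a)
  have max_rpow_le : max ‖a‖ ‖b‖ ^ p ≤ ‖a‖ ^ p + ‖b‖ ^ p := by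
    rw [(Real.monotoneOn_rpow_Ici_of_exponent_nonneg hp.le).map_max (norm_nonneg a) (norm_nonneg b)]
    exact max_le_add_of_nonneg (by positivity) (by positivity)
  set d := ‖vectorPow (p / 2) a - vectorPow (p / 2) b‖
  calc ‖a - b‖ ^ p
      ≤ ((p / 2)⁻¹ * max ‖a‖ ‖b‖ ^ (1 - p / 2) * d) ^ p :=
        Real.rpow_le_rpow (norm_nonneg _)
          (norm_sub_le_max_norm_rpow_mul_norm_vectorPow_sub (by linarith) (by linarith) a b) hp.le
    _ = (2 / p) ^ p * ((d ^ 2) ^ (p / 2) * (max ‖a‖ ‖b‖ ^ p) ^ ((2 - p) / 2)) := by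
        rw [Real.mul_rpow (by positivity) (norm_nonneg _),
          Real.mul_rpow (by positivity) (by positivity), inv_div, ← Real.rpow_mul max_nonneg,
          ← Real.rpow_mul max_nonneg, ← Real.rpow_natCast_mul (norm_nonneg _)]
        ring_nf
    _ ≤ _ := by
        have : 0 ≤ (2 - p) / 2 := by linarith
        gcongr

variable {X : Type*} [MeasurableSpace X] {m : Measure X} {u : X → E}

theorem memLp_vectorPow {q : ℝ≥0∞} {α : ℝ} (hα : 0 < α) (hu : MemLp u q m) :
    MemLp (fun x => vectorPow α (u x)) (q / ENNReal.ofReal α) m := by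
  have norm_memLp := hu.norm_rpow_div (ENNReal.ofReal α)
  rw [ENNReal.toReal_ofReal hα.le] at norm_memLp
  have hmeas : AEStronglyMeasurable (fun x => vectorPow α (u x)) m :=
    ((hu.1.norm.aemeasurable.pow_const (α - 1)).aestronglyMeasurable).smul hu.1
  refine norm_memLp.congr_norm hmeas (ae_of_all _ fun x => ?_)
  rw [norm_vectorPow hα.ne', Real.norm_of_nonneg (by positivity)]

theorem integrable_norm_vectorPow_sub_sq [IsFiniteMeasure m] {p : ℝ} (hp : 0 < p)
    (hu : MemLp u (ENNReal.ofReal p) m) (a : E) :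
    Integrable (fun x => ‖vectorPow (p / 2) (u x) - a‖ ^ 2) m := by
  have exponent : ENNReal.ofReal p / ENNReal.ofReal (p / 2) = 2 := by
    rw [← ENNReal.ofReal_div_of_pos (by positivity), div_div_cancel₀ hp.ne', ENNReal.ofReal_ofNat]
  have h := (memLp_vectorPow (half_pos hp) hu).sub (memLp_const a)
  rw [exponent] at h
  exact h.integrable_norm_pow two_ne_zero

end VectorPow

section Holder

variable {X : Type*} [MeasurableSpace X] {m : Measure X} {f g : X → ℝ} {a b : ℝ}

theorem integrable_rpow_mul_rpow (hf : Integrable f m) (hg : Integrable g m) (hf0 : 0 ≤ᵐ[m] f)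
    (hg0 : 0 ≤ᵐ[m] g) (ha : 0 ≤ a) (hb : 0 ≤ b) (hab : a + b = 1) :
    Integrable (fun x => f x ^ a * g x ^ b) m := by
  refine ((hf.const_mul a).add (hg.const_mul b)).mono'
    ((hf.aemeasurable.pow_const a).mul (hg.aemeasurable.pow_const b)).aestronglyMeasurable ?_
  filter_upwards [hf0, hg0] with x hfx hgx
  rw [Real.norm_of_nonneg (mul_nonneg (Real.rpow_nonneg hfx _) (Real.rpow_nonneg hgx _))]
  exact Real.geom_mean_le_arith_mean2_weighted ha hb hfx hgx hab

theorem integral_rpow_mul_rpow_le (hf : Integrable f m) (hg : Integrable g m) (hf0 : 0 ≤ᵐ[m] f)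
    (hg0 : 0 ≤ᵐ[m] g) (ha : 0 ≤ a) (hb : 0 ≤ b) (hab : a + b = 1) :
    ∫ x, f x ^ a * g x ^ b ∂m ≤ (∫ x, f x ∂m) ^ a * (∫ x, g x ∂m) ^ b := by
  have ofReal_rpow_mul_rpow {s t : ℝ} (hs : 0 ≤ s) (ht : 0 ≤ t) :
      ENNReal.ofReal (s ^ a * t ^ b) = ENNReal.ofReal s ^ a * ENNReal.ofReal t ^ b := by
    rw [ENNReal.ofReal_mul (Real.rpow_nonneg hs _), ENNReal.ofReal_rpow_of_nonneg hs ha,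
      ENNReal.ofReal_rpow_of_nonneg ht hb]
  have hf_int : 0 ≤ ∫ x, f x ∂m := integral_nonneg_of_ae hf0
  have hg_int : 0 ≤ ∫ x, g x ∂m := integral_nonneg_of_ae hg0
  have hfg0 : 0 ≤ᵐ[m] fun x => f x ^ a * g x ^ b := by
    filter_upwards [hf0, hg0] with x hfx hgx
    exact mul_nonneg (Real.rpow_nonneg hfx _) (Real.rpow_nonneg hgx _)
  have hcongr : ∫⁻ x, ENNReal.ofReal (f x ^ a * g x ^ b) ∂m
      = ∫⁻ x, ENNReal.ofReal (f x) ^ a * ENNReal.ofReal (g x) ^ b ∂m := by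
    refine lintegral_congr_ae ?_
    filter_upwards [hf0, hg0] with x hfx hgx using ofReal_rpow_mul_rpow hfx hgx
  rw [← ENNReal.ofReal_le_ofReal_iff (by positivity),
    ofReal_integral_eq_lintegral_ofReal (integrable_rpow_mul_rpow hf hg hf0 hg0 ha hb hab) hfg0,
    ofReal_rpow_mul_rpow hf_int hg_int, ofReal_integral_eq_lintegral_ofReal hf hf0,
    ofReal_integral_eq_lintegral_ofReal hg hg0, hcongr]
  exact ENNReal.lintegral_mul_norm_pow_le hf.aemeasurable.ennreal_ofReal
    hg.aemeasurable.ennreal_ofReal ha hb hab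

end Holder

theorem integrable_norm_rpow_of_memLp_ofReal {E X : Type*} [NormedAddCommGroup E]
    [MeasurableSpace X] {m : Measure X} {u : X → E} {p : ℝ} (hp : 0 < p)
    (hu : MemLp u (ENNReal.ofReal p) m) : Integrable (fun x => ‖u x‖ ^ p) m := by
  simpa only [ENNReal.toReal_ofReal hp.le] using
    hu.integrable_norm_rpow (by simpa using hp) ENNReal.ofReal_ne_top

section Oscillation

variable {E X : Type*} [NormedAddCommGroup E] [NormedSpace ℝ E] [MeasurableSpace X]
  {m : Measure X} {u : X → E} {p : ℝ}

theorem norm_integral_rpow_le [IsProbabilityMeasure m] (hp : 1 ≤ p)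
    (hu : MemLp u (ENNReal.ofReal p) m) :
    ‖∫ x, u x ∂m‖ ^ p ≤ ∫ x, ‖u x‖ ^ p ∂m := by
  have hp0 : 0 < p := by linarith
  calc ‖∫ x, u x ∂m‖ ^ p ≤ (∫ x, ‖u x‖ ∂m) ^ p := by
        gcongr
        exact norm_integral_le_integral_norm u
    _ ≤ ∫ x, ‖u x‖ ^ p ∂m :=
        (convexOn_rpow hp).map_integral_le (Real.continuous_rpow_const hp0.le).continuousOn
          isClosed_Ici (ae_of_all _ fun x => norm_nonneg (u x))
          (hu.integrable (ENNReal.one_le_ofReal.2 hp)).norm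
          (integrable_norm_rpow_of_memLp_ofReal hp0 hu)

theorem integral_norm_sub_rpow_le_integral_vectorPow_sub [IsFiniteMeasure m] (hp : 0 < p)
    (hp2 : p ≤ 2) (hu : MemLp u (ENNReal.ofReal p) m) (a : E) :
    ∫ x, ‖u x - a‖ ^ p ∂m
      ≤ (2 / p) ^ p * ((∫ x, ‖vectorPow (p / 2) (u x) - vectorPow (p / 2) a‖ ^ 2 ∂m) ^ (p / 2)
        * (∫ x, (‖u x‖ ^ p + ‖a‖ ^ p) ∂m) ^ ((2 - p) / 2)) := by
  have hosc := integrable_norm_vectorPow_sub_sq hp hu (vectorPow (p / 2) a)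
  have hsize : Integrable (fun x => ‖u x‖ ^ p + ‖a‖ ^ p) m :=
    (integrable_norm_rpow_of_memLp_ofReal hp hu).add (integrable_const _)
  have hosc0 : 0 ≤ᵐ[m] fun x => ‖vectorPow (p / 2) (u x) - vectorPow (p / 2) a‖ ^ 2 :=
    ae_of_all _ fun x => by positivity
  have hsize0 : 0 ≤ᵐ[m] fun x => ‖u x‖ ^ p + ‖a‖ ^ p := ae_of_all _ fun x => by positivity
  have hweight : 0 ≤ (2 - p) / 2 := by linarith
  have hweights : p / 2 + (2 - p) / 2 = 1 := by ring
  calc ∫ x, ‖u x - a‖ ^ p ∂m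
      ≤ ∫ x, (2 / p) ^ p * ((‖vectorPow (p / 2) (u x) - vectorPow (p / 2) a‖ ^ 2) ^ (p / 2)
          * (‖u x‖ ^ p + ‖a‖ ^ p) ^ ((2 - p) / 2)) ∂m :=
        integral_mono_of_nonneg (ae_of_all _ fun x => by positivity)
          ((integrable_rpow_mul_rpow hosc hsize hosc0 hsize0 (by positivity) hweight
            hweights).const_mul _)
          (ae_of_all _ fun x => norm_sub_rpow_le_norm_vectorPow_sub hp hp2 (u x) a)
    _ ≤ _ := by
        rw [integral_const_mul]
        gcongr
        exact integral_rpow_mul_rpow_le hosc hsize hosc0 hsize0 (by positivity) hweight hweights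

theorem integral_norm_sub_integral_rpow_le_integral_vectorPow_sub [IsProbabilityMeasure m]
    (hp : 1 ≤ p) (hp2 : p ≤ 2) (hu : MemLp u (ENNReal.ofReal p) m) :
    ∫ x, ‖u x - ∫ y, u y ∂m‖ ^ p ∂m
      ≤ (2 / p) ^ p
        * ((∫ x, ‖vectorPow (p / 2) (u x) - vectorPow (p / 2) (∫ y, u y ∂m)‖ ^ 2 ∂m) ^ (p / 2)
          * (2 * ∫ x, ‖u x‖ ^ p ∂m) ^ ((2 - p) / 2)) := by
  have hp0 : 0 < p := by linarith
  refine (integral_norm_sub_rpow_le_integral_vectorPow_sub hp0 hp2 hu _).trans ?_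
  have hmean : ∫ x, (‖u x‖ ^ p + ‖∫ y, u y ∂m‖ ^ p) ∂m ≤ 2 * ∫ x, ‖u x‖ ^ p ∂m := by
    rw [integral_add (integrable_norm_rpow_of_memLp_ofReal hp0 hu) (integrable_const _),
      integral_const, probReal_univ, one_smul, two_mul]
    gcongr
    exact norm_integral_rpow_le hp hu
  have : 0 ≤ (2 - p) / 2 := by linarith
  gcongr

theorem average_norm_sub_average_rpow_le_average_vectorPow_sub [IsFiniteMeasure m] [NeZero m]
    (hp : 1 ≤ p) (hp2 : p ≤ 2) (hu : MemLp u (ENNReal.ofReal p) m) :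
    ⨍ x, ‖u x - ⨍ y, u y ∂m‖ ^ p ∂m
      ≤ (2 / p) ^ p
        * ((⨍ x, ‖vectorPow (p / 2) (u x) - vectorPow (p / 2) (⨍ y, u y ∂m)‖ ^ 2 ∂m) ^ (p / 2)
          * (2 * ⨍ x, ‖u x‖ ^ p ∂m) ^ ((2 - p) / 2)) :=
  integral_norm_sub_integral_rpow_le_integral_vectorPow_sub hp hp2
    (hu.smul_measure (ENNReal.inv_ne_top.2 (NeZero.ne (m univ))))

end Oscillation

theorem div_rpow_mul_div_rpow {a b r s t : ℝ} (ha : 0 ≤ a) (hb : 0 ≤ b) (hr : 0 < r)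
    (hst : s + t = 1) : (a / r) ^ s * (b / r) ^ t = a ^ s * b ^ t / r := by
  rw [Real.div_rpow ha hr.le, Real.div_rpow hb hr.le, div_mul_div_comm, ← Real.rpow_add hr, hst,
    Real.rpow_one]

theorem div_rpow_sub_two_mul_rpow_half {a r μ : ℝ} (ha : 0 ≤ a) (hr : 0 ≤ r) (hμ : 0 < μ)
    (p : ℝ) :
    (a / (μ ^ (p - 2) * r)) ^ (p / 2) = (a / r) ^ (p / 2) * (μ ^ p) ^ ((2 - p) / 2) := by
  have hpow : (μ ^ (p - 2)) ^ (p / 2) * (μ ^ p) ^ ((2 - p) / 2) = 1 := by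
    rw [← Real.rpow_mul hμ.le, ← Real.rpow_mul hμ.le, ← Real.rpow_add hμ,
      show (p - 2) * (p / 2) + p * ((2 - p) / 2) = 0 by ring, Real.rpow_zero]
  rw [mul_comm, ← div_div, Real.div_rpow (by positivity) (by positivity),
    div_eq_iff (by positivity), mul_assoc, mul_comm (_ ^ ((2 - p) / 2)), hpow, mul_one]

theorem subquadratic_comparison_general {E X : Type*} [NormedAddCommGroup E] [NormedSpace ℝ E]
    [MeasurableSpace X] {m : Measure X} [IsFiniteMeasure m] [NeZero m] {p K μ ρ G : ℝ}
    (hp : 1 ≤ p) (hp2 : p ≤ 2) (hK : 0 ≤ K) (hμ : 0 < μ) (hρ : 0 < ρ) (hG : 0 ≤ G) {u : X → E}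
    (hu : MemLp u (ENNReal.ofReal p) m) (hsub : ⨍ x, ‖u x‖ ^ p / ρ ^ p ∂m ≤ K * μ ^ p * G) :
    ⨍ x, ‖u x - ⨍ y, u y ∂m‖ ^ p / ρ ^ p ∂m
      ≤ (2 / p) ^ p * (2 * K) ^ ((2 - p) / 2)
        * (⨍ x, ‖vectorPow (p / 2) (u x) - vectorPow (p / 2) (⨍ y, u y ∂m)‖ ^ 2
            / (μ ^ (p - 2) * ρ ^ p) ∂m) ^ (p / 2)
        * G ^ ((2 - p) / 2) := by
  have average_div (f : X → ℝ) (r : ℝ) : ⨍ x, f x / r ∂m = (⨍ x, f x ∂m) / r := integral_div r f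
  rw [average_div] at hsub
  rw [average_div, average_div]
  set U := ⨍ x, ‖u x‖ ^ p ∂m
  set D := ⨍ x, ‖vectorPow (p / 2) (u x) - vectorPow (p / 2) (⨍ y, u y ∂m)‖ ^ 2 ∂m
  have hU : 0 ≤ U := integral_nonneg fun x => by positivity
  have hD : 0 ≤ D := integral_nonneg fun x => by positivity
  have : 0 ≤ (2 - p) / 2 := by linarith
  calc (⨍ x, ‖u x - ⨍ y, u y ∂m‖ ^ p ∂m) / ρ ^ p
      ≤ (2 / p) ^ p * (D ^ (p / 2) * (2 * U) ^ ((2 - p) / 2)) / ρ ^ p := by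
        gcongr
        exact average_norm_sub_average_rpow_le_average_vectorPow_sub hp hp2 hu
    _ = (2 / p) ^ p * ((D / ρ ^ p) ^ (p / 2) * (2 * (U / ρ ^ p)) ^ ((2 - p) / 2)) := by
        rw [← mul_div_assoc 2 U, div_rpow_mul_div_rpow hD (by positivity) (by positivity) (by ring),
          mul_div_assoc]
    _ ≤ (2 / p) ^ p * ((D / ρ ^ p) ^ (p / 2) * (2 * (K * μ ^ p * G)) ^ ((2 - p) / 2)) := by
        gcongr
    _ = (2 / p) ^ p * (2 * K) ^ ((2 - p) / 2) * (D / (μ ^ (p - 2) * ρ ^ p)) ^ (p / 2)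
        * G ^ ((2 - p) / 2) := by
        rw [div_rpow_sub_two_mul_rpow_half hD (by positivity) hμ,
          show 2 * (K * μ ^ p * G) = 2 * K * μ ^ p * G by ring, Real.mul_rpow (by positivity) hG,
          Real.mul_rpow (by positivity) (by positivity)]
        ring

theorem isOpen_parCyl (p μ ρ : ℝ) (z₀ : Spc n × ℝ) : IsOpen (parCyl p μ ρ z₀) := by
  unfold parCyl
  split_ifs <;> exact Metric.isOpen_ball.prod isOpen_Ioo

theorem isBounded_parCyl (p μ ρ : ℝ) (z₀ : Spc n × ℝ) :
    Bornology.IsBounded (parCyl p μ ρ z₀) := by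
  unfold parCyl
  split_ifs <;> exact Metric.isBounded_ball.prod (Metric.isBounded_Ioo _ _)

theorem self_mem_parCyl {μ ρ : ℝ} (hμ : 0 < μ) (hρ : 0 < ρ) (p : ℝ) (z₀ : Spc n × ℝ) :
    z₀ ∈ parCyl p μ ρ z₀ := by
  unfold parCyl
  split_ifs <;>
    exact ⟨Metric.mem_ball_self (by positivity), sub_lt_self _ (by positivity),
      lt_add_of_pos_right _ (by positivity)⟩

instance isFiniteMeasure_restrict_parCyl (p μ ρ : ℝ) (z₀ : Spc n × ℝ) :
    IsFiniteMeasure (volume.restrict (parCyl p μ ρ z₀)) :=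
  isFiniteMeasure_restrict.2 (isBounded_parCyl p μ ρ z₀).measure_lt_top.ne

theorem neZero_restrict_parCyl {μ ρ : ℝ} (hμ : 0 < μ) (hρ : 0 < ρ) (p : ℝ) (z₀ : Spc n × ℝ) :
    NeZero (volume.restrict (parCyl p μ ρ z₀)) :=
  ⟨Measure.restrict_eq_zero.not.2
    ((isOpen_parCyl p μ ρ z₀).measure_pos volume ⟨z₀, self_mem_parCyl hμ hρ p z₀⟩).ne'⟩

theorem subIntrinsic_iff_of_le_two {p K μ ρ : ℝ} (hp2 : p ≤ 2) {z₀ : Spc n × ℝ}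
    {u : Spc n × ℝ → Vec N} {Du F : Spc n × ℝ → Mat N n} :
    SubIntrinsic p K μ ρ z₀ u Du F ↔
      ⨍ z in parCyl p μ ρ z₀, ‖u z‖ ^ p / ρ ^ p
        ≤ K * μ ^ p * ⨍ z in parCyl p μ ρ z₀, (‖Du z‖ ^ p + ‖F z‖ ^ p) := by
  simp only [SubIntrinsic, max_eq_right hp2, sub_self, Real.rpow_zero, one_mul]

/-- Let `1 < p ≤ 2` and `u` a weak solution. On any `μ`-sub-intrinsic cylinder
`Q_ρ^{(μ)}(z₀) ⊆ Ω_T` one has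
`⨍⨍ |u − (u)|^p/ρ^p ≤ c (⨍⨍ |u^⟨p/2⟩ − ((u))^⟨p/2⟩|²/(μ^{p−2}ρ^p))^{p/2}
(⨍⨍ (|Du|^p + |F|^p))^{(2−p)/2}` with `c = c(p, K)`. -/
theorem subquadratic_comparison (p K : ℝ) (hp : 1 < p) (hp2 : p ≤ 2) (hK : 1 ≤ K) :
    ∃ c > 0, ∀ (n N : ℕ) (ν L T : ℝ) (Ω : Set (Spc n))
      (A : Spc n × ℝ → Vec N → Mat N n → Mat N n) (F : Spc n × ℝ → Mat N n)
      (u : Spc n × ℝ → Vec N) (Du : Spc n × ℝ → Mat N n),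
      WeakSolution p ν L T Ω A F u Du →
      ∀ (z₀ : Spc n × ℝ) (ρ μ : ℝ), 0 < ρ → 0 < μ →
        parCyl p μ ρ z₀ ⊆ Ω ×ˢ Ioo 0 T →
        SubIntrinsic p K μ ρ z₀ u Du F →
        ⨍ z in parCyl p μ ρ z₀, ‖u z - ⨍ w in parCyl p μ ρ z₀, u w‖ ^ p / ρ ^ p
          ≤ c * (⨍ z in parCyl p μ ρ z₀,
                  ‖pw (p / 2) (u z) - pw (p / 2) (⨍ w in parCyl p μ ρ z₀, u w)‖ ^ 2
                    / (μ ^ (p - 2) * ρ ^ p)) ^ (p / 2)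
              * (⨍ z in parCyl p μ ρ z₀, (‖Du z‖ ^ p + ‖F z‖ ^ p)) ^ ((2 - p) / 2) := by
  refine ⟨(2 / p) ^ p * (2 * K) ^ ((2 - p) / 2), by positivity, ?_⟩
  intro n N ν L T Ω A F u Du hsol z₀ ρ μ hρ hμ hQ hsub
  have := neZero_restrict_parCyl hμ hρ p z₀
  exact subquadratic_comparison_general hp.le hp2 (by linarith) hμ hρ
    (integral_nonneg fun z => by positivity)
    (hsol.memLp_u.mono_measure (Measure.restrict_mono hQ le_rfl))
    ((subIntrinsic_iff_of_le_two hp2).1 hsub)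
end
end

section
/- Parabolic Poincaré inequality, subquadratic case: Let 1 < p ≤ 2 and u be a weak solution of ∂_t(|u|^{p-2}u) − div A(x,t,u,Du) = div(|F|^{p-2}F) in Ω_T. Then on any cylinder Q_ρ^{(μ)}(z_o) ⊆ Ω_T that is μ-sub-intrinsic with constant K, for any q ∈ [1,p] one has ⨍⨍_{Q_ρ^{(μ)}(z_o)} |u − (u)_{z_o;ρ}^{(μ)}|^q/ρ^q dx dt ≤ c [⨍⨍_{Q_ρ^{(μ)}(z_o)} (|Du|^q + |F|^q) dx dt]^{p−1} · [⨍⨍_{Q_ρ^{(μ)}(z_o)} (|Du|^p + |F|^p) dx dt]^{q(2−p)/p}, where c = c(n,p,L,K). -/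
open MeasureTheory Set Filter
open scoped ENNReal Topology BigOperators

noncomputable section

variable {n N : ℕ}

/-!
For fixed time, averaging difference quotients over the ball gives a Poincaré inequality in space.
In time, the equation says that the mean of `|u|^{p-2}u` against a spatial cut-off, seen as a
function of `t`, has derivative at most the averaged flux. For `p ≤ 2`, the point `m(t)` whose power
`|m|^{p-2}m` is that weighted mean is a quasi-minimizer of the oscillation of `u(·,t)`, and the
inverse power map is locally Lipschitz with constant `|m|^{2-p}` up to a factor. Hence `m` varies in
time by at most the flux times `|u|^{2-p}`; averaging over pairs of times glues the slices together.
The sub-intrinsic condition bounds the average of `|u|^p`, and with it every power of `μ` cancels.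
-/

/-! ### Power maps and nonlinear means -/

section RadialPow

variable {E : Type*} [NormedAddCommGroup E] [NormedSpace ℝ E]

/-- The power `x^⟨α⟩ = |x|^{α-1} x` in an arbitrary real normed space; on `Vec N` it is `pw α`, and
`|x|^{p-2} x = x^⟨p-1⟩`. -/
def radialPow (α : ℝ) (x : E) : E := ‖x‖ ^ (α - 1) • x

lemma norm_radialPow {α : ℝ} (hα : 0 < α) (x : E) : ‖radialPow α x‖ = ‖x‖ ^ α := by
  rw [radialPow, norm_smul, Real.norm_of_nonneg (by positivity),
    ← Real.rpow_add_one' (norm_nonneg x) (by simpa using hα.ne'), sub_add_cancel]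

lemma enorm_radialPow {α : ℝ} (hα : 0 < α) (x : E) : ‖radialPow α x‖ₑ = ‖x‖ₑ ^ α := by
  rw [← ofReal_norm, norm_radialPow hα, ← ENNReal.ofReal_rpow_of_nonneg (norm_nonneg x) hα.le,
    ofReal_norm]

lemma radialPow_radialPow {α β : ℝ} (hα : 0 < α) (h : α * β = 1) (x : E) :
    radialPow β (radialPow α x) = x := by
  rcases eq_or_ne x 0 with rfl | hx
  · simp [radialPow]
  have hx' : 0 < ‖x‖ := norm_pos_iff.mpr hx
  rw [radialPow, norm_radialPow hα, radialPow, smul_smul, ← Real.rpow_mul hx'.le,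
    ← Real.rpow_add hx', show α * (β - 1) + (α - 1) = 0 by linarith, Real.rpow_zero, one_smul]

lemma measurable_radialPow [MeasurableSpace E] [BorelSpace E] [SecondCountableTopology E]
    (α : ℝ) : Measurable (radialPow α : E → E) := by
  unfold radialPow
  fun_prop

lemma norm_sub_smul_radialPow_le {α : ℝ} (hα : 0 < α) (hα1 : α ≤ 1) {r : ℝ} {y : E}
    (hy : ‖y‖ ≤ r) : ‖y - r ^ (1 - α) • radialPow α y‖ ≤ r - ‖y‖ := by
  rcases eq_or_ne y 0 with rfl | hy0
  · simpa [radialPow] using hy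
  have hy' : 0 < ‖y‖ := norm_pos_iff.mpr hy0
  have hr : 0 < r := hy'.trans_le hy
  have hfactor : 1 ≤ r ^ (1 - α) * ‖y‖ ^ (α - 1) := by
    calc (1 : ℝ) = ‖y‖ ^ (1 - α) * ‖y‖ ^ (α - 1) := by rw [← Real.rpow_add hy']; simp
      _ ≤ _ := by gcongr
  have hnorm : r ^ (1 - α) * ‖y‖ ^ (α - 1) * ‖y‖ ≤ r := by
    calc r ^ (1 - α) * ‖y‖ ^ (α - 1) * ‖y‖ = r ^ (1 - α) * ‖y‖ ^ α := by
          rw [mul_assoc, ← Real.rpow_add_one hy'.ne', sub_add_cancel]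
      _ ≤ r ^ (1 - α) * r ^ α := by gcongr
      _ = r := by rw [← Real.rpow_add hr]; simp
  calc ‖y - r ^ (1 - α) • radialPow α y‖ = ‖(1 - r ^ (1 - α) * ‖y‖ ^ (α - 1)) • y‖ := by
        rw [radialPow, smul_smul, sub_smul, one_smul]
    _ = r ^ (1 - α) * ‖y‖ ^ (α - 1) * ‖y‖ - ‖y‖ := by
        rw [norm_smul, Real.norm_of_nonpos (by linarith)]; ring
    _ ≤ r - ‖y‖ := by linarith

lemma max_rpow_mul_norm_radialPow_sub_le {α : ℝ} (hα : 0 < α) (hα1 : α ≤ 1) (x y : E) :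
    max ‖x‖ ‖y‖ ^ (1 - α) * ‖radialPow α x - radialPow α y‖ ≤ 2 * ‖x - y‖ := by
  wlog hxy : ‖y‖ ≤ ‖x‖ generalizing x y with H
  · rw [max_comm, norm_sub_rev (radialPow α x), norm_sub_rev x]
    exact H y x (le_of_not_ge hxy)
  rcases eq_or_ne x 0 with rfl | hx
  · have : y = 0 := by simpa using hxy
    simp [this]
  have hx' : 0 < ‖x‖ := norm_pos_iff.mpr hx
  have hcancel : ‖x‖ ^ (1 - α) • radialPow α x = x := by
    rw [radialPow, smul_smul, ← Real.rpow_add hx']; simp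
  calc max ‖x‖ ‖y‖ ^ (1 - α) * ‖radialPow α x - radialPow α y‖
      = ‖‖x‖ ^ (1 - α) • (radialPow α x - radialPow α y)‖ := by
        rw [max_eq_left hxy, norm_smul, Real.norm_of_nonneg (by positivity)]
    _ = ‖(x - y) + (y - ‖x‖ ^ (1 - α) • radialPow α y)‖ := by
        rw [smul_sub, hcancel, sub_add_sub_cancel]
    _ ≤ ‖x - y‖ + (‖x‖ - ‖y‖) :=
        (norm_add_le _ _).trans (by gcongr; exact norm_sub_smul_radialPow_le hα hα1 hxy)
    _ ≤ 2 * ‖x - y‖ := by linarith [norm_sub_norm_le x y]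

lemma norm_radialPow_sub_le {α : ℝ} (hα : 0 < α) (hα1 : α ≤ 1) (x y : E) :
    ‖radialPow α x - radialPow α y‖ ≤ 4 * ‖x - y‖ ^ α := by
  rcases eq_or_ne x y with rfl | hne
  · simp [Real.zero_rpow hα.ne']
  have hd : 0 < ‖x - y‖ := norm_pos_iff.mpr (sub_ne_zero.mpr hne)
  have hmax : ‖x - y‖ / 2 ≤ max ‖x‖ ‖y‖ := by
    linarith [norm_sub_le x y, le_max_left ‖x‖ ‖y‖, le_max_right ‖x‖ ‖y‖]
  have htwo : (2 : ℝ) ^ (1 - α) ≤ 2 := Real.rpow_le_self_of_one_le one_le_two (by linarith)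
  have hscaled : ‖x - y‖ ^ (1 - α) * ‖radialPow α x - radialPow α y‖
      ≤ ‖x - y‖ ^ (1 - α) * (4 * ‖x - y‖ ^ α) := by
    calc ‖x - y‖ ^ (1 - α) * ‖radialPow α x - radialPow α y‖
        = 2 ^ (1 - α) * ((‖x - y‖ / 2) ^ (1 - α) * ‖radialPow α x - radialPow α y‖) := by
          rw [← mul_assoc, ← Real.mul_rpow zero_le_two (by positivity),
            mul_div_cancel₀ _ two_ne_zero]
      _ ≤ 2 * (max ‖x‖ ‖y‖ ^ (1 - α) * ‖radialPow α x - radialPow α y‖) := by gcongr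
      _ ≤ 2 * (2 * ‖x - y‖) :=
          mul_le_mul_of_nonneg_left (max_rpow_mul_norm_radialPow_sub_le hα hα1 x y) zero_le_two
      _ = 4 * (‖x - y‖ ^ (1 - α) * ‖x - y‖ ^ α) := by rw [← Real.rpow_add hd]; norm_num; ring
      _ = ‖x - y‖ ^ (1 - α) * (4 * ‖x - y‖ ^ α) := by ring
  exact le_of_mul_le_mul_left hscaled (by positivity)

lemma rpow_sub_rpow_mul_le {β : ℝ} (hβ : 1 ≤ β) {s t : ℝ} (hs : 0 ≤ s) (hst : s ≤ t) :
    (t ^ (β - 1) - s ^ (β - 1)) * s ≤ (β - 1) * (t ^ (β - 1) * (t - s)) := by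
  rcases (hs.trans hst).eq_or_lt with rfl | ht
  · simp [le_antisymm hst hs]
  have hpow : ∀ r : ℝ, 0 ≤ r → r ^ β = r ^ (β - 1) * r := fun r hr => by
    rw [← Real.rpow_add_one' hr (by linarith), sub_add_cancel]
  have htangent : t ^ β * (1 + β * (s / t - 1)) ≤ s ^ β := by
    have h := one_add_mul_self_le_rpow_one_add (s := s / t - 1)
      (by linarith [div_nonneg hs ht.le]) hβ
    rw [add_sub_cancel, Real.div_rpow hs ht.le, le_div_iff₀' (by positivity)] at h
    exact h
  have hexpand : t ^ β * (1 + β * (s / t - 1)) = t ^ (β - 1) * (t + β * (s - t)) := by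
    rw [hpow t ht.le]; field_simp
  rw [hexpand, hpow s hs] at htangent
  linarith

lemma norm_radialPow_sub_le_mul {β : ℝ} (hβ : 1 ≤ β) (x y : E) :
    ‖radialPow β x - radialPow β y‖ ≤ β * (max ‖x‖ ‖y‖ ^ (β - 1) * ‖x - y‖) := by
  wlog hxy : ‖y‖ ≤ ‖x‖ generalizing x y with H
  · rw [max_comm, norm_sub_rev (radialPow β x), norm_sub_rev x]
    exact H y x (le_of_not_ge hxy)
  have hmono : ‖y‖ ^ (β - 1) ≤ ‖x‖ ^ (β - 1) := by gcongr
  calc ‖radialPow β x - radialPow β y‖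
      = ‖‖x‖ ^ (β - 1) • (x - y) + (‖x‖ ^ (β - 1) - ‖y‖ ^ (β - 1)) • y‖ := by
        simp only [radialPow, smul_sub, sub_smul, sub_add_sub_cancel]
    _ ≤ ‖x‖ ^ (β - 1) * ‖x - y‖ + (‖x‖ ^ (β - 1) - ‖y‖ ^ (β - 1)) * ‖y‖ := by
        refine (norm_add_le _ _).trans_eq ?_
        rw [norm_smul, norm_smul, Real.norm_of_nonneg (by positivity),
          Real.norm_of_nonneg (sub_nonneg.2 hmono)]
    _ ≤ ‖x‖ ^ (β - 1) * ‖x - y‖ + (β - 1) * (‖x‖ ^ (β - 1) * ‖x - y‖) := by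
        refine add_le_add_right ((rpow_sub_rpow_mul_le hβ (norm_nonneg y) hxy).trans ?_) _
        have : 0 ≤ β - 1 := by linarith
        gcongr
        exact norm_sub_norm_le x y
    _ = β * (max ‖x‖ ‖y‖ ^ (β - 1) * ‖x - y‖) := by rw [max_eq_left hxy]; ring

lemma enorm_radialPow_sub_le {α : ℝ} (hα : 0 < α) (hα1 : α ≤ 1) (x y : E) :
    ‖radialPow α x - radialPow α y‖ₑ ≤ 4 * ‖x - y‖ₑ ^ α := by
  rw [← ofReal_norm, ← ofReal_norm, ENNReal.ofReal_rpow_of_nonneg (norm_nonneg _) hα.le,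
    ← ENNReal.ofReal_ofNat 4, ← ENNReal.ofReal_mul (by norm_num)]
  exact ENNReal.ofReal_le_ofReal (norm_radialPow_sub_le hα hα1 x y)

lemma enorm_rpow_mul_enorm_radialPow_sub_le {α : ℝ} (hα : 0 < α) (hα1 : α ≤ 1) (x y : E) :
    ‖y‖ₑ ^ (1 - α) * ‖radialPow α x - radialPow α y‖ₑ ≤ 2 * ‖x - y‖ₑ := by
  have hα' : 0 ≤ 1 - α := by linarith
  simp only [← ofReal_norm]
  rw [ENNReal.ofReal_rpow_of_nonneg (norm_nonneg _) hα', ← ENNReal.ofReal_mul (by positivity),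
    ← ENNReal.ofReal_ofNat 2, ← ENNReal.ofReal_mul (by norm_num)]
  refine ENNReal.ofReal_le_ofReal (le_trans ?_ (max_rpow_mul_norm_radialPow_sub_le hα hα1 x y))
  gcongr
  exact le_max_right _ _

lemma enorm_radialPow_sub_le_mul {β : ℝ} (hβ : 1 ≤ β) (x y : E) :
    ‖radialPow β x - radialPow β y‖ₑ
      ≤ ENNReal.ofReal β * ((‖x‖ₑ ^ (β - 1) + ‖y‖ₑ ^ (β - 1)) * ‖x - y‖ₑ) := by
  have hβ' : 0 ≤ β - 1 := by linarith
  simp only [← ofReal_norm]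
  rw [ENNReal.ofReal_rpow_of_nonneg (norm_nonneg _) hβ',
    ENNReal.ofReal_rpow_of_nonneg (norm_nonneg _) hβ',
    ← ENNReal.ofReal_add (by positivity) (by positivity), ← ENNReal.ofReal_mul (by positivity),
    ← ENNReal.ofReal_mul (by linarith)]
  refine ENNReal.ofReal_le_ofReal ((norm_radialPow_sub_le_mul hβ x y).trans ?_)
  gcongr
  rcases max_choice ‖x‖ ‖y‖ with h | h <;> rw [h]
  exacts [le_add_of_nonneg_right (by positivity), le_add_of_nonneg_left (by positivity)]

end RadialPow

section PowerMeans

variable {X : Type*} [MeasurableSpace X] {μ : Measure X} [IsProbabilityMeasure μ]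

lemma lintegral_rpow_le_rpow_lintegral_rpow {r s : ℝ} (hr : 0 < r) (hrs : r ≤ s)
    {f : X → ℝ≥0∞} (hf : AEMeasurable f μ) :
    ∫⁻ x, f x ^ r ∂μ ≤ (∫⁻ x, f x ^ s ∂μ) ^ (r / s) := by
  have h := eLpNorm'_le_eLpNorm'_of_exponent_le hr hrs μ hf.aestronglyMeasurable
  simp only [eLpNorm', enorm_eq_self] at h
  calc ∫⁻ x, f x ^ r ∂μ = ((∫⁻ x, f x ^ r ∂μ) ^ (1 / r)) ^ r := by
        rw [← ENNReal.rpow_mul, one_div_mul_cancel hr.ne', ENNReal.rpow_one]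
    _ ≤ ((∫⁻ x, f x ^ s ∂μ) ^ (1 / s)) ^ r := ENNReal.rpow_le_rpow h hr.le
    _ = (∫⁻ x, f x ^ s ∂μ) ^ (r / s) := by rw [← ENNReal.rpow_mul, one_div_mul_eq_div]

lemma rpow_lintegral_le_lintegral_rpow {q : ℝ} (hq : 1 ≤ q) {f : X → ℝ≥0∞}
    (hf : AEMeasurable f μ) : (∫⁻ x, f x ∂μ) ^ q ≤ ∫⁻ x, f x ^ q ∂μ := by
  have h := lintegral_rpow_le_rpow_lintegral_rpow one_pos hq hf
  simp only [ENNReal.rpow_one] at h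
  refine (ENNReal.rpow_le_rpow h (by linarith)).trans_eq ?_
  rw [← ENNReal.rpow_mul, one_div_mul_cancel (by linarith), ENNReal.rpow_one]

lemma lintegral_rpow_le_rpow_lintegral {θ : ℝ} (hθ0 : 0 ≤ θ) (hθ1 : θ ≤ 1) {f : X → ℝ≥0∞}
    (hf : AEMeasurable f μ) : ∫⁻ x, f x ^ θ ∂μ ≤ (∫⁻ x, f x ∂μ) ^ θ := by
  rcases hθ0.eq_or_lt with rfl | hθ
  · simp
  simpa using lintegral_rpow_le_rpow_lintegral_rpow hθ hθ1 hf

end PowerMeans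

lemma ennreal_add_rpow_le_two_rpow_mul {r : ℝ} (hr : 0 ≤ r) (a b : ℝ≥0∞) :
    (a + b) ^ r ≤ 2 ^ r * (a ^ r + b ^ r) := by
  calc (a + b) ^ r ≤ (2 * max a b) ^ r := by
        gcongr
        rw [two_mul]
        exact add_le_add (le_max_left a b) (le_max_right a b)
    _ = 2 ^ r * max a b ^ r := ENNReal.mul_rpow_of_nonneg _ _ hr
    _ ≤ 2 ^ r * (a ^ r + b ^ r) := by
        gcongr
        rcases max_choice a b with h | h <;> rw [h]
        exacts [le_self_add, le_add_self]

section RadialMean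

variable {E : Type*} [NormedAddCommGroup E] [NormedSpace ℝ E]

/-- The constant `C` in `|a - b| ≤ C ⨍ |f - b|`, where `a` is the mean of `f` in the sense of
`radialMean α`. -/
def radialMeanConst (α : ℝ) : ℝ := 1 / α * (2 ^ (1 / α) * (2 + 4 ^ (1 / α)))

lemma one_le_radialMeanConst {α : ℝ} (h0 : 0 < α) (h1 : α ≤ 1) : 1 ≤ radialMeanConst α := by
  have hβ : 1 ≤ 1 / α := one_le_one_div h0 h1
  have h2 : (1 : ℝ) ≤ 2 ^ (1 / α) := Real.one_le_rpow one_le_two (by linarith)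
  have h4 : (0 : ℝ) ≤ 4 ^ (1 / α) := by positivity
  exact one_le_mul_of_one_le_of_one_le hβ (one_le_mul_of_one_le_of_one_le h2 (by linarith))

lemma ofReal_radialMeanConst {α : ℝ} (h0 : 0 < α) :
    ENNReal.ofReal (radialMeanConst α)
      = ENNReal.ofReal (1 / α) * (2 ^ (1 / α) * (2 + 4 ^ (1 / α))) := by
  rw [radialMeanConst, ENNReal.ofReal_mul (by positivity), ENNReal.ofReal_mul (by positivity),
    ENNReal.ofReal_add (by positivity) (by positivity), ← ENNReal.ofReal_rpow_of_pos two_pos,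
    ← ENNReal.ofReal_rpow_of_pos four_pos, ENNReal.ofReal_ofNat, ENNReal.ofReal_ofNat]

lemma enorm_radialPow_one_div_sub_le {α : ℝ} (h0 : 0 < α) (h1 : α ≤ 1) {V b : E} {J : ℝ≥0∞}
    (hlin : ‖b‖ₑ ^ (1 - α) * ‖V - radialPow α b‖ₑ ≤ 2 * J)
    (hpow : ‖V - radialPow α b‖ₑ ≤ 4 * J ^ α) :
    ‖radialPow (1 / α) V - b‖ₑ ≤ ENNReal.ofReal (radialMeanConst α) * J := by
  have hβ : 1 ≤ 1 / α := one_le_one_div h0 h1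
  rw [ofReal_radialMeanConst h0]
  have hαβ : α * (1 / α) = 1 := mul_one_div_cancel h0.ne'
  set β := 1 / α
  set B := radialPow α b with hB
  set δ := ‖V - B‖ₑ
  have hβ0 : 0 ≤ β - 1 := by linarith
  have hBpow : ‖B‖ₑ ^ (β - 1) = ‖b‖ₑ ^ (1 - α) := by
    rw [hB, enorm_radialPow h0, ← ENNReal.rpow_mul]
    congr 1; linarith
  have hδβ : δ ^ (β - 1) * δ ≤ 4 ^ β * J := by
    calc δ ^ (β - 1) * δ = δ ^ β := by
          rw [← sub_add_cancel β 1, ENNReal.rpow_add_of_nonneg _ _ hβ0 zero_le_one,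
            ENNReal.rpow_one, sub_add_cancel]
      _ ≤ (4 * J ^ α) ^ β := by gcongr
      _ = 4 ^ β * J := by
          rw [ENNReal.mul_rpow_of_nonneg _ _ (by linarith), ← ENNReal.rpow_mul, hαβ,
            ENNReal.rpow_one]
  have htri : ‖V‖ₑ ≤ δ + ‖B‖ₑ := by simpa using enorm_add_le (V - B) B
  have hsum : ‖V‖ₑ ^ (β - 1) + ‖B‖ₑ ^ (β - 1) ≤ 2 ^ β * (δ ^ (β - 1) + ‖B‖ₑ ^ (β - 1)) := by
    calc ‖V‖ₑ ^ (β - 1) + ‖B‖ₑ ^ (β - 1)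
        ≤ (δ + ‖B‖ₑ) ^ (β - 1) + (δ + ‖B‖ₑ) ^ (β - 1) := by gcongr; exact le_add_self
      _ = 2 * (δ + ‖B‖ₑ) ^ (β - 1) := (two_mul _).symm
      _ ≤ 2 * (2 ^ (β - 1) * (δ ^ (β - 1) + ‖B‖ₑ ^ (β - 1))) := by
          gcongr
          exact ennreal_add_rpow_le_two_rpow_mul hβ0 _ _
      _ = 2 ^ β * (δ ^ (β - 1) + ‖B‖ₑ ^ (β - 1)) := by
          rw [← mul_assoc, ENNReal.rpow_sub _ _ two_ne_zero ENNReal.ofNat_ne_top, ENNReal.rpow_one,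
            ENNReal.mul_div_cancel two_ne_zero ENNReal.ofNat_ne_top]
  calc ‖radialPow β V - b‖ₑ = ‖radialPow β V - radialPow β B‖ₑ := by
        rw [hB, radialPow_radialPow h0 hαβ]
    _ ≤ ENNReal.ofReal β * ((‖V‖ₑ ^ (β - 1) + ‖B‖ₑ ^ (β - 1)) * δ) :=
        enorm_radialPow_sub_le_mul hβ V B
    _ ≤ ENNReal.ofReal β * (2 ^ β * (δ ^ (β - 1) + ‖B‖ₑ ^ (β - 1)) * δ) := by gcongr
    _ = ENNReal.ofReal β * (2 ^ β * (‖b‖ₑ ^ (1 - α) * δ + δ ^ (β - 1) * δ)) := by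
        rw [hBpow]; ring
    _ ≤ ENNReal.ofReal β * (2 ^ β * (2 * J + 4 ^ β * J)) := by gcongr
    _ = ENNReal.ofReal β * (2 ^ β * (2 + 4 ^ β)) * J := by ring

variable {X : Type*} [MeasurableSpace X]

/-- The mean of `f` taken in the variable `f^⟨α⟩`, transformed back by the inverse power. -/
def radialMean (α : ℝ) (W : Measure X) (f : X → E) : E :=
  radialPow (1 / α) (∫ y, radialPow α (f y) ∂W)

variable [MeasurableSpace E] [BorelSpace E] {W : Measure X} [IsProbabilityMeasure W]

lemma lintegral_enorm_radialPow_sub_le {α : ℝ} (h0 : 0 < α) (h1 : α ≤ 1) {f : X → E}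
    (hf : Measurable f) (b : E) :
    ∫⁻ y, ‖radialPow α (f y) - radialPow α b‖ₑ ∂W ≤ 4 * (∫⁻ y, ‖f y - b‖ₑ ∂W) ^ α := by
  have hm : Measurable fun y => ‖f y - b‖ₑ := (hf.sub_const b).enorm
  calc ∫⁻ y, ‖radialPow α (f y) - radialPow α b‖ₑ ∂W
      ≤ ∫⁻ y, 4 * ‖f y - b‖ₑ ^ α ∂W := lintegral_mono fun y => enorm_radialPow_sub_le h0 h1 _ _
    _ = 4 * ∫⁻ y, ‖f y - b‖ₑ ^ α ∂W := lintegral_const_mul _ (hm.pow_const α)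
    _ ≤ 4 * (∫⁻ y, ‖f y - b‖ₑ ∂W) ^ α := by
        gcongr
        exact lintegral_rpow_le_rpow_lintegral h0.le h1 hm.aemeasurable

variable [CompleteSpace E] [SecondCountableTopology E]

lemma enorm_integral_radialPow_sub_le {α : ℝ} (h0 : 0 < α) (h1 : α ≤ 1) {f : X → E}
    (hf : Measurable f) {b : E} (hfb : ∫⁻ y, ‖f y - b‖ₑ ∂W ≠ ∞) :
    ‖(∫ y, radialPow α (f y) ∂W) - radialPow α b‖ₑ
      ≤ ∫⁻ y, ‖radialPow α (f y) - radialPow α b‖ₑ ∂W := by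
  have hdiff : Integrable (fun y => radialPow α (f y) - radialPow α b) W := by
    refine ⟨(((measurable_radialPow α).comp hf).sub_const _).aestronglyMeasurable,
      (lintegral_enorm_radialPow_sub_le h0 h1 hf b).trans_lt ?_⟩
    have := ENNReal.rpow_lt_top_of_nonneg h0.le hfb
    finiteness
  have hpow : Integrable (fun y => radialPow α (f y)) W := by
    simpa [Pi.add_def] using hdiff.add (integrable_const (radialPow α b))
  have hmean : (∫ y, radialPow α (f y) ∂W) - radialPow α b
      = ∫ y, (radialPow α (f y) - radialPow α b) ∂W := by
    rw [integral_sub hpow (integrable_const _)]; simp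
  rw [hmean]
  exact enorm_integral_le_lintegral_enorm _

lemma enorm_radialMean_sub_le {α : ℝ} (h0 : 0 < α) (h1 : α ≤ 1) {f : X → E}
    (hf : Measurable f) (b : E) :
    ‖radialMean α W f - b‖ₑ
      ≤ ENNReal.ofReal (radialMeanConst α) * ∫⁻ y, ‖f y - b‖ₑ ∂W := by
  rcases eq_or_ne (∫⁻ y, ‖f y - b‖ₑ ∂W) ∞ with hJ | hJ
  · rw [hJ, ENNReal.mul_top
      (ENNReal.ofReal_pos.2 (one_pos.trans_le (one_le_radialMeanConst h0 h1))).ne']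
    exact le_top
  have hδ := enorm_integral_radialPow_sub_le h0 h1 hf hJ
  refine enorm_radialPow_one_div_sub_le h0 h1 ?_
    (hδ.trans (lintegral_enorm_radialPow_sub_le h0 h1 hf b))
  calc ‖b‖ₑ ^ (1 - α) * ‖(∫ y, radialPow α (f y) ∂W) - radialPow α b‖ₑ
      ≤ ‖b‖ₑ ^ (1 - α) * ∫⁻ y, ‖radialPow α (f y) - radialPow α b‖ₑ ∂W := by gcongr
    _ = ∫⁻ y, ‖b‖ₑ ^ (1 - α) * ‖radialPow α (f y) - radialPow α b‖ₑ ∂W :=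
        (lintegral_const_mul _ (((measurable_radialPow α).comp hf).sub_const _).enorm).symm
    _ ≤ ∫⁻ y, 2 * ‖f y - b‖ₑ ∂W :=
        lintegral_mono fun y => enorm_rpow_mul_enorm_radialPow_sub_le h0 h1 _ _
    _ = 2 * ∫⁻ y, ‖f y - b‖ₑ ∂W := lintegral_const_mul _ (hf.sub_const b).enorm

end RadialMean

lemma enorm_sub_rpow_le_three_mul {E : Type*} [NormedAddCommGroup E] {q : ℝ} (hq : 1 ≤ q)
    (hq2 : q ≤ 2) {x y a b : E} :
    ‖x - y‖ₑ ^ q ≤ 3 * (‖x - a‖ₑ ^ q + ‖y - b‖ₑ ^ q + ‖a - b‖ₑ ^ q) := by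
  have htri : ‖x - y‖ₑ ≤ ‖x - a‖ₑ + ‖y - b‖ₑ + ‖a - b‖ₑ := by
    calc ‖x - y‖ₑ = ‖((x - a) - (y - b)) + (a - b)‖ₑ := by congr 1; abel
      _ ≤ _ := (enorm_add_le _ _).trans (by gcongr; exact enorm_sub_le)
  have hpow := ENNReal.rpow_sum_le_const_mul_sum_rpow Finset.univ
    ![‖x - a‖ₑ, ‖y - b‖ₑ, ‖a - b‖ₑ] hq
  simp only [Fin.sum_univ_three, Matrix.cons_val, Finset.card_univ, Fintype.card_fin] at hpow
  calc ‖x - y‖ₑ ^ q ≤ (‖x - a‖ₑ + ‖y - b‖ₑ + ‖a - b‖ₑ) ^ q := by gcongr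
    _ ≤ (3 : ℕ) ^ (q - 1) * (‖x - a‖ₑ ^ q + ‖y - b‖ₑ ^ q + ‖a - b‖ₑ ^ q) := hpow
    _ ≤ 3 * (‖x - a‖ₑ ^ q + ‖y - b‖ₑ ^ q + ‖a - b‖ₑ ^ q) := by
        gcongr
        exact (ENNReal.rpow_le_rpow_of_exponent_le (by norm_num) (by linarith)).trans_eq
          (ENNReal.rpow_one _)

lemma lintegral_lintegral_add_self {X : Type*} [MeasurableSpace X] {P : Measure X}
    [IsProbabilityMeasure P] {f : X → ℝ≥0∞} (hf : Measurable f) :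
    ∫⁻ x, ∫⁻ y, (f x + f y) ∂P ∂P = 2 * ∫⁻ x, f x ∂P := by
  simp only [lintegral_add_left measurable_const, lintegral_add_left hf, lintegral_const,
    measure_univ, mul_one, two_mul]

/-! ### Oscillation on product spaces -/

section ProductOscillation

variable {E : Type*} [NormedAddCommGroup E] [MeasurableSpace E] [BorelSpace E]
  {X : Type*} [MeasurableSpace X] {P : Measure X} {q : ℝ}

section SingleTime

variable [NormedSpace ℝ E] {W : Measure X} [IsProbabilityMeasure W] {κ : ℝ≥0∞} {p : ℝ}

lemma enorm_integral_radialPow_rpow_le (hp : 1 < p) (hp2 : p ≤ 2) (hq : 0 ≤ q)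
    (hW : W ≤ κ • P) {f : X → E} (hf : Measurable f) :
    (‖∫ y, radialPow (p - 1) (f y) ∂W‖ₑ ^ (1 / (p - 1) - 1)) ^ q
      ≤ (κ * ∫⁻ y, ‖f y‖ₑ ^ p ∂P) ^ (q * (2 - p) / p) := by
  have hα : 0 < p - 1 := by linarith
  have hβ : 0 ≤ 1 / (p - 1) - 1 := by linarith [one_le_one_div hα (by linarith)]
  have : 0 ≤ q * (2 - p) / p := div_nonneg (mul_nonneg hq (by linarith)) (by linarith)
  have hmean : ‖∫ y, radialPow (p - 1) (f y) ∂W‖ₑ ≤ (∫⁻ y, ‖f y‖ₑ ^ p ∂W) ^ ((p - 1) / p) := by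
    refine (enorm_integral_le_lintegral_enorm _).trans ?_
    simp only [enorm_radialPow hα]
    exact lintegral_rpow_le_rpow_lintegral_rpow hα (by linarith) hf.enorm.aemeasurable
  calc (‖∫ y, radialPow (p - 1) (f y) ∂W‖ₑ ^ (1 / (p - 1) - 1)) ^ q
      ≤ (((∫⁻ y, ‖f y‖ₑ ^ p ∂W) ^ ((p - 1) / p)) ^ (1 / (p - 1) - 1)) ^ q := by gcongr
    _ = (∫⁻ y, ‖f y‖ₑ ^ p ∂W) ^ (q * (2 - p) / p) := by
        rw [← ENNReal.rpow_mul, ← ENNReal.rpow_mul]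
        congr 1
        field_simp
        ring
    _ ≤ (∫⁻ y, ‖f y‖ₑ ^ p ∂(κ • P)) ^ (q * (2 - p) / p) := by gcongr
    _ = (κ * ∫⁻ y, ‖f y‖ₑ ^ p ∂P) ^ (q * (2 - p) / p) := by
        rw [lintegral_smul_measure, smul_eq_mul]

lemma enorm_radialMean_sub_radialMean_rpow_le (hp : 1 < p) (hp2 : p ≤ 2) (hq : 0 ≤ q)
    (hW : W ≤ κ • P) {f g : X → E} (hf : Measurable f) (hg : Measurable g) {Γ : ℝ≥0∞}
    (hΓ : ‖(∫ y, radialPow (p - 1) (g y) ∂W) - ∫ y, radialPow (p - 1) (f y) ∂W‖ₑ ≤ Γ) :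
    ‖radialMean (p - 1) W f - radialMean (p - 1) W g‖ₑ ^ q
      ≤ (2 * ENNReal.ofReal (1 / (p - 1)) * Γ) ^ q
        * ((κ * ∫⁻ y, ‖f y‖ₑ ^ p ∂P) ^ (q * (2 - p) / p)
          + (κ * ∫⁻ y, ‖g y‖ₑ ^ p ∂P) ^ (q * (2 - p) / p)) := by
  rw [enorm_sub_rev] at hΓ
  set V := ∫ y, radialPow (p - 1) (f y) ∂W
  set V' := ∫ y, radialPow (p - 1) (g y) ∂W
  set β := 1 / (p - 1)
  have hβ1 : 1 ≤ β := one_le_one_div (by linarith) (by linarith)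
  calc ‖radialMean (p - 1) W f - radialMean (p - 1) W g‖ₑ ^ q
      ≤ (ENNReal.ofReal β * ((‖V‖ₑ ^ (β - 1) + ‖V'‖ₑ ^ (β - 1)) * Γ)) ^ q := by
        refine ENNReal.rpow_le_rpow ((enorm_radialPow_sub_le_mul hβ1 V V').trans ?_) hq
        gcongr
    _ = (ENNReal.ofReal β * Γ) ^ q * (‖V‖ₑ ^ (β - 1) + ‖V'‖ₑ ^ (β - 1)) ^ q := by
        rw [← ENNReal.mul_rpow_of_nonneg _ _ hq]; congr 1; ring
    _ ≤ (ENNReal.ofReal β * Γ) ^ q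
          * (2 ^ q * ((‖V‖ₑ ^ (β - 1)) ^ q + (‖V'‖ₑ ^ (β - 1)) ^ q)) := by
        gcongr
        exact ennreal_add_rpow_le_two_rpow_mul hq _ _
    _ = (2 * ENNReal.ofReal β * Γ) ^ q * ((‖V‖ₑ ^ (β - 1)) ^ q + (‖V'‖ₑ ^ (β - 1)) ^ q) := by
        rw [mul_assoc 2, ENNReal.mul_rpow_of_nonneg 2 _ hq]; ring
    _ ≤ _ := by
        gcongr
        · exact enorm_integral_radialPow_rpow_le hp hp2 hq hW hf
        · exact enorm_integral_radialPow_rpow_le hp hp2 hq hW hg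

end SingleTime

variable [SecondCountableTopology E] {Y : Type*} [MeasurableSpace Y] {S : Measure Y} {u : X × Y → E}

lemma lintegral_lintegral_enorm_sub_rpow_le_of_fiberwise [IsProbabilityMeasure P]
    [IsProbabilityMeasure S] (hq : 1 ≤ q) (hq2 : q ≤ 2)
    (hu : Measurable u) {a : Y → E} (ha : Measurable a) {e : Y → ℝ≥0∞} (he : Measurable e)
    {G : ℝ≥0∞} (hG : ∀ᵐ t ∂S, ∀ᵐ τ ∂S, ‖a t - a τ‖ₑ ^ q ≤ G * (e t + e τ)) :
    ∫⁻ z, ∫⁻ w, ‖u z - u w‖ₑ ^ q ∂(P.prod S) ∂(P.prod S)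
      ≤ 6 * ∫⁻ z, ‖u z - a z.2‖ₑ ^ q ∂(P.prod S) + 6 * (G * ∫⁻ t, e t ∂S) := by
  have hsnd : Measure.QuasiMeasurePreserving (Prod.snd : X × Y → Y) (P.prod S) S :=
    measurePreserving_snd.quasiMeasurePreserving
  have hd : Measurable fun z : X × Y => ‖u z - a z.2‖ₑ ^ q :=
    (hu.sub (ha.comp measurable_snd)).enorm.pow_const q
  have he' : Measurable fun z : X × Y => G * e z.2 := (he.comp measurable_snd).const_mul G
  set f : X × Y → ℝ≥0∞ := fun z => ‖u z - a z.2‖ₑ ^ q + G * e z.2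
  have hf : Measurable f := hd.add he'
  have hpt : ∀ᵐ z ∂P.prod S, ∀ᵐ w ∂P.prod S, ‖u z - u w‖ₑ ^ q ≤ 3 * (f z + f w) := by
    filter_upwards [hsnd.ae hG] with z hz
    filter_upwards [hsnd.ae hz] with w hw
    calc ‖u z - u w‖ₑ ^ q
        ≤ 3 * (‖u z - a z.2‖ₑ ^ q + ‖u w - a w.2‖ₑ ^ q + ‖a z.2 - a w.2‖ₑ ^ q) :=
          enorm_sub_rpow_le_three_mul hq hq2
      _ ≤ 3 * (‖u z - a z.2‖ₑ ^ q + ‖u w - a w.2‖ₑ ^ q + G * (e z.2 + e w.2)) := by gcongr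
      _ = 3 * (f z + f w) := by ring
  calc ∫⁻ z, ∫⁻ w, ‖u z - u w‖ₑ ^ q ∂(P.prod S) ∂(P.prod S)
      ≤ ∫⁻ z, ∫⁻ w, 3 * (f z + f w) ∂(P.prod S) ∂(P.prod S) :=
        lintegral_mono_ae (hpt.mono fun z hz => lintegral_mono_ae hz)
    _ = 3 * (2 * ∫⁻ z, f z ∂(P.prod S)) := by
        rw [← lintegral_lintegral_add_self hf, ← lintegral_const_mul _ (by fun_prop)]
        exact lintegral_congr fun z => lintegral_const_mul _ (by fun_prop)
    _ = 6 * ∫⁻ z, ‖u z - a z.2‖ₑ ^ q ∂(P.prod S) + 6 * (G * ∫⁻ t, e t ∂S) := by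
        rw [lintegral_add_left hd,
          lintegral_const_mul G
            (show Measurable fun z : X × Y => e z.2 from he.comp measurable_snd),
          measurePreserving_snd.lintegral_comp he]
        ring

variable [NormedSpace ℝ E] {W : Measure X} [IsProbabilityMeasure W] {κ : ℝ≥0∞} {p : ℝ}

lemma measurable_radialMean (α : ℝ) (hu : Measurable u) :
    Measurable fun t => radialMean α W fun y => u (y, t) :=
  (measurable_radialPow _).comp
    ((measurable_radialPow α).comp hu).stronglyMeasurable.integral_prod_left'.measurable

lemma lintegral_enorm_sub_radialMean_rpow_le [CompleteSpace E] [SFinite P] (hp : 1 < p)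
    (hp2 : p ≤ 2) (hq : 1 ≤ q) (hW : W ≤ κ • P) (hu : Measurable u) :
    ∫⁻ z, ‖u z - radialMean (p - 1) W fun y => u (y, z.2)‖ₑ ^ q ∂(P.prod S)
      ≤ ENNReal.ofReal (radialMeanConst (p - 1)) ^ q * κ
        * ∫⁻ z, ∫⁻ y, ‖u (y, z.2) - u z‖ₑ ^ q ∂P ∂(P.prod S) := by
  have hm : Measurable fun w : (X × Y) × X => ‖u (w.2, w.1.2) - u w.1‖ₑ ^ q :=
    ((hu.comp (by fun_prop)).sub (hu.comp measurable_fst)).enorm.pow_const q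
  rw [← lintegral_const_mul _ hm.lintegral_prod_right']
  refine lintegral_mono fun z => ?_
  have hsec : Measurable fun y => u (y, z.2) := hu.comp (by fun_prop)
  set C := ENNReal.ofReal (radialMeanConst (p - 1))
  calc ‖u z - radialMean (p - 1) W fun y => u (y, z.2)‖ₑ ^ q
      ≤ (C * ∫⁻ y, ‖u (y, z.2) - u z‖ₑ ∂W) ^ q := by
        rw [enorm_sub_rev]
        gcongr
        exact enorm_radialMean_sub_le (by linarith) (by linarith) hsec (u z)
    _ ≤ C ^ q * ∫⁻ y, ‖u (y, z.2) - u z‖ₑ ^ q ∂W := by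
        rw [ENNReal.mul_rpow_of_nonneg _ _ (by linarith)]
        gcongr
        exact rpow_lintegral_le_lintegral_rpow hq (hsec.sub_const _).enorm.aemeasurable
    _ ≤ C ^ q * ∫⁻ y, ‖u (y, z.2) - u z‖ₑ ^ q ∂(κ • P) := by gcongr
    _ = C ^ q * κ * ∫⁻ y, ‖u (y, z.2) - u z‖ₑ ^ q ∂P := by
        rw [lintegral_smul_measure, smul_eq_mul, mul_assoc]

theorem lintegral_lintegral_enorm_sub_rpow_le_of_integral_radialPow [CompleteSpace E]
    [IsProbabilityMeasure P] [IsProbabilityMeasure S] (hp : 1 < p) (hp2 : p ≤ 2) (hq : 1 ≤ q)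
    (hqp : q ≤ p) (hW : W ≤ κ • P) (hu : Measurable u) {Γ : ℝ≥0∞}
    (hΓ : ∀ᵐ t ∂S, ∀ᵐ τ ∂S,
      ‖(∫ y, radialPow (p - 1) (u (y, τ)) ∂W) - ∫ y, radialPow (p - 1) (u (y, t)) ∂W‖ₑ ≤ Γ) :
    ∫⁻ z, ∫⁻ w, ‖u z - u w‖ₑ ^ q ∂(P.prod S) ∂(P.prod S)
      ≤ 6 * (ENNReal.ofReal (radialMeanConst (p - 1)) ^ q * κ
          * ∫⁻ z, ∫⁻ y, ‖u (y, z.2) - u z‖ₑ ^ q ∂P ∂(P.prod S))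
        + 6 * ((2 * ENNReal.ofReal (1 / (p - 1)) * Γ) ^ q
          * (κ * ∫⁻ z, ‖u z‖ₑ ^ p ∂(P.prod S)) ^ (q * (2 - p) / p)) := by
  set θ := q * (2 - p) / p
  have hθ0 : 0 ≤ θ := div_nonneg (mul_nonneg (by linarith) (by linarith)) (by linarith)
  have hθ1 : θ ≤ 1 := div_le_one_of_le₀ (by nlinarith) (by linarith)
  have hsec : ∀ t, Measurable fun y => u (y, t) := fun t => hu.comp (by fun_prop)
  have hup : Measurable fun z : X × Y => ‖u z‖ₑ ^ p := hu.enorm.pow_const p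
  have hslice : Measurable fun t => κ * ∫⁻ y, ‖u (y, t)‖ₑ ^ p ∂P :=
    hup.lintegral_prod_left'.const_mul κ
  have hsize : ∫⁻ t, (κ * ∫⁻ y, ‖u (y, t)‖ₑ ^ p ∂P) ^ θ ∂S
      ≤ (κ * ∫⁻ z, ‖u z‖ₑ ^ p ∂(P.prod S)) ^ θ := by
    refine (lintegral_rpow_le_rpow_lintegral hθ0 hθ1 hslice.aemeasurable).trans_eq ?_
    rw [lintegral_const_mul _ hup.lintegral_prod_left', lintegral_prod_symm _ hup.aemeasurable]
  refine (lintegral_lintegral_enorm_sub_rpow_le_of_fiberwise hq (hqp.trans hp2) hu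
    (measurable_radialMean (W := W) (p - 1) hu) (hslice.pow_const θ) (hΓ.mono fun t ht =>
      ht.mono fun τ hτ => enorm_radialMean_sub_radialMean_rpow_le hp hp2 (by linarith) hW
        (hsec t) (hsec τ) hτ)).trans ?_
  gcongr
  exact lintegral_enorm_sub_radialMean_rpow_le hp hp2 hq hW hu

end ProductOscillation

/-! ### Weak derivatives -/

section WeakDirectionalDerivative

variable {E G : Type*} [NormedAddCommGroup E] [NormedSpace ℝ E] [NormedAddCommGroup G]

lemma sub_sub_eq_neg_intervalIntegral_fderiv {ψ : E → ℝ} (hψ : ContDiff ℝ 1 ψ) (z h : E) :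
    ψ (z - h) - ψ z = - ∫ s in (0 : ℝ)..1, fderiv ℝ ψ (z - s • h) h := by
  have hderiv : ∀ s ∈ uIcc (0 : ℝ) 1, HasDerivAt (fun s : ℝ => ψ (z - s • h))
      (- fderiv ℝ ψ (z - s • h) h) s := by
    intro s _
    have hline : HasDerivAt (fun s : ℝ => z - s • h) (-h) s := by
      simpa using ((hasDerivAt_id s).smul_const h).const_sub z
    simpa only [map_neg, Function.comp_def] using
      ((hψ.differentiable one_ne_zero) (z - s • h)).hasFDerivAt.comp_hasDerivAt s hline
  have hcont : Continuous fun s : ℝ => - fderiv ℝ ψ (z - s • h) h :=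
    (((hψ.continuous_fderiv one_ne_zero).comp (by fun_prop)).clm_apply continuous_const).neg
  have hFTC := intervalIntegral.integral_eq_sub_of_hasDerivAt hderiv (hcont.intervalIntegrable _ _)
  simp only [one_smul, zero_smul, sub_zero, intervalIntegral.integral_neg] at hFTC
  exact hFTC.symm

lemma tsupport_comp_sub_smul_subset {Q : Set E} (hQ : Convex ℝ Q) {h : E} {ψ : E → ℝ}
    (hψ : tsupport ψ ⊆ Q ∩ (· + h) ⁻¹' Q) {s : ℝ} (hs : s ∈ Icc (0 : ℝ) 1) :
    tsupport (fun z => ψ (z - s • h)) ⊆ Q := by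
  have htranslate : tsupport (fun z => ψ (z - s • h)) = (fun z => z - s • h) ⁻¹' tsupport ψ :=
    tsupport_comp_eq_preimage ψ (Homeomorph.subRight (s • h))
  rw [htranslate]
  intro z hz
  simpa using hQ.add_smul_mem (hψ hz).1 (hψ hz).2 hs

lemma continuous_fderiv_apply {ψ : E → ℝ} (hψ : ContDiff ℝ (⊤ : ℕ∞) ψ) (h : E) :
    Continuous fun z => fderiv ℝ ψ z h :=
  (hψ.continuous_fderiv (by simp)).clm_apply continuous_const

lemma exists_norm_fderiv_apply_le {ψ : E → ℝ} (hψ : ContDiff ℝ (⊤ : ℕ∞) ψ)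
    (hψc : HasCompactSupport ψ) (h : E) : ∃ C, ∀ z, ‖fderiv ℝ ψ z h‖ ≤ C :=
  (continuous_fderiv_apply hψ h).bounded_above_of_compact_support (hψc.fderiv_apply ℝ h)

variable [MeasurableSpace E]

/-- `g` is the weak derivative of `f` in the direction `h` on the set `Q`, with respect to the
measure `μ`, tested against scalar functions in `C_c^∞(Q)`. -/
def HasWeakDirDerivOn [NormedSpace ℝ G] (f g : E → G) (h : E) (Q : Set E) (μ : Measure E) : Prop :=
  ∀ ψ : E → ℝ, ContDiff ℝ (⊤ : ℕ∞) ψ → HasCompactSupport ψ → tsupport ψ ⊆ Q →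
    ∫ z in Q, fderiv ℝ ψ z h • f z ∂μ = - ∫ z in Q, ψ z • g z ∂μ

variable [BorelSpace E] {μ : Measure E} [μ.IsAddHaarMeasure] {Q : Set E} {f g : E → G} {h : E}

lemma HasWeakDirDerivOn.integral_fderiv_sub_smul [NormedSpace ℝ G]
    (hw : HasWeakDirDerivOn f g h Q μ) (hQm : MeasurableSet Q) (hQ : Convex ℝ Q)
    {ψ : E → ℝ} (hψ : ContDiff ℝ (⊤ : ℕ∞) ψ) (hψc : HasCompactSupport ψ)
    (hψQ : tsupport ψ ⊆ Q ∩ (· + h) ⁻¹' Q) {s : ℝ} (hs : s ∈ Icc (0 : ℝ) 1) :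
    ∫ z, fderiv ℝ ψ (z - s • h) h • Q.indicator f z ∂μ
      = - ∫ z, ψ z • Q.indicator g (z + s • h) ∂μ := by
  have hleft : ∫ z in Q, fderiv ℝ (fun z => ψ (z - s • h)) z h • f z ∂μ
      = ∫ z, fderiv ℝ ψ (z - s • h) h • Q.indicator f z ∂μ := by
    rw [← integral_indicator hQm]
    refine integral_congr_ae (ae_of_all _ fun z => ?_)
    by_cases hz : z ∈ Q <;> simp [hz, fderiv_comp_sub]
  have hright : ∫ z in Q, ψ (z - s • h) • g z ∂μ = ∫ z, ψ z • Q.indicator g (z + s • h) ∂μ := by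
    rw [← integral_indicator hQm,
      ← integral_add_right_eq_self (Q.indicator fun z => ψ (z - s • h) • g z) (s • h)]
    refine integral_congr_ae (ae_of_all _ fun z => ?_)
    by_cases hz : z + s • h ∈ Q <;> simp [hz]
  rw [← hleft, hw (fun z => ψ (z - s • h)) (hψ.comp (by fun_prop))
    (hψc.comp_homeomorph (Homeomorph.subRight (s • h)))
    (tsupport_comp_sub_smul_subset hQ hψQ hs), hright]

variable [FiniteDimensional ℝ E]

lemma integrable_comp_add_smul_prod (hg : StronglyMeasurable g) (hgi : Integrable g μ)
    (h : E) (a b : ℝ) :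
    Integrable (fun w : E × ℝ => g (w.1 + w.2 • h)) (μ.prod (volume.restrict (Ioc a b))) := by
  have hm : StronglyMeasurable fun w : E × ℝ => g (w.1 + w.2 • h) :=
    hg.comp_measurable (by fun_prop)
  rw [integrable_prod_iff' hm.aestronglyMeasurable]
  refine ⟨ae_of_all _ fun s => hgi.comp_add_right (s • h), ?_⟩
  simp only [fun s : ℝ => integral_add_right_eq_self (μ := μ) (fun x => ‖g x‖) (s • h)]
  exact integrable_const _

lemma setLIntegral_lintegral_comp_add_smul_le (hQm : MeasurableSet Q) (hQ : Convex ℝ Q)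
    {D : E → ℝ≥0∞} (hD : Measurable D) (h : E) :
    ∫⁻ z in Q ∩ (· + h) ⁻¹' Q, (∫⁻ s in Ioc (0 : ℝ) 1, D (z + s • h)) ∂μ
      ≤ ∫⁻ z in Q, D z ∂μ := by
  have hslice : ∀ s ∈ Ioc (0 : ℝ) 1,
      ∫⁻ z in Q ∩ (· + h) ⁻¹' Q, D (z + s • h) ∂μ ≤ ∫⁻ z in Q, D z ∂μ := by
    intro s hs
    rw [← lintegral_indicator (hQm.inter (measurable_add_const h hQm)), ← lintegral_indicator hQm,
      ← lintegral_add_right_eq_self (Q.indicator D) (s • h)]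
    refine lintegral_mono (indicator_le fun z hz => ?_)
    rw [indicator_of_mem (hQ.add_smul_mem hz.1 hz.2 (Ioc_subset_Icc_self hs))]
  have hm : Measurable fun w : E × ℝ => D (w.1 + w.2 • h) := hD.comp (by fun_prop)
  rw [lintegral_lintegral_swap hm.aemeasurable]
  exact (setLIntegral_mono' measurableSet_Ioc hslice).trans (by simp)

variable [NormedSpace ℝ G]

namespace HasWeakDirDerivOn

lemma integral_sub_smul [CompleteSpace G] (hw : HasWeakDirDerivOn f g h Q μ) (hQm : MeasurableSet Q)
    (hQ : Convex ℝ Q) (hf : IntegrableOn f Q μ) (hg : IntegrableOn g Q μ)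
    (hgm : StronglyMeasurable g) {ψ : E → ℝ} (hψ : ContDiff ℝ (⊤ : ℕ∞) ψ)
    (hψc : HasCompactSupport ψ) (hψQ : tsupport ψ ⊆ Q ∩ (· + h) ⁻¹' Q) :
    ∫ z, (ψ (z - h) - ψ z) • Q.indicator f z ∂μ
      = ∫ z, ψ z • (∫ s in Ioc (0 : ℝ) 1, Q.indicator g (z + s • h)) ∂μ := by
  obtain ⟨C, hC⟩ := hψ.continuous.bounded_above_of_compact_support hψc
  obtain ⟨C', hC'⟩ := exists_norm_fderiv_apply_le hψ hψc h
  have hdψf : Integrable (fun w : E × ℝ => fderiv ℝ ψ (w.1 - w.2 • h) h • Q.indicator f w.1)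
      (μ.prod (volume.restrict (Ioc (0 : ℝ) 1))) :=
    ((hf.integrable_indicator hQm).comp_fst _).bdd_smul C'
      ((continuous_fderiv_apply hψ h).comp (by fun_prop)).aestronglyMeasurable
      (ae_of_all _ fun _ => hC' _)
  have hψg : Integrable (fun w : E × ℝ => ψ w.1 • Q.indicator g (w.1 + w.2 • h))
      (μ.prod (volume.restrict (Ioc (0 : ℝ) 1))) :=
    (integrable_comp_add_smul_prod (hgm.indicator hQm) (hg.integrable_indicator hQm) h 0 1).bdd_smul
      C (hψ.continuous.comp (by fun_prop)).aestronglyMeasurable (ae_of_all _ fun _ => hC _)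
  calc ∫ z, (ψ (z - h) - ψ z) • Q.indicator f z ∂μ
      = - ∫ z, (∫ s in Ioc (0 : ℝ) 1, fderiv ℝ ψ (z - s • h) h • Q.indicator f z) ∂μ := by
        rw [← integral_neg]
        refine integral_congr_ae (ae_of_all _ fun z => ?_)
        dsimp only
        rw [sub_sub_eq_neg_intervalIntegral_fderiv (hψ.of_le (by simp)), integral_smul_const,
          intervalIntegral.integral_of_le zero_le_one, neg_smul]
    _ = - ∫ s in Ioc (0 : ℝ) 1, ∫ z, fderiv ℝ ψ (z - s • h) h • Q.indicator f z ∂μ := by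
        rw [integral_integral_swap hdψf]
    _ = ∫ s in Ioc (0 : ℝ) 1, ∫ z, ψ z • Q.indicator g (z + s • h) ∂μ := by
        rw [← integral_neg]
        refine setIntegral_congr_fun measurableSet_Ioc fun s hs => ?_
        rw [hw.integral_fderiv_sub_smul hQm hQ hψ hψc hψQ (Ioc_subset_Icc_self hs), neg_neg]
    _ = ∫ z, (∫ s in Ioc (0 : ℝ) 1, ψ z • Q.indicator g (z + s • h)) ∂μ :=
        (integral_integral_swap hψg).symm
    _ = _ := by simp only [integral_smul]

theorem ae_sub_eq_integral [CompleteSpace G] (hw : HasWeakDirDerivOn f g h Q μ) (hQo : IsOpen Q)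
    (hQ : Convex ℝ Q) (hf : IntegrableOn f Q μ) (hg : IntegrableOn g Q μ)
    (hgm : StronglyMeasurable g) :
    ∀ᵐ z ∂μ, z ∈ Q → z + h ∈ Q → f (z + h) - f z = ∫ s in Ioc (0 : ℝ) 1, g (z + s • h) := by
  have hQm : MeasurableSet Q := hQo.measurableSet
  have hf₀ : Integrable (Q.indicator f) μ := hf.integrable_indicator hQm
  have hf₁ : Integrable (fun z => Q.indicator f (z + h)) μ := hf₀.comp_add_right h
  have hJ : Integrable (fun z => ∫ s in Ioc (0 : ℝ) 1, Q.indicator g (z + s • h)) μ :=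
    (integrable_comp_add_smul_prod (hgm.indicator hQm)
      (hg.integrable_indicator hQm) h 0 1).integral_prod_left
  have hzero : ∀ᵐ z ∂μ, z ∈ Q ∩ (· + h) ⁻¹' Q → Q.indicator f (z + h) - Q.indicator f z
      - ∫ s in Ioc (0 : ℝ) 1, Q.indicator g (z + s • h) = 0 := by
    refine (hQo.inter (hQo.preimage (by fun_prop))).ae_eq_zero_of_integral_contDiff_smul_eq_zero
      (((hf₁.sub hf₀).sub hJ).locallyIntegrable.locallyIntegrableOn _) fun ψ hψ hψc hψQ => ?_
    obtain ⟨C, hC⟩ := hψ.continuous.bounded_above_of_compact_support hψc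
    have hint : ∀ {k : E → G}, Integrable k μ → Integrable (fun z => ψ z • k z) μ := fun hk =>
      hk.bdd_smul C hψ.continuous.aestronglyMeasurable (ae_of_all _ hC)
    have hψh : Integrable (fun z => ψ (z - h) • Q.indicator f z) μ :=
      hf₀.bdd_smul C (hψ.continuous.comp (by fun_prop)).aestronglyMeasurable
        (ae_of_all _ fun _ => hC _)
    have htranslate : ∫ z, ψ z • Q.indicator f (z + h) ∂μ
        = ∫ z, ψ (z - h) • Q.indicator f z ∂μ := by
      simpa using integral_add_right_eq_self (fun z => ψ (z - h) • Q.indicator f z) h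
    simp only [smul_sub]
    rw [integral_sub (by exact (hint hf₁).sub (hint hf₀)) (hint hJ),
      integral_sub (hint hf₁) (hint hf₀), htranslate,
      ← hw.integral_sub_smul hQm hQ hf hg hgm hψ hψc hψQ, ← integral_sub hψh (hint hf₀)]
    simp only [sub_smul, sub_self]
  filter_upwards [hzero] with z hz h₀ h₁
  have hz' := sub_eq_zero.mp (hz ⟨h₀, h₁⟩)
  rw [indicator_of_mem h₀, indicator_of_mem h₁] at hz'
  rw [hz']
  exact setIntegral_congr_fun measurableSet_Ioc fun s hs =>
    indicator_of_mem (hQ.add_smul_mem h₀ h₁ (Ioc_subset_Icc_self hs)) g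

theorem ae_enorm_sub_le [CompleteSpace G] (hw : HasWeakDirDerivOn f g h Q μ) (hQo : IsOpen Q)
    (hQ : Convex ℝ Q) (hf : IntegrableOn f Q μ) (hg : IntegrableOn g Q μ)
    (hgm : StronglyMeasurable g) :
    ∀ᵐ z ∂μ, z ∈ Q → z + h ∈ Q →
      ‖f (z + h) - f z‖ₑ ≤ ∫⁻ s in Ioc (0 : ℝ) 1, ‖g (z + s • h)‖ₑ := by
  filter_upwards [hw.ae_sub_eq_integral hQo hQ hf hg hgm] with z hz h₀ h₁
  rw [hz h₀ h₁]
  exact enorm_integral_le_lintegral_enorm _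

theorem setLIntegral_enorm_sub_rpow_le [CompleteSpace G] (hw : HasWeakDirDerivOn f g h Q μ)
    (hQo : IsOpen Q) (hQ : Convex ℝ Q) (hf : IntegrableOn f Q μ) (hg : IntegrableOn g Q μ)
    (hgm : StronglyMeasurable g) {q : ℝ} (hq : 1 ≤ q) :
    ∫⁻ z in Q ∩ (· + h) ⁻¹' Q, ‖f (z + h) - f z‖ₑ ^ q ∂μ ≤ ∫⁻ z in Q, ‖g z‖ₑ ^ q ∂μ := by
  have hQm : MeasurableSet Q := hQo.measurableSet
  have : IsProbabilityMeasure (volume.restrict (Ioc (0 : ℝ) 1)) := ⟨by simp⟩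
  refine le_trans (setLIntegral_mono_ae' (hQm.inter (measurable_add_const h hQm)) ?_)
    (setLIntegral_lintegral_comp_add_smul_le hQm hQ (hgm.enorm.pow_const q) h)
  filter_upwards [hw.ae_enorm_sub_le hQo hQ hf hg hgm] with z hz hzQ
  exact (ENNReal.rpow_le_rpow (hz hzQ.1 hzQ.2) (by linarith)).trans
    (rpow_lintegral_le_lintegral_rpow hq (hgm.comp_measurable (by fun_prop)).enorm.aemeasurable)

end HasWeakDirDerivOn

end WeakDirectionalDerivative

section PartialPoincare

variable {X Y : Type*} [NormedAddCommGroup X] [MeasurableSpace X] [BorelSpace X]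
  [NormedAddCommGroup Y] [MeasurableSpace Y] {ν : Measure X} {τ : Measure Y}
  {B : Set X} {I : Set Y}

lemma setLIntegral_prod_setLIntegral_eq_lintegral_setLIntegral_comp_add
    [SecondCountableTopology X] [SFinite ν] [ν.IsAddLeftInvariant] [SFinite τ]
    (hB : MeasurableSet B) {Φ : X × Y → X × Y → ℝ≥0∞}
    (hΦ : Measurable (Function.uncurry Φ)) :
    ∫⁻ z in B ×ˢ I, ∫⁻ y in B, Φ (y, z.2) z ∂ν ∂(ν.prod τ)
      = ∫⁻ k, ∫⁻ z in (B ×ˢ I) ∩ (· + (k, 0)) ⁻¹' (B ×ˢ I), Φ (z + (k, 0)) z ∂(ν.prod τ) ∂ν := by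
  have hm : Measurable fun w : X × (X × Y) =>
      B.indicator (fun y => Φ (y, w.2.2) w.2) (w.2.1 + w.1) := by
    have hset : MeasurableSet {w : X × (X × Y) | w.2.1 + w.1 ∈ B} :=
      (measurable_snd.fst.add measurable_fst) hB
    have hΦm : Measurable fun w : X × (X × Y) => Φ (w.2.1 + w.1, w.2.2) w.2 :=
      hΦ.comp (by fun_prop : Measurable fun w : X × (X × Y) => ((w.2.1 + w.1, w.2.2), w.2))
    exact hΦm.indicator hset
  have hset (k : X) : (B ×ˢ I) ∩ (· + (k, 0)) ⁻¹' (B ×ˢ I)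
      = {z | z.1 + k ∈ B} ∩ (B ×ˢ I) := by
    ext z
    simp only [mem_inter_iff, mem_preimage, mem_prod, Prod.fst_add, Prod.snd_add, add_zero,
      mem_ofPred_eq]
    tauto
  calc ∫⁻ z in B ×ˢ I, ∫⁻ y in B, Φ (y, z.2) z ∂ν ∂(ν.prod τ)
      = ∫⁻ z in B ×ˢ I, ∫⁻ k, B.indicator (fun y => Φ (y, z.2) z) (z.1 + k) ∂ν ∂(ν.prod τ) := by
        refine lintegral_congr fun z => ?_
        rw [← lintegral_indicator hB, lintegral_add_left_eq_self]
    _ = ∫⁻ k, ∫⁻ z in B ×ˢ I, B.indicator (fun y => Φ (y, z.2) z) (z.1 + k) ∂(ν.prod τ) ∂ν :=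
        (lintegral_lintegral_swap hm.aemeasurable).symm
    _ = _ := by
        refine lintegral_congr fun k => ?_
        have hk : MeasurableSet {z : X × Y | z.1 + k ∈ B} := (measurable_fst.add_const k) hB
        rw [hset, ← Measure.restrict_restrict hk, ← lintegral_indicator hk]
        refine lintegral_congr fun z => ?_
        by_cases hz : z.1 + k ∈ B <;> simp [hz, Prod.add_def]

variable {G : Type*} [NormedSpace ℝ X] [FiniteDimensional ℝ X] [ν.IsAddHaarMeasure]
  [NormedSpace ℝ Y] [FiniteDimensional ℝ Y] [BorelSpace Y] [τ.IsAddHaarMeasure]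
  [NormedAddCommGroup G] [NormedSpace ℝ G] [CompleteSpace G] [MeasurableSpace G] [BorelSpace G]
  [SecondCountableTopology G]

theorem setLIntegral_enorm_partial_sub_rpow_le (hBo : IsOpen B) (hB : Convex ℝ B) (hIo : IsOpen I)
    (hI : Convex ℝ I) {d : ℝ} (hd : ∀ x ∈ B, ∀ y ∈ B, ‖y - x‖ < d) {u : X × Y → G}
    (hum : Measurable u) (hu : IntegrableOn u (B ×ˢ I) (ν.prod τ)) {g : X → X × Y → G}
    (hgm : ∀ k, StronglyMeasurable (g k)) (hg : ∀ k, IntegrableOn (g k) (B ×ˢ I) (ν.prod τ))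
    (hw : ∀ k, HasWeakDirDerivOn u (g k) (k, 0) (B ×ˢ I) (ν.prod τ)) {D : X × Y → ℝ≥0∞}
    (hgD : ∀ k z, ‖g k z‖ₑ ≤ ‖k‖ₑ * D z) {q : ℝ} (hq : 1 ≤ q) :
    ∫⁻ z in B ×ˢ I, ∫⁻ y in B, ‖u (y, z.2) - u z‖ₑ ^ q ∂ν ∂(ν.prod τ)
      ≤ ENNReal.ofReal d ^ q * ν (Metric.ball 0 d) * ∫⁻ z in B ×ˢ I, D z ^ q ∂(ν.prod τ) := by
  have hdiff : ∀ k, ∫⁻ z in (B ×ˢ I) ∩ (· + (k, 0)) ⁻¹' (B ×ˢ I), ‖u (z + (k, 0)) - u z‖ₑ ^ q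
      ∂(ν.prod τ) ≤ (Metric.ball 0 d).indicator
        (fun _ => ENNReal.ofReal d ^ q * ∫⁻ z in B ×ˢ I, D z ^ q ∂(ν.prod τ)) k := by
    intro k
    by_cases hk : k ∈ Metric.ball 0 d
    · have hkd : ‖k‖ₑ ≤ ENNReal.ofReal d := by
        rw [← ofReal_norm]
        exact ENNReal.ofReal_le_ofReal (mem_ball_zero_iff.mp hk).le
      rw [indicator_of_mem hk, ← lintegral_const_mul' _ _ (by finiteness)]
      refine ((hw k).setLIntegral_enorm_sub_rpow_le (hBo.prod hIo) (hB.prod hI) hu (hg k)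
        (hgm k) hq).trans (lintegral_mono fun z => ?_)
      rw [← ENNReal.mul_rpow_of_nonneg _ _ (by linarith)]
      gcongr
      exact (hgD k z).trans (by gcongr)
    · have hempty : (B ×ˢ I) ∩ (· + (k, 0)) ⁻¹' (B ×ˢ I) = ∅ := by
        refine eq_empty_of_forall_notMem fun z hz => hk (mem_ball_zero_iff.mpr ?_)
        simpa using hd z.1 hz.1.1 (z.1 + k) hz.2.1
      simp [hempty]
  calc ∫⁻ z in B ×ˢ I, ∫⁻ y in B, ‖u (y, z.2) - u z‖ₑ ^ q ∂ν ∂(ν.prod τ)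
      = ∫⁻ k, ∫⁻ z in (B ×ˢ I) ∩ (· + (k, 0)) ⁻¹' (B ×ˢ I), ‖u (z + (k, 0)) - u z‖ₑ ^ q
          ∂(ν.prod τ) ∂ν :=
        setLIntegral_prod_setLIntegral_eq_lintegral_setLIntegral_comp_add hBo.measurableSet
          (Φ := fun w z => ‖u w - u z‖ₑ ^ q) (by fun_prop)
    _ ≤ ∫⁻ k, (Metric.ball 0 d).indicator
          (fun _ => ENNReal.ofReal d ^ q * ∫⁻ z in B ×ˢ I, D z ^ q ∂(ν.prod τ)) k ∂ν :=
        lintegral_mono hdiff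
    _ = _ := by
        rw [lintegral_indicator_const Metric.isOpen_ball.measurableSet]
        ring

end PartialPoincare

section MatVec

/-- The product `M k` of a matrix and a vector, with respect to the Euclidean structures. -/
def matVec (M : Mat N n) (k : Spc n) : Vec N := WithLp.toLp 2 fun i => ∑ j, M (i, j) * k j

lemma norm_matVec_le (M : Mat N n) (k : Spc n) : ‖matVec M k‖ ≤ ‖M‖ * ‖k‖ := by
  rw [EuclideanSpace.norm_eq, EuclideanSpace.norm_eq, EuclideanSpace.norm_eq,
    ← Real.sqrt_mul (by positivity)]
  refine Real.sqrt_le_sqrt ?_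
  simp only [Real.norm_eq_abs, sq_abs, matVec]
  rw [Fintype.sum_prod_type, Finset.sum_mul]
  exact Finset.sum_le_sum fun i _ => Finset.sum_mul_sq_le_sq_mul_sq _ _ _

lemma enorm_matVec_le (M : Mat N n) (k : Spc n) : ‖matVec M k‖ₑ ≤ ‖k‖ₑ * ‖M‖ₑ := by
  simp only [← ofReal_norm]
  rw [← ENNReal.ofReal_mul (norm_nonneg _), mul_comm]
  exact ENNReal.ofReal_le_ofReal (norm_matVec_le M k)

lemma matVec_zero (M : Mat N n) : matVec M 0 = 0 := by
  ext i
  simp [matVec]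

lemma add_matVec (M M' : Mat N n) (k : Spc n) : matVec (M + M') k = matVec M k + matVec M' k := by
  ext i
  simp [matVec, add_mul, Finset.sum_add_distrib]

lemma smul_matVec (c : ℝ) (M : Mat N n) (k : Spc n) : matVec (c • M) k = c • matVec M k := by
  ext i
  simp [matVec, Finset.mul_sum, mul_assoc]

lemma matVec_smul (M : Mat N n) (c : ℝ) (k : Spc n) : matVec M (c • k) = c • matVec M k := by
  ext i
  simp [matVec, Finset.mul_sum, mul_left_comm]

lemma continuous_matVec : Continuous fun w : Mat N n × Spc n => matVec w.1 w.2 := by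
  unfold matVec
  fun_prop

lemma integrable_matVec {X : Type*} [MeasurableSpace X] {μ : Measure X} {M : X → Mat N n}
    (hM : Integrable M μ) {k : X → Spc n} (hk : AEStronglyMeasurable k μ) {C : ℝ}
    (hC : ∀ z, ‖k z‖ ≤ C) : Integrable (fun z => matVec (M z) (k z)) μ :=
  (hM.norm.mul_const C).mono'
    (continuous_matVec.comp_aestronglyMeasurable (hM.aestronglyMeasurable.prodMk hk))
    (ae_of_all _ fun z => (norm_matVec_le _ _).trans (by gcongr; exact hC z))

end MatVec

section WeakGradient

variable {E : Type*} [NormedAddCommGroup E] [MeasurableSpace E] [BorelSpace E] {μ : Measure E}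
  {Q : Set E}

lemma integrableOn_smul_of_hasCompactSupport {G : Type*} [NormedAddCommGroup G] [NormedSpace ℝ G]
    {g : E → G} (hg : IntegrableOn g Q μ) {ψ : E → ℝ} (hψ : Continuous ψ)
    (hψc : HasCompactSupport ψ) : IntegrableOn (fun z => ψ z • g z) Q μ := by
  obtain ⟨C, hC⟩ := hψ.bounded_above_of_compact_support hψc
  exact Integrable.bdd_smul hg C hψ.aestronglyMeasurable (ae_of_all _ hC)

variable [NormedSpace ℝ E] {ι : Type*} [Fintype ι]

lemma integrableOn_fderiv_apply_smul {G : Type*} [NormedAddCommGroup G] [NormedSpace ℝ G]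
    {f : E → G} (hf : IntegrableOn f Q μ) {ψ : E → ℝ} (hψ : ContDiff ℝ (⊤ : ℕ∞) ψ)
    (hψc : HasCompactSupport ψ) (h : E) :
    IntegrableOn (fun z => fderiv ℝ ψ z h • f z) Q μ := by
  obtain ⟨C, hC⟩ := exists_norm_fderiv_apply_le hψ hψc h
  exact Integrable.bdd_smul hf C (continuous_fderiv_apply hψ h).aestronglyMeasurable
    (ae_of_all _ hC)

lemma HasWeakDirDerivOn.sum_smul {G : Type*} [NormedAddCommGroup G] [NormedSpace ℝ G]
    {f : E → G} {g : ι → E → G} {h : ι → E} (hw : ∀ j, HasWeakDirDerivOn f (g j) (h j) Q μ)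
    (hf : IntegrableOn f Q μ) (hg : ∀ j, IntegrableOn (g j) Q μ) (c : ι → ℝ) :
    HasWeakDirDerivOn f (fun z => ∑ j, c j • g j z) (∑ j, c j • h j) Q μ := by
  intro ψ hψ hψc hψQ
  have hleft : ∀ j, IntegrableOn (fun z => c j • fderiv ℝ ψ z (h j) • f z) Q μ := fun j =>
    (integrableOn_fderiv_apply_smul hf hψ hψc (h j)).smul (c j)
  have hright : ∀ j, IntegrableOn (fun z => c j • ψ z • g j z) Q μ := fun j =>
    (integrableOn_smul_of_hasCompactSupport (hg j) hψ.continuous hψc).smul (c j)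
  simp only [map_sum, map_smul, Finset.sum_smul, Finset.smul_sum, smul_comm (ψ _), smul_assoc]
  rw [integral_finsetSum _ fun j _ => hleft j, integral_finsetSum _ fun j _ => hright j,
    ← Finset.sum_neg_distrib]
  refine Finset.sum_congr rfl fun j _ => ?_
  rw [integral_smul, integral_smul, hw j ψ hψ hψc hψQ, smul_neg]

lemma hasWeakDirDerivOn_euclideanSpace {f g : E → EuclideanSpace ℝ ι} {h : E}
    (hf : IntegrableOn f Q μ) (hg : IntegrableOn g Q μ)
    (hw : ∀ i, HasWeakDirDerivOn (f · i) (g · i) h Q μ) : HasWeakDirDerivOn f g h Q μ := by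
  intro ψ hψ hψc hψQ
  ext i
  rw [PiLp.neg_apply,
    eval_integral_piLp (integrableOn_fderiv_apply_smul hf hψ hψc h).eval_piLp,
    eval_integral_piLp (integrableOn_smul_of_hasCompactSupport hg hψ.continuous hψc).eval_piLp]
  exact hw i ψ hψ hψc hψQ

lemma pderivS_eq_fderiv {ψ : Spc n × ℝ → ℝ} (hψ : Differentiable ℝ ψ) (j : Fin n)
    (z : Spc n × ℝ) : pderivS j ψ z = fderiv ℝ ψ z (EuclideanSpace.single j 1, 0) := by
  have hslice : HasFDerivAt (fun y => ψ (y, z.2))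
      ((fderiv ℝ ψ z).comp (ContinuousLinearMap.inl ℝ (Spc n) ℝ)) z.1 :=
    (hψ z).hasFDerivAt.comp z.1 (hasFDerivAt_prodMk_left z.1 z.2)
  simp [pderivS, hslice.fderiv]

/-- `Du` is the weak spatial gradient of `u` on `Q`. -/
def HasWeakGradOn (u : Spc n × ℝ → Vec N) (Du : Spc n × ℝ → Mat N n) (Q : Set (Spc n × ℝ)) :
    Prop :=
  ∀ ψ : Spc n × ℝ → ℝ, ContDiff ℝ (⊤ : ℕ∞) ψ → HasCompactSupport ψ → tsupport ψ ⊆ Q →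
    ∀ (i : Fin N) (j : Fin n), ∫ z in Q, u z i * pderivS j ψ z = - ∫ z in Q, Du z (i, j) * ψ z

namespace HasWeakGradOn

variable {u : Spc n × ℝ → Vec N} {Du : Spc n × ℝ → Mat N n} {Q : Set (Spc n × ℝ)}

lemma hasWeakDirDerivOn (hw : HasWeakGradOn u Du Q) (hu : IntegrableOn u Q)
    (hDu : IntegrableOn Du Q) (k : Spc n) :
    HasWeakDirDerivOn u (fun z => matVec (Du z) k) (k, 0) Q volume := by
  refine hasWeakDirDerivOn_euclideanSpace hu
    (integrable_matVec hDu aestronglyMeasurable_const fun _ => le_refl ‖k‖) fun i => ?_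
  have hpartial : ∀ j, HasWeakDirDerivOn (u · i) (fun z => Du z (i, j))
      (EuclideanSpace.single j (1 : ℝ), (0 : ℝ)) Q volume := by
    intro j ψ hψ hψc hψQ
    simpa only [pderivS_eq_fderiv (hψ.differentiable (by simp)), smul_eq_mul, mul_comm]
      using hw ψ hψ hψc hψQ i j
  have hk : (k, (0 : ℝ)) = ∑ j, k j • (EuclideanSpace.single j (1 : ℝ), (0 : ℝ)) := by
    refine Prod.ext ?_ (by simp [Prod.snd_sum])
    ext i
    simp [Prod.fst_sum, Pi.single_apply]
  have hsum := HasWeakDirDerivOn.sum_smul hpartial (hu.eval_piLp i)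
    (fun j => hDu.eval_piLp (i, j)) (fun j => k j)
  rw [← hk] at hsum
  simpa only [matVec, smul_eq_mul, mul_comm] using hsum

theorem setLIntegral_enorm_sub_rpow_le {x₀ : Spc n} {ρ : ℝ} {I : Set ℝ} (hIo : IsOpen I)
    (hI : Convex ℝ I) (hw : HasWeakGradOn u Du (Metric.ball x₀ ρ ×ˢ I)) (hum : Measurable u)
    (hu : IntegrableOn u (Metric.ball x₀ ρ ×ˢ I)) (hDum : Measurable Du)
    (hDu : IntegrableOn Du (Metric.ball x₀ ρ ×ˢ I)) {q : ℝ} (hq : 1 ≤ q) :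
    ∫⁻ z in Metric.ball x₀ ρ ×ˢ I, ∫⁻ y in Metric.ball x₀ ρ, ‖u (y, z.2) - u z‖ₑ ^ q
      ≤ ENNReal.ofReal (2 * ρ) ^ q * volume (Metric.ball (0 : Spc n) (2 * ρ))
        * ∫⁻ z in Metric.ball x₀ ρ ×ˢ I, ‖Du z‖ₑ ^ q := by
  have hdiam : ∀ x ∈ Metric.ball x₀ ρ, ∀ y ∈ Metric.ball x₀ ρ, ‖y - x‖ < 2 * ρ := by
    intro x hx y hy
    rw [← dist_eq_norm]
    linarith [dist_triangle_right y x x₀, Metric.mem_ball.mp hx, Metric.mem_ball.mp hy]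
  exact setLIntegral_enorm_partial_sub_rpow_le Metric.isOpen_ball (convex_ball x₀ ρ) hIo hI hdiam
    hum hu
    (fun k => (continuous_matVec.measurable.comp (hDum.prodMk measurable_const)).stronglyMeasurable)
    (fun k => integrable_matVec hDu aestronglyMeasurable_const fun _ => le_refl ‖k‖)
    (hw.hasWeakDirDerivOn hu hDu) (fun k z => enorm_matVec_le (Du z) k) hq

end HasWeakGradOn

end WeakGradient

/-! ### Regularity in time -/

section TimeRegularity

variable {G : Type*} [NormedAddCommGroup G] [NormedSpace ℝ G] {I : Set ℝ}

lemma enorm_mul_lintegral_comp_add_smul_le (hI : Convex ℝ I) (K : ℝ → ℝ≥0∞) {t h : ℝ} (ht : t ∈ I)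
    (hth : t + h ∈ I) : ‖h‖ₑ * ∫⁻ s in Ioc (0 : ℝ) 1, K (t + s • h) ≤ ∫⁻ s in I, K s := by
  rcases eq_or_ne h 0 with rfl | hne
  · simp
  have hderiv : ∀ s ∈ Ioc (0 : ℝ) 1,
      HasDerivWithinAt (fun s : ℝ => t + s • h) h (Ioc (0 : ℝ) 1) s := fun s _ => by
    simpa using (((hasDerivAt_id s).smul_const h).const_add t).hasDerivWithinAt
  have hinj : InjOn (fun s : ℝ => t + s • h) (Ioc (0 : ℝ) 1) := fun s _ s' _ hss' => by
    simpa [hne] using hss'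
  have himage : (fun s : ℝ => t + s • h) '' Ioc (0 : ℝ) 1 ⊆ I := by
    rintro _ ⟨s, hs, rfl⟩
    exact hI.add_smul_mem ht hth (Ioc_subset_Icc_self hs)
  rw [← lintegral_const_mul' _ _ (by simp), Real.enorm_eq_ofReal_abs,
    ← lintegral_image_eq_lintegral_abs_deriv_mul measurableSet_Ioc hderiv hinj]
  exact lintegral_mono_set himage

lemma ae_ae_of_forall_ae_add {E : Type*} [AddGroup E] [MeasurableSpace E] [MeasurableAdd₂ E]
    {μ : Measure E} [SFinite μ] [μ.IsAddLeftInvariant] {I : Set E}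
    (hI : MeasurableSet I) {r : E → E → Prop} (hr : MeasurableSet {w : E × E | r w.1 w.2})
    (hadd : ∀ h, ∀ᵐ t ∂μ, t ∈ I → t + h ∈ I → r t (t + h)) :
    ∀ᵐ t ∂μ.restrict I, ∀ᵐ τ ∂μ.restrict I, r t τ := by
  have hmeas : MeasurableSet {w : E × E | w.2 ∈ I → w.2 + w.1 ∈ I → r w.2 (w.2 + w.1)} := by
    have hsum : Measurable fun w : E × E => w.2 + w.1 := measurable_snd.add measurable_fst
    exact (measurable_snd hI).imp ((hsum hI).imp ((measurable_snd.prodMk hsum) hr))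
  have hswap := (Measure.ae_ae_comm hmeas).mp (ae_of_all μ hadd)
  rw [ae_restrict_iff' hI]
  filter_upwards [hswap] with t ht htI
  rw [ae_restrict_iff' hI]
  filter_upwards [(measurePreserving_add_left μ (-t)).quasiMeasurePreserving.ae ht] with τ hτ hτI
  simpa [hτI] using hτ htI

lemma HasWeakDirDerivOn.smul_dir {E : Type*} [NormedAddCommGroup E] [NormedSpace ℝ E]
    [MeasurableSpace E] {μ : Measure E} {Q : Set E} {f g : E → G} {h : E}
    (hw : HasWeakDirDerivOn f g h Q μ) (c : ℝ) :
    HasWeakDirDerivOn f (fun z => c • g z) (c • h) Q μ := by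
  intro ψ hψ hψc hψQ
  simp only [map_smul, smul_assoc, smul_comm (ψ _)]
  rw [integral_smul, integral_smul, hw ψ hψ hψc hψQ, smul_neg]

theorem ae_ae_enorm_sub_le_of_hasWeakDirDerivOn [CompleteSpace G] {V H : ℝ → G}
    (hw : HasWeakDirDerivOn V H 1 I volume) (hIo : IsOpen I) (hI : Convex ℝ I)
    (hVm : StronglyMeasurable V) (hV : IntegrableOn V I) (hHm : StronglyMeasurable H)
    (hH : IntegrableOn H I) :
    ∀ᵐ t ∂volume.restrict I, ∀ᵐ τ ∂volume.restrict I, ‖V τ - V t‖ₑ ≤ ∫⁻ s in I, ‖H s‖ₑ := by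
  refine ae_ae_of_forall_ae_add hIo.measurableSet
    (r := fun t τ => ‖V τ - V t‖ₑ ≤ ∫⁻ s in I, ‖H s‖ₑ) (measurableSet_le
    ((hVm.comp_measurable measurable_snd).sub
      (hVm.comp_measurable measurable_fst)).enorm measurable_const) fun h => ?_
  have hwh : HasWeakDirDerivOn V (fun s => h • H s) h I volume := by
    simpa using hw.smul_dir h
  filter_upwards [hwh.ae_enorm_sub_le hIo hI hV (hH.smul h) (hHm.const_smul h)] with t hsub ht hth
  calc ‖V (t + h) - V t‖ₑ ≤ ∫⁻ s in Ioc (0 : ℝ) 1, ‖h • H (t + s • h)‖ₑ := hsub ht hth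
    _ = ‖h‖ₑ * ∫⁻ s in Ioc (0 : ℝ) 1, ‖H (t + s • h)‖ₑ := by
        simp only [enorm_smul]
        rw [lintegral_const_mul' _ _ (by simp)]
    _ ≤ ∫⁻ s in I, ‖H s‖ₑ := enorm_mul_lintegral_comp_add_smul_le hI (‖H ·‖ₑ) ht hth

theorem ae_ae_enorm_integral_sub_le [CompleteSpace G] {X : Type*} [MeasurableSpace X]
    {ν : Measure X} [SFinite ν] (hIo : IsOpen I) (hI : Convex ℝ I) {P R : X × ℝ → G}
    (hPm : StronglyMeasurable P) (hP : Integrable P (ν.prod (volume.restrict I)))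
    (hRm : StronglyMeasurable R) (hR : Integrable R (ν.prod (volume.restrict I)))
    (hw : ∀ χ : ℝ → ℝ, ContDiff ℝ (⊤ : ℕ∞) χ → HasCompactSupport χ → tsupport χ ⊆ I →
      ∫ z, deriv χ z.2 • P z ∂(ν.prod (volume.restrict I))
        = ∫ z, χ z.2 • R z ∂(ν.prod (volume.restrict I))) :
    ∀ᵐ t ∂volume.restrict I, ∀ᵐ τ ∂volume.restrict I,
      ‖(∫ x, P (x, τ) ∂ν) - ∫ x, P (x, t) ∂ν‖ₑ ≤ ∫⁻ z, ‖R z‖ₑ ∂(ν.prod (volume.restrict I)) := by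
  have hslice : HasWeakDirDerivOn (fun t => ∫ x, P (x, t) ∂ν) (fun t => -∫ x, R (x, t) ∂ν) 1 I
      volume := by
    intro χ hχ hχc hχI
    obtain ⟨c, hc⟩ := hχ.continuous.bounded_above_of_compact_support hχc
    obtain ⟨c', hc'⟩ := exists_norm_fderiv_apply_le hχ hχc 1
    have hdχP : Integrable (fun z : X × ℝ => fderiv ℝ χ z.2 1 • P z)
        (ν.prod (volume.restrict I)) :=
      hP.bdd_smul c' ((continuous_fderiv_apply hχ 1).measurable.comp
        measurable_snd).aestronglyMeasurable (ae_of_all _ fun z => hc' z.2)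
    have hχR : Integrable (fun z : X × ℝ => χ z.2 • R z) (ν.prod (volume.restrict I)) :=
      hR.bdd_smul c (hχ.continuous.measurable.comp measurable_snd).aestronglyMeasurable
        (ae_of_all _ fun z => hc z.2)
    have hint := hw χ hχ hχc hχI
    simp only [← fderiv_apply_one_eq_deriv] at hint
    rw [integral_prod_symm _ hdχP, integral_prod_symm _ hχR] at hint
    simpa only [smul_neg, integral_neg, neg_neg, ← integral_smul] using hint
  filter_upwards [ae_ae_enorm_sub_le_of_hasWeakDirDerivOn hslice hIo hI hPm.integral_prod_left'
    hP.integral_prod_right hRm.integral_prod_left'.neg hR.integral_prod_right.neg] with t ht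
  filter_upwards [ht] with τ hτ
  calc _ ≤ ∫⁻ s in I, ‖-∫ x, R (x, s) ∂ν‖ₑ := hτ
    _ ≤ ∫⁻ s in I, ∫⁻ x, ‖R (x, s)‖ₑ ∂ν := lintegral_mono fun s => by
        rw [enorm_neg]
        exact enorm_integral_le_lintegral_enorm _
    _ = ∫⁻ z, ‖R z‖ₑ ∂(ν.prod (volume.restrict I)) :=
        (lintegral_prod_symm _ hRm.enorm.aemeasurable).symm

end TimeRegularity

section ConservationLaw

/-- The spatial gradient of a scalar function on space-time. -/
def spatialGrad (ψ : Spc n × ℝ → ℝ) (z : Spc n × ℝ) : Spc n :=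
  WithLp.toLp 2 fun j => pderivS j ψ z

lemma continuous_spatialGrad {ψ : Spc n × ℝ → ℝ} (hψ : ContDiff ℝ (⊤ : ℕ∞) ψ) :
    Continuous (spatialGrad ψ) := by
  refine (PiLp.continuous_toLp 2 _).comp (continuous_pi fun j => ?_)
  simpa only [pderivS_eq_fderiv (hψ.differentiable (by simp))] using continuous_fderiv_apply hψ _

lemma spatialGrad_of_notMem_tsupport {ψ : Spc n × ℝ → ℝ} (hψ : Differentiable ℝ ψ)
    {z : Spc n × ℝ} (hz : z ∉ tsupport ψ) : spatialGrad ψ z = 0 := by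
  ext j
  have hfderiv : fderiv ℝ ψ z = 0 :=
    image_eq_zero_of_notMem_tsupport fun hz' => hz (tsupport_fderiv_subset ℝ hz')
  simp [spatialGrad, pderivS_eq_fderiv hψ, hfderiv]

lemma spatialGrad_mul {η : Spc n → ℝ} (hη : Differentiable ℝ η) (χ : ℝ → ℝ) (z : Spc n × ℝ) :
    spatialGrad (fun w => η w.1 * χ w.2) z = χ z.2 • gradient η z.1 := by
  ext j
  have hgrad : gradient η z.1 j = fderiv ℝ η z.1 (EuclideanSpace.single j 1) := by
    rw [← inner_gradient_left, EuclideanSpace.inner_single_right]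
    simp
  simp [spatialGrad, pderivS, fderiv_mul_const (hη z.1), hgrad]

lemma norm_gradient {E : Type*} [NormedAddCommGroup E] [InnerProductSpace ℝ E] [CompleteSpace E]
    (η : E → ℝ) (x : E) : ‖gradient η x‖ = ‖fderiv ℝ η x‖ :=
  (InnerProductSpace.toDual ℝ E).symm.norm_map _

/-- The system `∂ₜ v = div M` holds weakly on `Q`. It is tested against scalar functions in
`C_c^∞(Q)`, one for all components of `v`. -/
def WeakConservationLawOn (v : Spc n × ℝ → Vec N) (M : Spc n × ℝ → Mat N n)
    (Q : Set (Spc n × ℝ)) : Prop :=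
  ∀ ψ : Spc n × ℝ → ℝ, ContDiff ℝ (⊤ : ℕ∞) ψ → HasCompactSupport ψ → tsupport ψ ⊆ Q →
    ∫ z in Q, fderiv ℝ ψ z (0, 1) • v z = ∫ z in Q, matVec (M z) (spatialGrad ψ z)

namespace WeakConservationLawOn

variable {v : Spc n × ℝ → Vec N} {M : Spc n × ℝ → Mat N n} {B : Set (Spc n)} {I : Set ℝ}

lemma congr_ae {Q : Set (Spc n × ℝ)} {M' : Spc n × ℝ → Mat N n} (hw : WeakConservationLawOn v M Q)
    (hM : M =ᵐ[volume.restrict Q] M') : WeakConservationLawOn v M' Q := fun ψ hψ hψc hψQ =>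
  (hw ψ hψ hψc hψQ).trans (integral_congr_ae (hM.mono fun z hz => by simp only [hz]))

lemma integral_deriv_smul (hw : WeakConservationLawOn v M (B ×ˢ I)) {η : Spc n → ℝ}
    (hη : ContDiff ℝ (⊤ : ℕ∞) η) (hηc : HasCompactSupport η) (hηB : tsupport η ⊆ B) {χ : ℝ → ℝ}
    (hχ : ContDiff ℝ (⊤ : ℕ∞) χ) (hχc : HasCompactSupport χ) (hχI : tsupport χ ⊆ I) :
    ∫ z in B ×ˢ I, deriv χ z.2 • η z.1 • v z
      = ∫ z in B ×ˢ I, χ z.2 • matVec (M z) (gradient η z.1) := by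
  have hψ : ContDiff ℝ (⊤ : ℕ∞) fun z : Spc n × ℝ => η z.1 * χ z.2 :=
    (hη.comp contDiff_fst).mul (hχ.comp contDiff_snd)
  have hsub : tsupport (fun z : Spc n × ℝ => η z.1 * χ z.2) ⊆ tsupport η ×ˢ tsupport χ := by
    refine closure_minimal (fun z hz => ?_) ((isClosed_tsupport η).prod (isClosed_tsupport χ))
    exact ⟨subset_tsupport η (left_ne_zero_of_mul hz), subset_tsupport χ (right_ne_zero_of_mul hz)⟩
  have hderiv (z : Spc n × ℝ) :
      fderiv ℝ (fun w : Spc n × ℝ => η w.1 * χ w.2) z (0, 1) = deriv χ z.2 * η z.1 := by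
    have hχz := (hχ.differentiable (by simp) z.2).hasDerivAt
    have hηz := (hη.differentiable (by simp) z.1).hasFDerivAt
    have hmul : fderiv ℝ (fun w : Spc n × ℝ => η w.1 * χ w.2) z = _ :=
      ((hηz.comp z hasFDerivAt_fst).mul (hχz.hasFDerivAt.comp z hasFDerivAt_snd)).fderiv
    simp [hmul, mul_comm]
  have hmain := hw _ hψ ((hηc.isCompact.prod hχc.isCompact).of_isClosed_subset
    (isClosed_tsupport _) hsub) (hsub.trans (prod_mono hηB hχI))
  simpa only [hderiv, mul_smul, spatialGrad_mul (hη.differentiable (by simp)), matVec_smul]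
    using hmain

theorem ae_ae_enorm_setIntegral_smul_sub_le (hw : WeakConservationLawOn v M (B ×ˢ I))
    (hIo : IsOpen I) (hI : Convex ℝ I) (hvm : Measurable v) (hv : IntegrableOn v (B ×ˢ I))
    (hM : IntegrableOn M (B ×ˢ I)) {η : Spc n → ℝ} (hη : ContDiff ℝ (⊤ : ℕ∞) η)
    (hηc : HasCompactSupport η) (hηB : tsupport η ⊆ B) {C : ℝ} (hC : ∀ x, ‖fderiv ℝ η x‖ ≤ C) :
    ∀ᵐ t ∂volume.restrict I, ∀ᵐ τ ∂volume.restrict I,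
      ‖(∫ x in B, η x • v (x, τ)) - ∫ x in B, η x • v (x, t)‖ₑ
        ≤ ENNReal.ofReal C * ∫⁻ z in B ×ˢ I, ‖M z‖ₑ := by
  obtain ⟨M', hM'm, hMM'⟩ := hM.aestronglyMeasurable
  replace hw := hw.congr_ae hMM'
  obtain ⟨c, hc⟩ := hη.continuous.bounded_above_of_compact_support hηc
  have hgrad : Continuous (gradient η) :=
    (InnerProductSpace.toDual ℝ (Spc n)).symm.continuous.comp (hη.continuous_fderiv (by simp))
  have hprod : (volume : Measure (Spc n × ℝ)).restrict (B ×ˢ I)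
      = (volume.restrict B).prod (volume.restrict I) := by
    rw [Measure.volume_eq_prod, Measure.prod_restrict]
  have hηv : IntegrableOn (fun z => η z.1 • v z) (B ×ˢ I) :=
    Integrable.bdd_smul hv c (hη.continuous.comp continuous_fst).aestronglyMeasurable
      (ae_of_all _ fun z => hc z.1)
  have hflux : IntegrableOn (fun z => matVec (M' z) (gradient η z.1)) (B ×ˢ I) :=
    integrable_matVec (hM.congr hMM') (hgrad.comp continuous_fst).aestronglyMeasurable
      fun z => (norm_gradient η z.1).trans_le (hC z.1)
  have htime := fun χ hχ hχc hχI => hw.integral_deriv_smul (χ := χ) hη hηc hηB hχ hχc hχI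
  rw [hprod] at htime
  rw [IntegrableOn, hprod] at hηv hflux
  filter_upwards [ae_ae_enorm_integral_sub_le hIo hI
    (hη.continuous.stronglyMeasurable.comp_measurable measurable_fst |>.smul hvm.stronglyMeasurable)
    hηv (continuous_matVec.comp_stronglyMeasurable
      (hM'm.prodMk (hgrad.comp continuous_fst).stronglyMeasurable)) hflux htime] with t ht
  filter_upwards [ht] with τ hτ
  have hgradC : ∀ x, ‖gradient η x‖ₑ ≤ ENNReal.ofReal C := fun x => by
    rw [← ofReal_norm, norm_gradient]
    exact ENNReal.ofReal_le_ofReal (hC x)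
  refine hτ.trans ?_
  rw [← hprod, ← lintegral_const_mul' _ _ ENNReal.ofReal_ne_top]
  refine lintegral_mono_ae (hMM'.mono fun z hz => (enorm_matVec_le _ _).trans ?_)
  rw [hz]
  exact mul_le_mul_left (hgradC z.1) _

end WeakConservationLawOn

end ConservationLaw

/-! ### Weak solutions -/

section FluxSolution

lemma HasWeakGradOn.mono {u : Spc n × ℝ → Vec N} {Du : Spc n × ℝ → Mat N n}
    {Q Q' : Set (Spc n × ℝ)} (hw : HasWeakGradOn u Du Q') (hQ' : MeasurableSet Q') (hQ : Q ⊆ Q') :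
    HasWeakGradOn u Du Q := by
  intro ψ hψ hψc hψQ i j
  rw [← setIntegral_eq_of_subset_of_forall_sdiff_eq_zero hQ' hQ fun z hz => ?_,
    ← setIntegral_eq_of_subset_of_forall_sdiff_eq_zero hQ' hQ fun z hz => ?_]
  · exact hw ψ hψ hψc (hψQ.trans hQ) i j
  · rw [image_eq_zero_of_notMem_tsupport fun hz' => hz.2 (hψQ hz'), mul_zero]
  · have hfderiv : fderiv ℝ ψ z = 0 :=
      image_eq_zero_of_notMem_tsupport fun hz' => hz.2 (hψQ (tsupport_fderiv_subset ℝ hz'))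
    simp [pderivS_eq_fderiv (hψ.differentiable (by simp)), hfderiv]

lemma WeakConservationLawOn.mono {v : Spc n × ℝ → Vec N} {M : Spc n × ℝ → Mat N n}
    {Q Q' : Set (Spc n × ℝ)} (hw : WeakConservationLawOn v M Q') (hQ' : MeasurableSet Q')
    (hQ : Q ⊆ Q') : WeakConservationLawOn v M Q := by
  intro ψ hψ hψc hψQ
  rw [← setIntegral_eq_of_subset_of_forall_sdiff_eq_zero hQ' hQ fun z hz => ?_,
    ← setIntegral_eq_of_subset_of_forall_sdiff_eq_zero hQ' hQ fun z hz => ?_]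
  · exact hw ψ hψ hψc (hψQ.trans hQ)
  · rw [spatialGrad_of_notMem_tsupport (hψ.differentiable (by simp)) fun hz' => hz.2 (hψQ hz'),
      matVec_zero]
  · have hfderiv : fderiv ℝ ψ z = 0 :=
      image_eq_zero_of_notMem_tsupport fun hz' => hz.2 (hψQ (tsupport_fderiv_subset ℝ hz'))
    simp [hfderiv]

/-- A weak solution on `Q` of `∂ₜ(|u|^{p-2}u) = div M`, where the flux `M` is only required to obey
the growth condition `|M| ≤ L|Du|^{p-1} + |F|^{p-1}`. For the doubly nonlinear system,
`M = A(x,t,u,Du) + |F|^{p-2}F`. -/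
structure IsFluxSolutionOn (p L : ℝ) (Q : Set (Spc n × ℝ)) (u : Spc n × ℝ → Vec N)
    (Du F M : Spc n × ℝ → Mat N n) : Prop where
  measurable_u : Measurable u
  measurable_Du : Measurable Du
  measurable_F : Measurable F
  memLp_u : MemLp u (ENNReal.ofReal p) (volume.restrict Q)
  memLp_Du : MemLp Du (ENNReal.ofReal p) (volume.restrict Q)
  memLp_F : MemLp F (ENNReal.ofReal p) (volume.restrict Q)
  aestronglyMeasurable_flux : AEStronglyMeasurable M (volume.restrict Q)
  norm_flux_le : ∀ᵐ z ∂volume.restrict Q, ‖M z‖ ≤ L * ‖Du z‖ ^ (p - 1) + ‖F z‖ ^ (p - 1)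
  hasWeakGradOn : HasWeakGradOn u Du Q
  conservationLaw : WeakConservationLawOn (fun z => radialPow (p - 1) (u z)) M Q

lemma IsFluxSolutionOn.mono {p L : ℝ} {Q Q' : Set (Spc n × ℝ)} {u : Spc n × ℝ → Vec N}
    {Du F M : Spc n × ℝ → Mat N n} (h : IsFluxSolutionOn p L Q' u Du F M) (hQ' : MeasurableSet Q')
    (hQ : Q ⊆ Q') : IsFluxSolutionOn p L Q u Du F M where
  measurable_u := h.measurable_u
  measurable_Du := h.measurable_Du
  measurable_F := h.measurable_F
  memLp_u := h.memLp_u.mono_measure (Measure.restrict_mono_set volume hQ)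
  memLp_Du := h.memLp_Du.mono_measure (Measure.restrict_mono_set volume hQ)
  memLp_F := h.memLp_F.mono_measure (Measure.restrict_mono_set volume hQ)
  aestronglyMeasurable_flux := h.aestronglyMeasurable_flux.mono_set hQ
  norm_flux_le := ae_restrict_of_ae_restrict_of_subset hQ h.norm_flux_le
  hasWeakGradOn := h.hasWeakGradOn.mono hQ' hQ
  conservationLaw := h.conservationLaw.mono hQ' hQ

section Integrable

variable {X E : Type*} [MeasurableSpace X] {μ : Measure X} [IsFiniteMeasure μ]
  [NormedAddCommGroup E] {p : ℝ} {w : X → E}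

lemma integrable_norm_rpow_sub_one (hp : 1 < p) (hw : MemLp w (ENNReal.ofReal p) μ) :
    Integrable (fun x => ‖w x‖ ^ (p - 1)) μ := by
  have hwp : MemLp w (ENNReal.ofReal (p - 1)) μ :=
    hw.mono_exponent (ENNReal.ofReal_le_ofReal (by linarith))
  have hint := hwp.integrable_norm_rpow (by simpa using hp) ENNReal.ofReal_ne_top
  rwa [ENNReal.toReal_ofReal (by linarith)] at hint

lemma integrable_radialPow_sub_one [NormedSpace ℝ E] [MeasurableSpace E] [BorelSpace E]
    [SecondCountableTopology E] (hp : 1 < p) (hwm : Measurable w)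
    (hw : MemLp w (ENNReal.ofReal p) μ) : Integrable (fun x => radialPow (p - 1) (w x)) μ :=
  (integrable_norm_rpow_sub_one hp hw).mono'
    ((measurable_radialPow _).comp hwm).aestronglyMeasurable
    (ae_of_all _ fun x => (norm_radialPow (by linarith) (w x)).le)

end Integrable

end FluxSolution

section WeakSolution

lemma tderiv_smul_const {ψ : Spc n × ℝ → ℝ} (hψ : Differentiable ℝ ψ) (e : Vec N)
    (z : Spc n × ℝ) : tderiv (fun w => ψ w • e) z = fderiv ℝ ψ z (0, 1) • e := by
  have hslice : HasDerivAt (fun s => ψ (z.1, s)) (fderiv ℝ ψ z (0, 1)) z.2 :=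
    (hψ z).hasFDerivAt.comp_hasDerivAt z.2 ((hasDerivAt_const z.2 z.1).prodMk (hasDerivAt_id z.2))
  exact (hslice.smul_const e).deriv

lemma gradPair_smul_single (M : Spc n × ℝ → Mat N n) (ψ : Spc n × ℝ → ℝ) (i : Fin N)
    (z : Spc n × ℝ) : gradPair M (fun w => ψ w • EuclideanSpace.single i (1 : ℝ)) z
      = matVec (M z) (spatialGrad ψ z) i := by
  have hpderiv : ∀ k j, pderivS j (fun w => (ψ w • EuclideanSpace.single i (1 : ℝ) : Vec N) k) z
      = if k = i then pderivS j ψ z else 0 := fun k j => by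
    by_cases hk : k = i <;> simp [pderivS, hk]
  simp only [gradPair, hpderiv]
  simp [matVec, spatialGrad]

namespace WeakSolution

variable {p ν L T : ℝ} {Ω : Set (Spc n)} {A : Spc n × ℝ → Vec N → Mat N n → Mat N n}
  {F : Spc n × ℝ → Mat N n} {u : Spc n × ℝ → Vec N} {Du : Spc n × ℝ → Mat N n}

lemma isFiniteMeasure_restrict (h : WeakSolution p ν L T Ω A F u Du) :
    IsFiniteMeasure (volume.restrict (Ω ×ˢ Ioo 0 T)) :=
  ⟨by simpa using (h.bddΩ.prod (Metric.isBounded_Ioo 0 T)).measure_lt_top⟩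

lemma aemeasurable_field (h : WeakSolution p ν L T Ω A F u Du) :
    AEMeasurable (fun z => A z (u z) (Du z)) (volume.restrict (Ω ×ˢ Ioo 0 T)) := by
  obtain ⟨S, hS, hSm, hSA⟩ := h.contA.exists_measurable_mem
  let A' : Vec N × Mat N n → Spc n × ℝ → Mat N n := fun w => S.indicator fun z => A z w.1 w.2
  have hA' : Measurable (Function.uncurry A') := by
    refine measurable_uncurry_of_continuous_of_measurable (fun z => ?_) fun w =>
      (h.measA w.1 w.2).indicator hSm
    by_cases hz : z ∈ S
    · simpa [A', hz] using hSA z hz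
    · simpa [A', hz] using continuous_const
  refine ⟨fun z => A' (u z, Du z) z,
    hA'.comp ((h.measu.prodMk h.measDu).prodMk measurable_id), ?_⟩
  filter_upwards [hS] with z hz
  simp [A', hz]

lemma integrableOn_radialPow_u (h : WeakSolution p ν L T Ω A F u Du) (hp : 1 < p) :
    IntegrableOn (fun z => radialPow (p - 1) (u z)) (Ω ×ˢ Ioo 0 T) :=
  have := h.isFiniteMeasure_restrict
  integrable_radialPow_sub_one hp h.measu h.memLp_u

lemma integrableOn_field (h : WeakSolution p ν L T Ω A F u Du) (hp : 1 < p) :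
    IntegrableOn (fun z => A z (u z) (Du z)) (Ω ×ˢ Ioo 0 T) :=
  have := h.isFiniteMeasure_restrict
  ((integrable_norm_rpow_sub_one hp h.memLp_Du).const_mul L).mono'
    h.aemeasurable_field.aestronglyMeasurable (h.growth.mono fun _ hz => hz _ _)

lemma integrableOn_radialPow_F (h : WeakSolution p ν L T Ω A F u Du) (hp : 1 < p) :
    IntegrableOn (fun z => radialPow (p - 1) (F z)) (Ω ×ˢ Ioo 0 T) :=
  have := h.isFiniteMeasure_restrict
  integrable_radialPow_sub_one hp h.measF h.memLp_F

lemma weakForm_component (h : WeakSolution p ν L T Ω A F u Du) {ψ : Spc n × ℝ → ℝ}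
    (hψ : ContDiff ℝ (⊤ : ℕ∞) ψ) (hψc : HasCompactSupport ψ) (hψΩ : tsupport ψ ⊆ Ω ×ˢ Ioo 0 T)
    (i : Fin N) :
    ∫ z in Ω ×ˢ Ioo 0 T, ((fderiv ℝ ψ z (0, 1) • radialPow (p - 1) (u z)) i
        - matVec (A z (u z) (Du z)) (spatialGrad ψ z) i)
      = ∫ z in Ω ×ˢ Ioo 0 T, matVec (radialPow (p - 1) (F z)) (spatialGrad ψ z) i := by
  have hform := h.weakForm (fun z => ψ z • EuclideanSpace.single i (1 : ℝ))
    (hψ.smul contDiff_const) hψc.smul_right ((tsupport_smul_subset_left ψ _).trans hψΩ)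
  have hexp : p - 1 - 1 = p - 2 := by ring
  simp only [gradPair_smul_single, tderiv_smul_const (hψ.differentiable (by simp)),
    inner_smul_right, EuclideanSpace.inner_single_right] at hform
  simpa [radialPow, hexp, smul_matVec, mul_left_comm] using hform

theorem weakConservationLawOn (h : WeakSolution p ν L T Ω A F u Du) (hp : 1 < p) :
    WeakConservationLawOn (fun z => radialPow (p - 1) (u z))
      (fun z => A z (u z) (Du z) + radialPow (p - 1) (F z)) (Ω ×ˢ Ioo 0 T) := by
  intro ψ hψ hψc hψΩ
  obtain ⟨C, hC⟩ := (continuous_spatialGrad hψ).bounded_above_of_compact_support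
    (hψc.mono' fun z hz => not_not.mp fun hz' =>
      hz (spatialGrad_of_notMem_tsupport (hψ.differentiable (by simp)) hz'))
  have hflux {M : Spc n × ℝ → Mat N n} (hM : IntegrableOn M (Ω ×ˢ Ioo 0 T) volume) :
      IntegrableOn (fun z => matVec (M z) (spatialGrad ψ z)) (Ω ×ˢ Ioo 0 T) volume :=
    integrable_matVec hM (continuous_spatialGrad hψ).aestronglyMeasurable hC
  have hA := hflux (h.integrableOn_field hp)
  have hF := hflux (h.integrableOn_radialPow_F hp)
  have hu := integrableOn_fderiv_apply_smul (h.integrableOn_radialPow_u hp) hψ hψc (0, 1)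
  ext i
  have hcomp := h.weakForm_component hψ hψc hψΩ i
  rw [integral_sub (hu.eval_piLp i) (hA.eval_piLp i), sub_eq_iff_eq_add'] at hcomp
  simp only [add_matVec]
  rw [integral_add hA hF, PiLp.add_apply, eval_integral_piLp hu.eval_piLp,
    eval_integral_piLp hA.eval_piLp, eval_integral_piLp hF.eval_piLp]
  exact hcomp

theorem isFluxSolutionOn (h : WeakSolution p ν L T Ω A F u Du) (hp : 1 < p) :
    IsFluxSolutionOn p L (Ω ×ˢ Ioo 0 T) u Du F
      (fun z => A z (u z) (Du z) + radialPow (p - 1) (F z)) where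
  measurable_u := h.measu
  measurable_Du := h.measDu
  measurable_F := h.measF
  memLp_u := h.memLp_u
  memLp_Du := h.memLp_Du
  memLp_F := h.memLp_F
  aestronglyMeasurable_flux := ((h.integrableOn_field hp).add
    (h.integrableOn_radialPow_F hp)).aestronglyMeasurable
  norm_flux_le := h.growth.mono fun z hz => (norm_add_le _ _).trans
    (add_le_add (hz _ _) (norm_radialPow (by linarith) (F z)).le)
  hasWeakGradOn := h.weakGrad
  conservationLaw := h.weakConservationLawOn hp

end WeakSolution

end WeakSolution

/-! ### Normalized measures and cut-off functions -/

section Cond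

open scoped ProbabilityTheory

variable {X : Type*} [MeasurableSpace X] {μ : Measure X} {s : Set X}

lemma setLIntegral_eq_mul_lintegral_cond (hs0 : μ s ≠ 0) (hs : μ s ≠ ∞) (f : X → ℝ≥0∞) :
    ∫⁻ x in s, f x ∂μ = μ s * ∫⁻ x, f x ∂μ[|s] := by
  rw [ProbabilityTheory.cond, lintegral_smul_measure, smul_eq_mul, ← mul_assoc,
    ENNReal.mul_inv_cancel hs0 hs, one_mul]

lemma cond_prod_eq_prod_cond {Y : Type*} [MeasurableSpace Y] {ν : Measure Y} [SFinite μ]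
    [SFinite ν] {t : Set Y} (hs0 : μ s ≠ 0) (hs : μ s ≠ ∞) :
    (μ.prod ν)[|s ×ˢ t] = μ[|s].prod ν[|t] := by
  simp only [ProbabilityTheory.cond]
  rw [Measure.prod_smul_left, Measure.prod_smul_right, Measure.prod_restrict, smul_smul,
    Measure.prod_prod, ENNReal.mul_inv (Or.inl hs0) (Or.inl hs)]

lemma inv_le_mul_inv_of_le_mul {κ a b : ℝ≥0∞} (hκ0 : κ ≠ 0) (hκ : κ ≠ ∞) (h : a ≤ κ * b) :
    b⁻¹ ≤ κ * a⁻¹ := by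
  rwa [← ENNReal.inv_le_inv, ENNReal.mul_inv (Or.inl hκ0) (Or.inl hκ), ← ENNReal.div_eq_inv_mul,
    ENNReal.div_le_iff hκ0 hκ, mul_comm] at h

lemma withDensity_cond_le_smul_cond (hs : MeasurableSet s) {f : X → ℝ≥0∞} (hf : ∀ x, f x ≤ 1)
    {κ : ℝ≥0∞} (hκ0 : κ ≠ 0) (hκ : κ ≠ ∞) (hfs : μ s ≤ κ * ∫⁻ x in s, f x ∂μ) :
    (μ.withDensity f)[|s] ≤ κ • μ[|s] := by
  have hdens : (μ.restrict s).withDensity f ≤ μ.restrict s :=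
    (withDensity_mono (ae_of_all _ hf)).trans_eq withDensity_one
  rw [ProbabilityTheory.cond, ProbabilityTheory.cond, smul_smul, restrict_withDensity hs,
    withDensity_apply _ hs]
  exact Measure.le_iff'.2 fun t => mul_le_mul' (inv_le_mul_inv_of_le_mul hκ0 hκ hfs) (hdens t)

lemma integral_withDensity_ofReal_cond {E : Type*} [NormedAddCommGroup E] [NormedSpace ℝ E]
    (hs : MeasurableSet s) {g : X → ℝ} (hg : Measurable g) (hg0 : ∀ x, 0 ≤ g x) (f : X → E) :
    ∫ x, f x ∂(μ.withDensity fun x => ENNReal.ofReal (g x))[|s]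
      = (∫⁻ x in s, ENNReal.ofReal (g x) ∂μ)⁻¹.toReal • ∫ x in s, g x • f x ∂μ := by
  rw [ProbabilityTheory.cond, restrict_withDensity hs, withDensity_apply _ hs,
    integral_smul_measure, integral_withDensity_eq_integral_toReal_smul hg.ennreal_ofReal
      (ae_of_all _ fun x => ENNReal.ofReal_lt_top)]
  simp only [ENNReal.toReal_ofReal (hg0 _)]

lemma memLp_cond {E : Type*} [NormedAddCommGroup E] {f : X → E} {r : ℝ≥0∞} (hs : μ s ≠ 0)
    (hf : MemLp f r (μ.restrict s)) : MemLp f r μ[|s] :=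
  hf.smul_measure (ENNReal.inv_ne_top.2 hs)

end Cond

section Cutoff

open scoped ProbabilityTheory

lemma volume_ball_two_mul (x y : Spc n) (ρ : ℝ) :
    volume (Metric.ball x (2 * ρ)) = 2 ^ n * volume (Metric.ball y ρ) := by
  rw [Measure.addHaar_ball_mul_of_pos volume x zero_lt_two, ← Measure.addHaar_ball_center volume y]
  simp [finrank_euclideanSpace, ENNReal.ofReal_pow]

/-- A smooth cut-off function between the balls of radii `ρ / 2` and `ρ` about `x₀`, whose gradient
is at most `C / ρ`. -/
structure IsCutoff (η : Spc n → ℝ) (x₀ : Spc n) (ρ C : ℝ) : Prop where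
  contDiff : ContDiff ℝ (⊤ : ℕ∞) η
  hasCompactSupport : HasCompactSupport η
  tsupport_subset : tsupport η ⊆ Metric.ball x₀ ρ
  nonneg : ∀ x, 0 ≤ η x
  le_one : ∀ x, η x ≤ 1
  eq_one : ∀ x ∈ Metric.ball x₀ (ρ / 2), η x = 1
  norm_fderiv_le : ∀ x, ‖fderiv ℝ η x‖ ≤ C / ρ

theorem exists_isCutoff (n : ℕ) :
    ∃ C : ℝ, 0 ≤ C ∧ ∀ (x₀ : Spc n) (ρ : ℝ), 0 < ρ → ∃ η, IsCutoff η x₀ ρ C := by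
  let g : ContDiffBump (0 : Spc n) := ⟨1, 3 / 2, by norm_num, by norm_num⟩
  obtain ⟨C, hC⟩ := Continuous.bounded_above_of_compact_support
    ((g.contDiff (n := 1)).continuous_fderiv (by simp)) (g.hasCompactSupport.fderiv ℝ)
  have hC0 : 0 ≤ C := (norm_nonneg _).trans (hC 0)
  refine ⟨2 * C, by positivity, fun x₀ ρ hρ => ?_⟩
  let f : ContDiffBump x₀ := ⟨ρ / 2, 3 * ρ / 4, by positivity, by linarith⟩
  have hfg : ∀ x, f x = g ((ρ / 2)⁻¹ • (x - x₀)) := fun x => by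
    have hratio : 3 * ρ / 4 / (ρ / 2) = 3 / 2 / 1 := by field_simp; norm_num
    simp [f, g, ContDiffBump.apply, hratio]
  refine ⟨f, f.contDiff, f.hasCompactSupport, ?_, fun x => f.nonneg, fun x => f.le_one,
    fun x hx => f.one_of_mem_closedBall (Metric.ball_subset_closedBall hx), fun x => ?_⟩
  · rw [f.tsupport_eq]
    exact Metric.closedBall_subset_ball (by change 3 * ρ / 4 < ρ; linarith)
  · rw [funext hfg, fderiv_comp_sub x₀ (f := fun y => g ((ρ / 2)⁻¹ • y)), fderiv_comp_smul,
      norm_smul, Real.norm_of_nonneg (by positivity), inv_div, mul_div_right_comm]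
    gcongr
    exact hC _

/-- The probability measure `η dx / ∫_B η` on `B`, which weights spatial means by a cut-off
function `η`. -/
def cutoffMeasure (η : Spc n → ℝ) (B : Set (Spc n)) : Measure (Spc n) :=
  (volume.withDensity fun x => ENNReal.ofReal (η x))[|B]

namespace IsCutoff

variable {η : Spc n → ℝ} {x₀ : Spc n} {ρ C : ℝ}

lemma volume_ball_le (h : IsCutoff η x₀ ρ C) (hρ : 0 < ρ) :
    volume (Metric.ball x₀ ρ) ≤ 2 ^ n * ∫⁻ x in Metric.ball x₀ ρ, ENNReal.ofReal (η x) := by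
  rw [show ρ = 2 * (ρ / 2) by ring, volume_ball_two_mul x₀ x₀, ← setLIntegral_one,
    ← setLIntegral_congr_fun (f := fun x => ENNReal.ofReal (η x)) measurableSet_ball
      fun x hx => by simp [h.eq_one x hx]]
  gcongr
  linarith

lemma isProbabilityMeasure_cutoffMeasure (h : IsCutoff η x₀ ρ C) (hρ : 0 < ρ) :
    IsProbabilityMeasure (cutoffMeasure η (Metric.ball x₀ ρ)) := by
  have hball := Metric.measure_ball_pos volume x₀ hρ
  refine ProbabilityTheory.cond_isProbabilityMeasure_of_finite ?_ ?_ <;>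
    rw [withDensity_apply _ measurableSet_ball]
  · intro hmass
    have hvol := h.volume_ball_le hρ
    rw [hmass, mul_zero] at hvol
    exact hball.not_ge hvol
  · refine ((lintegral_mono fun x => ENNReal.ofReal_le_one.2 (h.le_one x)).trans_lt ?_).ne
    simpa using measure_ball_lt_top

lemma cutoffMeasure_le (h : IsCutoff η x₀ ρ C) (hρ : 0 < ρ) :
    cutoffMeasure η (Metric.ball x₀ ρ) ≤ (2 ^ n : ℝ≥0∞) • volume[|Metric.ball x₀ ρ] :=
  withDensity_cond_le_smul_cond measurableSet_ball
    (fun x => ENNReal.ofReal_le_one.2 (h.le_one x)) (by simp) (by simp) (h.volume_ball_le hρ)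

lemma enorm_integral_cutoffMeasure_sub_le {E : Type*} [NormedAddCommGroup E] [NormedSpace ℝ E]
    (h : IsCutoff η x₀ ρ C) (hρ : 0 < ρ) (f g : Spc n → E) :
    ‖(∫ x, f x ∂cutoffMeasure η (Metric.ball x₀ ρ))
        - ∫ x, g x ∂cutoffMeasure η (Metric.ball x₀ ρ)‖ₑ
      ≤ 2 ^ n * (volume (Metric.ball x₀ ρ))⁻¹
        * ‖(∫ x in Metric.ball x₀ ρ, η x • f x) - ∫ x in Metric.ball x₀ ρ, η x • g x‖ₑ := by
  have hmean := fun f : Spc n → E => integral_withDensity_ofReal_cond (μ := volume)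
    (measurableSet_ball (x := x₀) (ε := ρ)) h.contDiff.continuous.measurable
    h.nonneg f
  rw [cutoffMeasure, hmean, hmean, ← smul_sub, enorm_smul, Real.enorm_of_nonneg (by positivity)]
  gcongr
  exact ENNReal.ofReal_toReal_le.trans
    (inv_le_mul_inv_of_le_mul (by simp) (by simp) (h.volume_ball_le hρ))

end IsCutoff

end Cutoff

/-! ### The estimate on a cylinder -/

section Cylinder

open scoped ProbabilityTheory

lemma volume_ball_prod_Ioo_ne_zero (x₀ : Spc n) {ρ a b : ℝ} (hρ : 0 < ρ) (hab : a < b) :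
    volume (Metric.ball x₀ ρ ×ˢ Ioo a b) ≠ 0 :=
  ((Metric.isOpen_ball.prod isOpen_Ioo).measure_pos volume
    ((Metric.nonempty_ball.2 hρ).prod (nonempty_Ioo.2 hab))).ne'

lemma volume_ball_prod_Ioo_ne_top (x₀ : Spc n) (ρ a b : ℝ) :
    volume (Metric.ball x₀ ρ ×ˢ Ioo a b) ≠ ∞ :=
  (Metric.isBounded_ball.prod (Metric.isBounded_Ioo a b)).measure_lt_top.ne

lemma HasWeakGradOn.lintegral_cond_enorm_sub_rpow_le {u : Spc n × ℝ → Vec N}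
    {Du : Spc n × ℝ → Mat N n} {x₀ : Spc n} {ρ : ℝ} {I : Set ℝ}
    (hw : HasWeakGradOn u Du (Metric.ball x₀ ρ ×ˢ I)) (hρ : 0 < ρ) (hIo : IsOpen I)
    (hI : Convex ℝ I) (hum : Measurable u) (hu : IntegrableOn u (Metric.ball x₀ ρ ×ˢ I))
    (hDum : Measurable Du) (hDu : IntegrableOn Du (Metric.ball x₀ ρ ×ˢ I)) {q : ℝ} (hq : 1 ≤ q) :
    ∫⁻ z, (∫⁻ y, ‖u (y, z.2) - u z‖ₑ ^ q ∂volume[|Metric.ball x₀ ρ])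
        ∂volume[|Metric.ball x₀ ρ ×ˢ I]
      ≤ ENNReal.ofReal (2 * ρ) ^ q * 2 ^ n
        * ∫⁻ z, ‖Du z‖ₑ ^ q ∂volume[|Metric.ball x₀ ρ ×ˢ I] := by
  have hB0 := (Metric.measure_ball_pos volume x₀ hρ).ne'
  have hB : volume (Metric.ball x₀ ρ) ≠ ∞ := measure_ball_lt_top.ne
  have hset := hw.setLIntegral_enorm_sub_rpow_le hIo hI hum hu hDum hDu hq
  rw [volume_ball_two_mul 0 x₀] at hset
  simp only [ProbabilityTheory.cond, lintegral_smul_measure, smul_eq_mul]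
  rw [lintegral_const_mul' _ _ (by simpa using hB0)]
  generalize volume (Metric.ball x₀ ρ) = b at *
  set Q := Metric.ball x₀ ρ ×ˢ I
  calc (volume Q)⁻¹ * (b⁻¹ * ∫⁻ z in Q, ∫⁻ y in Metric.ball x₀ ρ, ‖u (y, z.2) - u z‖ₑ ^ q)
      ≤ (volume Q)⁻¹ * (b⁻¹ * (ENNReal.ofReal (2 * ρ) ^ q * (2 ^ n * b)
          * ∫⁻ z in Q, ‖Du z‖ₑ ^ q)) := by gcongr
    _ = b⁻¹ * b * (ENNReal.ofReal (2 * ρ) ^ q * 2 ^ n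
          * ((volume Q)⁻¹ * ∫⁻ z in Q, ‖Du z‖ₑ ^ q)) := by ring
    _ = _ := by rw [ENNReal.inv_mul_cancel hB0 hB, one_mul]

lemma WeakConservationLawOn.ae_ae_enorm_integral_cutoffMeasure_sub_le {v : Spc n × ℝ → Vec N}
    {M : Spc n × ℝ → Mat N n} {x₀ : Spc n} {ρ a b C : ℝ} {η : Spc n → ℝ}
    (hw : WeakConservationLawOn v M (Metric.ball x₀ ρ ×ˢ Ioo a b)) (hρ : 0 < ρ) (hab : a < b)
    (hvm : Measurable v) (hv : IntegrableOn v (Metric.ball x₀ ρ ×ˢ Ioo a b))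
    (hM : IntegrableOn M (Metric.ball x₀ ρ ×ˢ Ioo a b)) (hη : IsCutoff η x₀ ρ C) :
    ∀ᵐ t ∂volume[|Ioo a b], ∀ᵐ τ ∂volume[|Ioo a b],
      ‖(∫ x, v (x, τ) ∂cutoffMeasure η (Metric.ball x₀ ρ))
          - ∫ x, v (x, t) ∂cutoffMeasure η (Metric.ball x₀ ρ)‖ₑ
        ≤ 2 ^ n * ENNReal.ofReal (C / ρ) * ENNReal.ofReal (b - a)
          * ∫⁻ z, ‖M z‖ₑ ∂volume[|Metric.ball x₀ ρ ×ˢ Ioo a b] := by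
  have hB0 := (Metric.measure_ball_pos volume x₀ hρ).ne'
  have hB : volume (Metric.ball x₀ ρ) ≠ ∞ := measure_ball_lt_top.ne
  have hQ : volume (Metric.ball x₀ ρ ×ˢ Ioo a b)
      = volume (Metric.ball x₀ ρ) * ENNReal.ofReal (b - a) := by
    rw [Measure.volume_eq_prod, Measure.prod_prod, Real.volume_Ioo]
  have hac : volume[|Ioo a b] ≪ volume.restrict (Ioo a b) := Measure.smul_absolutelyContinuous
  have hset := hw.ae_ae_enorm_setIntegral_smul_sub_le isOpen_Ioo (convex_Ioo a b) hvm hv hM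
    hη.contDiff hη.hasCompactSupport hη.tsupport_subset hη.norm_fderiv_le
  rw [setLIntegral_eq_mul_lintegral_cond (volume_ball_prod_Ioo_ne_zero x₀ hρ hab)
    (volume_ball_prod_Ioo_ne_top x₀ ρ a b)] at hset
  filter_upwards [hac.ae_le hset] with t ht
  filter_upwards [hac.ae_le ht] with τ hτ
  refine (hη.enorm_integral_cutoffMeasure_sub_le hρ _ _).trans ?_
  grw [hτ, hQ]
  set Z := ∫⁻ z, ‖M z‖ₑ ∂volume[|Metric.ball x₀ ρ ×ˢ Ioo a b]
  generalize volume (Metric.ball x₀ ρ) = m at *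
  calc 2 ^ n * m⁻¹ * (ENNReal.ofReal (C / ρ) * (m * ENNReal.ofReal (b - a) * Z))
      = m⁻¹ * m * (2 ^ n * ENNReal.ofReal (C / ρ) * ENNReal.ofReal (b - a) * Z) := by ring
    _ ≤ _ := by rw [ENNReal.inv_mul_cancel hB0 hB, one_mul]

namespace IsFluxSolutionOn

variable {p L : ℝ} {u : Spc n × ℝ → Vec N} {Du F M : Spc n × ℝ → Mat N n}

lemma integrableOn_flux {Q : Set (Spc n × ℝ)} [IsFiniteMeasure (volume.restrict Q)]
    (h : IsFluxSolutionOn p L Q u Du F M) (hp : 1 < p) : IntegrableOn M Q :=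
  (((integrable_norm_rpow_sub_one hp h.memLp_Du).const_mul L).add
    (integrable_norm_rpow_sub_one hp h.memLp_F)).mono' h.aestronglyMeasurable_flux h.norm_flux_le

theorem lintegral_lintegral_enorm_sub_rpow_le {x₀ : Spc n} {ρ a b C q : ℝ} {η : Spc n → ℝ}
    {π : Measure (Spc n × ℝ)} (h : IsFluxSolutionOn p L (Metric.ball x₀ ρ ×ˢ Ioo a b) u Du F M)
    (hp : 1 < p) (hp2 : p ≤ 2) (hq : 1 ≤ q) (hqp : q ≤ p) (hρ : 0 < ρ) (hab : a < b)
    (hη : IsCutoff η x₀ ρ C) (hπ : π = volume[|Metric.ball x₀ ρ ×ˢ Ioo a b]) :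
    ∫⁻ z, ∫⁻ w, ‖u z - u w‖ₑ ^ q ∂π ∂π
      ≤ 6 * (ENNReal.ofReal (radialMeanConst (p - 1)) ^ q * 2 ^ n
          * (ENNReal.ofReal (2 * ρ) ^ q * 2 ^ n * ∫⁻ z, ‖Du z‖ₑ ^ q ∂π))
        + 6 * ((2 * ENNReal.ofReal (1 / (p - 1)) * (2 ^ n * ENNReal.ofReal (C / ρ)
            * ENNReal.ofReal (b - a) * ∫⁻ z, ‖M z‖ₑ ∂π)) ^ q
          * (2 ^ n * ∫⁻ z, ‖u z‖ₑ ^ p ∂π) ^ (q * (2 - p) / p)) := by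
  have hB0 := (Metric.measure_ball_pos volume x₀ hρ).ne'
  have hB : volume (Metric.ball x₀ ρ) ≠ ∞ := measure_ball_lt_top.ne
  have hI : volume (Ioo a b) ≠ ∞ := measure_Ioo_lt_top.ne
  have : IsFiniteMeasure (volume.restrict (Metric.ball x₀ ρ ×ˢ Ioo a b)) :=
    isFiniteMeasure_restrict.2 (volume_ball_prod_Ioo_ne_top x₀ ρ a b)
  have := ProbabilityTheory.cond_isProbabilityMeasure_of_finite hB0 hB
  have := ProbabilityTheory.cond_isProbabilityMeasure_of_finite (by simpa using hab) hI
  have := hη.isProbabilityMeasure_cutoffMeasure hρ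
  have hp1 : 1 ≤ ENNReal.ofReal p := ENNReal.one_le_ofReal.2 hp.le
  have htime := h.conservationLaw.ae_ae_enorm_integral_cutoffMeasure_sub_le hρ hab
    ((measurable_radialPow _).comp h.measurable_u)
    (integrable_radialPow_sub_one hp h.measurable_u h.memLp_u) (h.integrableOn_flux hp) hη
  have hspace := h.hasWeakGradOn.lintegral_cond_enorm_sub_rpow_le hρ isOpen_Ioo (convex_Ioo a b)
    h.measurable_u (h.memLp_u.integrable hp1) h.measurable_Du (h.memLp_Du.integrable hp1) hq
  have hprod : π = volume[|Metric.ball x₀ ρ].prod volume[|Ioo a b] := by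
    rw [hπ, Measure.volume_eq_prod, cond_prod_eq_prod_cond hB0 hB]
  have hosc := lintegral_lintegral_enorm_sub_rpow_le_of_integral_radialPow hp hp2 hq hqp
    (hη.cutoffMeasure_le hρ) h.measurable_u htime
  rw [← hprod, ← hπ] at hosc
  rw [← hπ] at hspace
  exact hosc.trans (by gcongr)

end IsFluxSolutionOn

end Cylinder

/-! ### Averages as lower Lebesgue integrals -/

section Averages

variable {X E E' : Type*} [MeasurableSpace X] {π : Measure X} [NormedAddCommGroup E]
  [NormedAddCommGroup E'] {f : X → E} {g : X → E'} {r s : ℝ}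

lemma toReal_lintegral_enorm_rpow (hr : 0 ≤ r) (hf : AEStronglyMeasurable f π) :
    (∫⁻ x, ‖f x‖ₑ ^ r ∂π).toReal = ∫ x, ‖f x‖ ^ r ∂π := by
  rw [← integral_toReal (hf.enorm.pow_const r) (ae_of_all _ fun x => by finiteness)]
  simp only [← ENNReal.toReal_rpow, toReal_enorm]

lemma toReal_lintegral_enorm_rpow_add (hr : 0 ≤ r) (hf : AEStronglyMeasurable f π)
    (hg : AEStronglyMeasurable g π) :
    (∫⁻ x, (‖f x‖ₑ ^ r + ‖g x‖ₑ ^ r) ∂π).toReal = ∫ x, (‖f x‖ ^ r + ‖g x‖ ^ r) ∂π := by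
  have htop : ∀ x, ‖f x‖ₑ ^ r ≠ ∞ ∧ ‖g x‖ₑ ^ r ≠ ∞ := fun x => by constructor <;> finiteness
  have hmeas : AEMeasurable (fun x => ‖f x‖ₑ ^ r + ‖g x‖ₑ ^ r) π :=
    (hf.enorm.pow_const r).add (hg.enorm.pow_const r)
  rw [← integral_toReal hmeas (ae_of_all _ fun x => by finiteness)]
  simp only [ENNReal.toReal_add (htop _).1 (htop _).2, ← ENNReal.toReal_rpow, toReal_enorm]

lemma lintegral_enorm_rpow_ne_top (hr : 0 < r) (hf : MemLp f (ENNReal.ofReal r) π) :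
    ∫⁻ x, ‖f x‖ₑ ^ r ∂π ≠ ∞ := by
  have h := lintegral_rpow_enorm_lt_top_of_eLpNorm_lt_top (by simpa using hr)
    ENNReal.ofReal_ne_top hf.eLpNorm_lt_top
  rw [ENNReal.toReal_ofReal hr.le] at h
  exact h.ne

lemma lintegral_enorm_rpow_add_ne_top (hr : 0 < r) (hf : MemLp f (ENNReal.ofReal r) π)
    (hg : MemLp g (ENNReal.ofReal r) π) : ∫⁻ x, (‖f x‖ₑ ^ r + ‖g x‖ₑ ^ r) ∂π ≠ ∞ := by
  rw [lintegral_add_left' (hf.aestronglyMeasurable.enorm.pow_const r)]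
  exact ENNReal.add_ne_top.2
    ⟨lintegral_enorm_rpow_ne_top hr hf, lintegral_enorm_rpow_ne_top hr hg⟩

variable [IsProbabilityMeasure π]

lemma lintegral_rpow_add_le (hr : 0 < r) (hrs : r ≤ s) {f g : X → ℝ≥0∞} (hf : AEMeasurable f π)
    (hg : AEMeasurable g π) :
    ∫⁻ x, (f x ^ r + g x ^ r) ∂π ≤ 2 * (∫⁻ x, (f x ^ s + g x ^ s) ∂π) ^ (r / s) := by
  have hrs0 : 0 ≤ r / s := by have := hr.trans_le hrs; positivity
  rw [lintegral_add_left' (hf.pow_const r), two_mul]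
  refine add_le_add ((lintegral_rpow_le_rpow_lintegral_rpow hr hrs hf).trans ?_)
    ((lintegral_rpow_le_rpow_lintegral_rpow hr hrs hg).trans ?_)
  · exact ENNReal.rpow_le_rpow (lintegral_mono fun x => le_self_add) hrs0
  · exact ENNReal.rpow_le_rpow (lintegral_mono fun x => le_add_self) hrs0

lemma integral_norm_rpow_add_le (hr : 0 < r) (hrs : r ≤ s) (hf : MemLp f (ENNReal.ofReal s) π)
    (hg : MemLp g (ENNReal.ofReal s) π) :
    ∫ x, (‖f x‖ ^ r + ‖g x‖ ^ r) ∂π ≤ 2 * (∫ x, (‖f x‖ ^ s + ‖g x‖ ^ s) ∂π) ^ (r / s) := by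
  have hs : 0 < s := hr.trans_le hrs
  have hfin := lintegral_enorm_rpow_add_ne_top hs hf hg
  rw [← toReal_lintegral_enorm_rpow_add hr.le hf.1 hg.1,
    ← toReal_lintegral_enorm_rpow_add hs.le hf.1 hg.1]
  simpa [ENNReal.toReal_rpow] using ENNReal.toReal_mono (by finiteness)
    (lintegral_rpow_add_le hr hrs hf.1.enorm hg.1.enorm)

lemma enorm_sub_integral_rpow_le [NormedSpace ℝ E] [CompleteSpace E] (hf : Integrable f π)
    (hr : 1 ≤ r) (c : E) :
    ‖c - ∫ y, f y ∂π‖ₑ ^ r ≤ ∫⁻ y, ‖c - f y‖ₑ ^ r ∂π := by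
  have hmean : c - ∫ y, f y ∂π = ∫ y, (c - f y) ∂π := by
    rw [integral_sub (integrable_const c) hf]; simp
  rw [hmean]
  exact (ENNReal.rpow_le_rpow (enorm_integral_le_lintegral_enorm _) (by linarith)).trans
    (rpow_lintegral_le_lintegral_rpow hr (aestronglyMeasurable_const.sub hf.1).enorm)

end Averages

/-! ### Intrinsic scaling -/

section Scaling

variable {p q H G : ℝ}

lemma rpow_le_sq_of_one_le {x : ℝ} (hx : 1 ≤ x) (hq : q ≤ 2) : x ^ q ≤ x ^ 2 := by
  rw [← Real.rpow_natCast x 2]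
  exact Real.rpow_le_rpow_of_exponent_le hx (by simpa using hq)

lemma le_two_mul_rpow_mul_rpow (hp : 1 < p) (hp2 : p ≤ 2) (hH : 0 ≤ H) (hG : 0 ≤ G)
    (hHG : H ≤ 2 * G ^ (q / p)) : H ≤ 2 * (H ^ (p - 1) * G ^ (q * (2 - p) / p)) := by
  have hHpow : H ^ (2 - p) ≤ 2 * G ^ (q * (2 - p) / p) := by
    calc H ^ (2 - p) ≤ (2 * G ^ (q / p)) ^ (2 - p) := by gcongr
      _ = 2 ^ (2 - p) * G ^ (q * (2 - p) / p) := by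
          rw [Real.mul_rpow (by norm_num) (by positivity), ← Real.rpow_mul hG]
          congr 2; ring
      _ ≤ 2 * G ^ (q * (2 - p) / p) := by
          gcongr
          exact Real.rpow_le_self_of_one_le one_le_two (by linarith)
  calc H = H ^ (p - 1) * H ^ (2 - p) := by
        rw [← Real.rpow_add' hH (by norm_num), show p - 1 + (2 - p) = 1 by ring, Real.rpow_one]
    _ ≤ H ^ (p - 1) * (2 * G ^ (q * (2 - p) / p)) := by gcongr
    _ = _ := by ring

variable {κ c ρ μ K U : ℝ}

lemma rpow_size_le_of_subIntrinsic (hp : 1 < p) (hp2 : p ≤ 2) (hq : 1 ≤ q) (hqp : q ≤ p)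
    (hκ : 1 ≤ κ) (hρ : 0 < ρ) (hμ : 0 < μ) (hK : 1 ≤ K) (hG : 0 ≤ G) (hU0 : 0 ≤ U)
    (hU : U ≤ K * μ ^ p * G * ρ ^ p) :
    (κ * U) ^ (q * (2 - p) / p)
      ≤ κ * K * (μ ^ (q * (2 - p)) * ρ ^ (q * (2 - p))) * G ^ (q * (2 - p) / p) := by
  set θ := q * (2 - p) / p with hθ
  have : 0 ≤ θ := div_nonneg (mul_nonneg (by linarith) (by linarith)) (by linarith)
  have hθ1 : θ ≤ 1 := div_le_one_of_le₀ (by nlinarith) (by linarith)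
  have hpθ : p * θ = q * (2 - p) := by rw [hθ]; field_simp
  calc (κ * U) ^ θ ≤ (κ * (K * μ ^ p * G * ρ ^ p)) ^ θ := by gcongr
    _ = (κ * K) ^ θ * (μ ^ (q * (2 - p)) * ρ ^ (q * (2 - p))) * G ^ θ := by
        rw [show κ * (K * μ ^ p * G * ρ ^ p) = κ * K * (μ ^ p * ρ ^ p) * G by ring,
          Real.mul_rpow (by positivity) hG, Real.mul_rpow (by positivity) (by positivity),
          Real.mul_rpow (x := μ ^ p) (by positivity) (by positivity), ← Real.rpow_mul hμ.le,
          ← Real.rpow_mul hρ.le, hpθ]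
    _ ≤ _ := by
        gcongr
        exact Real.rpow_le_self_of_one_le (one_le_mul_of_one_le_of_one_le hκ hK) hθ1

lemma rpow_flux_mul_rpow_size_le_of_subIntrinsic (hp : 1 < p) (hp2 : p ≤ 2) (hq : 1 ≤ q)
    (hqp : q ≤ p) (hκ : 1 ≤ κ) (hc : 0 ≤ c) (hρ : 0 < ρ) (hμ : 0 < μ) (hK : 1 ≤ K) (hH : 0 ≤ H)
    (hG : 0 ≤ G) (hU0 : 0 ≤ U) (hU : U ≤ K * μ ^ p * G * ρ ^ p) :
    (c * (μ ^ (p - 2) * ρ ^ (p - 1)) * H ^ ((p - 1) / q)) ^ q * (κ * U) ^ (q * (2 - p) / p)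
      ≤ (1 + c) ^ 2 * (κ * K) * ρ ^ q * (H ^ (p - 1) * G ^ (q * (2 - p) / p)) := by
  have hflux : (c * (μ ^ (p - 2) * ρ ^ (p - 1)) * H ^ ((p - 1) / q)) ^ q
      = c ^ q * (μ ^ ((p - 2) * q) * ρ ^ ((p - 1) * q)) * H ^ (p - 1) := by
    rw [Real.mul_rpow (by positivity) (by positivity),
      Real.mul_rpow (by positivity) (by positivity),
      Real.mul_rpow (by positivity) (by positivity), ← Real.rpow_mul hμ.le, ← Real.rpow_mul hρ.le,
      ← Real.rpow_mul hH, div_mul_cancel₀ _ (by linarith)]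
  have hsize := rpow_size_le_of_subIntrinsic hp hp2 hq hqp hκ hρ hμ hK hG hU0 hU
  have hconst : c ^ q ≤ (1 + c) ^ 2 :=
    (Real.rpow_le_rpow hc (by linarith) (by linarith)).trans
      (rpow_le_sq_of_one_le (by linarith) (by linarith))
  have hμpow : μ ^ ((p - 2) * q) * μ ^ (q * (2 - p)) = 1 := by
    rw [← Real.rpow_add hμ, show (p - 2) * q + q * (2 - p) = 0 by ring, Real.rpow_zero]
  have hρpow : ρ ^ ((p - 1) * q) * ρ ^ (q * (2 - p)) = ρ ^ q := by
    rw [← Real.rpow_add hρ]; congr 1; ring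
  rw [hflux]
  calc c ^ q * (μ ^ ((p - 2) * q) * ρ ^ ((p - 1) * q)) * H ^ (p - 1)
        * (κ * U) ^ (q * (2 - p) / p)
      ≤ (1 + c) ^ 2 * (μ ^ ((p - 2) * q) * ρ ^ ((p - 1) * q)) * H ^ (p - 1)
        * (κ * K * (μ ^ (q * (2 - p)) * ρ ^ (q * (2 - p))) * G ^ (q * (2 - p) / p)) := by gcongr
    _ = (1 + c) ^ 2 * (κ * K) * (μ ^ ((p - 2) * q) * μ ^ (q * (2 - p)))
        * (ρ ^ ((p - 1) * q) * ρ ^ (q * (2 - p))) * (H ^ (p - 1) * G ^ (q * (2 - p) / p)) := by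
        ring
    _ = _ := by rw [hμpow, hρpow, mul_one]

lemma oscillation_le_of_subIntrinsic {m β C Λ : ℝ} (hp : 1 < p) (hp2 : p ≤ 2) (hq : 1 ≤ q)
    (hqp : q ≤ p) (hκ : 1 ≤ κ) (hm : 1 ≤ m) (hβ : 0 ≤ β) (hC : 0 ≤ C) (hΛ : 0 ≤ Λ) (hρ : 0 < ρ)
    (hμ : 0 < μ) (hK : 1 ≤ K) (hH : 0 ≤ H) (hG : 0 ≤ G) (hU0 : 0 ≤ U)
    (hHG : H ≤ 2 * G ^ (q / p)) (hU : U ≤ K * μ ^ p * G * ρ ^ p) :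
    6 * (m ^ q * κ * ((2 * ρ) ^ q * κ * H))
      + 6 * ((2 * β * (κ * (C / ρ) * (2 * (μ ^ (p - 2) * ρ ^ p))
        * ((Λ + 1) * (2 * H ^ ((p - 1) / q))))) ^ q * (κ * U) ^ (q * (2 - p) / p))
    ≤ (48 * m ^ 2 * κ ^ 2 + 6 * ((1 + 8 * β * κ * C * (Λ + 1)) ^ 2 * (κ * K)))
      * ρ ^ q * (H ^ (p - 1) * G ^ (q * (2 - p) / p)) := by
  have hq2 : q ≤ 2 := hqp.trans hp2
  have hspace := le_two_mul_rpow_mul_rpow hp hp2 hH hG hHG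
  have htime := rpow_flux_mul_rpow_size_le_of_subIntrinsic hp hp2 hq hqp hκ
    (show 0 ≤ 8 * β * κ * C * (Λ + 1) by positivity) hρ hμ hK hH hG hU0 hU
  have hflux : 2 * β * (κ * (C / ρ) * (2 * (μ ^ (p - 2) * ρ ^ p))
        * ((Λ + 1) * (2 * H ^ ((p - 1) / q))))
      = 8 * β * κ * C * (Λ + 1) * (μ ^ (p - 2) * ρ ^ (p - 1)) * H ^ ((p - 1) / q) := by
    rw [Real.rpow_sub_one hρ.ne']
    ring
  have hradius : (2 * ρ) ^ q ≤ 4 * ρ ^ q := by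
    rw [Real.mul_rpow zero_le_two hρ.le]
    gcongr
    exact (rpow_le_sq_of_one_le one_le_two hq2).trans (by norm_num)
  have hmean := rpow_le_sq_of_one_le hm hq2
  rw [hflux]
  set W := H ^ (p - 1) * G ^ (q * (2 - p) / p)
  calc _ ≤ 6 * (m ^ 2 * κ * (4 * ρ ^ q * κ * (2 * W)))
        + 6 * ((1 + 8 * β * κ * C * (Λ + 1)) ^ 2 * (κ * K) * ρ ^ q * W) := by gcongr
    _ = _ := by ring

end Scaling

/-! ### The Poincaré inequality -/

section Poincare

open scoped ProbabilityTheory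

namespace IsFluxSolutionOn

variable {p L q : ℝ} {u : Spc n × ℝ → Vec N} {Du F M : Spc n × ℝ → Mat N n}

section Average

variable {Q : Set (Spc n × ℝ)} {π : Measure (Spc n × ℝ)}

lemma lintegral_enorm_flux_le (h : IsFluxSolutionOn p L Q u Du F M) [IsProbabilityMeasure π]
    (hπ : π ≪ volume.restrict Q) (hp : 1 < p) (hpq : p - 1 ≤ q) :
    ∫⁻ z, ‖M z‖ₑ ∂π
      ≤ (ENNReal.ofReal L + 1) * (2 * (∫⁻ z, (‖Du z‖ₑ ^ q + ‖F z‖ₑ ^ q) ∂π) ^ ((p - 1) / q)) := by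
  have hp0 : 0 < p - 1 := by linarith
  have hM : ∀ᵐ z ∂π,
      ‖M z‖ₑ ≤ (ENNReal.ofReal L + 1) * (‖Du z‖ₑ ^ (p - 1) + ‖F z‖ₑ ^ (p - 1)) := by
    filter_upwards [hπ.ae_le h.norm_flux_le] with z hz
    calc ‖M z‖ₑ ≤ ENNReal.ofReal (L * ‖Du z‖ ^ (p - 1) + ‖F z‖ ^ (p - 1)) := by
          rw [← ofReal_norm]; exact ENNReal.ofReal_le_ofReal hz
      _ ≤ ENNReal.ofReal L * ‖Du z‖ₑ ^ (p - 1) + 1 * ‖F z‖ₑ ^ (p - 1) := by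
          refine ENNReal.ofReal_add_le.trans_eq ?_
          rw [ENNReal.ofReal_mul' (by positivity), ← ENNReal.ofReal_rpow_of_nonneg (by simp) hp0.le,
            ← ENNReal.ofReal_rpow_of_nonneg (by simp) hp0.le, ofReal_norm,
            ofReal_norm, one_mul]
      _ ≤ _ := by
          rw [mul_add]
          gcongr
          · exact le_self_add
          · exact le_add_self
  calc ∫⁻ z, ‖M z‖ₑ ∂π
      ≤ ∫⁻ z, (ENNReal.ofReal L + 1) * (‖Du z‖ₑ ^ (p - 1) + ‖F z‖ₑ ^ (p - 1)) ∂π :=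
        lintegral_mono_ae hM
    _ = (ENNReal.ofReal L + 1) * ∫⁻ z, (‖Du z‖ₑ ^ (p - 1) + ‖F z‖ₑ ^ (p - 1)) ∂π :=
        lintegral_const_mul' _ _ (by finiteness)
    _ ≤ _ := by
        gcongr
        exact lintegral_rpow_add_le hp0 hpq h.measurable_Du.enorm.aemeasurable
          h.measurable_F.enorm.aemeasurable

end Average

variable {x₀ : Spc n} {ρ a b C : ℝ} {η : Spc n → ℝ} {π : Measure (Spc n × ℝ)}

lemma lintegral_enorm_sub_integral_rpow_le
    (h : IsFluxSolutionOn p L (Metric.ball x₀ ρ ×ˢ Ioo a b) u Du F M)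
    (hp : 1 < p) (hp2 : p ≤ 2) (hq : 1 ≤ q) (hqp : q ≤ p) (hρ : 0 < ρ) (hab : a < b)
    (hη : IsCutoff η x₀ ρ C) [IsProbabilityMeasure π]
    (hπ : π = volume[|Metric.ball x₀ ρ ×ˢ Ioo a b]) (hu : Integrable u π) :
    ∫⁻ z, ‖u z - ∫ w, u w ∂π‖ₑ ^ q ∂π
      ≤ 6 * (ENNReal.ofReal (radialMeanConst (p - 1)) ^ q * 2 ^ n
          * (ENNReal.ofReal (2 * ρ) ^ q * 2 ^ n * ∫⁻ z, (‖Du z‖ₑ ^ q + ‖F z‖ₑ ^ q) ∂π))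
        + 6 * ((2 * ENNReal.ofReal (1 / (p - 1)) * (2 ^ n * ENNReal.ofReal (C / ρ)
            * ENNReal.ofReal (b - a) * ((ENNReal.ofReal L + 1)
              * (2 * (∫⁻ z, (‖Du z‖ₑ ^ q + ‖F z‖ₑ ^ q) ∂π) ^ ((p - 1) / q))))) ^ q
          * (2 ^ n * ∫⁻ z, ‖u z‖ₑ ^ p ∂π) ^ (q * (2 - p) / p)) := by
  have hac : π ≪ volume.restrict (Metric.ball x₀ ρ ×ˢ Ioo a b) :=
    hπ ▸ Measure.smul_absolutelyContinuous
  have hgrad : ∫⁻ z, ‖Du z‖ₑ ^ q ∂π ≤ ∫⁻ z, (‖Du z‖ₑ ^ q + ‖F z‖ₑ ^ q) ∂π :=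
    lintegral_mono fun z => le_self_add
  have hflux := h.lintegral_enorm_flux_le hac hp (by linarith : p - 1 ≤ q)
  calc ∫⁻ z, ‖u z - ∫ w, u w ∂π‖ₑ ^ q ∂π
      ≤ ∫⁻ z, ∫⁻ w, ‖u z - u w‖ₑ ^ q ∂π ∂π :=
        lintegral_mono fun z => enorm_sub_integral_rpow_le hu hq (u z)
    _ ≤ _ := h.lintegral_lintegral_enorm_sub_rpow_le hp hp2 hq hqp hρ hab hη hπ
    _ ≤ _ := by gcongr

theorem integral_norm_sub_integral_rpow_le
    (h : IsFluxSolutionOn p L (Metric.ball x₀ ρ ×ˢ Ioo a b) u Du F M)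
    (hp : 1 < p) (hp2 : p ≤ 2) (hq : 1 ≤ q) (hqp : q ≤ p) (hρ : 0 < ρ) (hab : a < b)
    (hη : IsCutoff η x₀ ρ C) (hπ : π = volume[|Metric.ball x₀ ρ ×ˢ Ioo a b]) :
    ∫ z, ‖u z - ∫ w, u w ∂π‖ ^ q ∂π
      ≤ 6 * (radialMeanConst (p - 1) ^ q * 2 ^ n
          * ((2 * ρ) ^ q * 2 ^ n * ∫ z, (‖Du z‖ ^ q + ‖F z‖ ^ q) ∂π))
        + 6 * ((2 * (1 / (p - 1)) * (2 ^ n * (C / ρ) * (b - a) * ((max L 0 + 1)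
              * (2 * (∫ z, (‖Du z‖ ^ q + ‖F z‖ ^ q) ∂π) ^ ((p - 1) / q))))) ^ q
          * (2 ^ n * ∫ z, ‖u z‖ ^ p ∂π) ^ (q * (2 - p) / p)) := by
  have hq0 : 0 < q := by linarith
  have hp0 : 0 < p := by linarith
  have hpq : 0 ≤ (p - 1) / q := div_nonneg (by linarith) hq0.le
  have hθ : 0 ≤ q * (2 - p) / p := div_nonneg (mul_nonneg hq0.le (by linarith)) hp0.le
  have hQ0 := volume_ball_prod_Ioo_ne_zero x₀ hρ hab
  have : IsProbabilityMeasure π := hπ ▸ ProbabilityTheory.cond_isProbabilityMeasure_of_finite hQ0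
    (volume_ball_prod_Ioo_ne_top x₀ ρ a b)
  have hu : MemLp u (ENNReal.ofReal p) π := hπ ▸ memLp_cond hQ0 h.memLp_u
  have hDu : MemLp Du (ENNReal.ofReal p) π := hπ ▸ memLp_cond hQ0 h.memLp_Du
  have hF : MemLp F (ENNReal.ofReal p) π := hπ ▸ memLp_cond hQ0 h.memLp_F
  have hqp' : ENNReal.ofReal q ≤ ENNReal.ofReal p := ENNReal.ofReal_le_ofReal hqp
  have hH := lintegral_enorm_rpow_add_ne_top hq0 (hDu.mono_exponent hqp') (hF.mono_exponent hqp')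
  have hU := lintegral_enorm_rpow_ne_top hp0 hu
  have hosc := h.lintegral_enorm_sub_integral_rpow_le hp hp2 hq hqp hρ hab hη hπ
    (hu.integrable (ENNReal.one_le_ofReal.2 hp.le))
  have hC : 0 ≤ C / ρ := (norm_nonneg _).trans (hη.norm_fderiv_le x₀)
  have hm : 0 ≤ radialMeanConst (p - 1) :=
    zero_le_one.trans (one_le_radialMeanConst (by linarith) (by linarith))
  rw [← toReal_lintegral_enorm_rpow hq0.le (f := fun z => u z - ∫ w, u w ∂π)
      (hu.1.sub aestronglyMeasurable_const),
    ← toReal_lintegral_enorm_rpow hp0.le hu.1,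
    ← toReal_lintegral_enorm_rpow_add hq0.le hDu.1 hF.1]
  refine (ENNReal.toReal_mono (by finiteness) hosc).trans_eq ?_
  rw [ENNReal.toReal_add (by finiteness) (by finiteness)]
  simp only [ENNReal.toReal_mul, ← ENNReal.toReal_rpow, ENNReal.toReal_pow, ENNReal.toReal_ofNat,
    ENNReal.toReal_add ENNReal.ofReal_ne_top ENNReal.one_ne_top, ENNReal.toReal_one,
    ENNReal.toReal_ofReal', max_eq_left hm, max_eq_left (sub_nonneg.2 hab.le),
    max_eq_left hC, max_eq_left (mul_nonneg zero_le_two hρ.le),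
    max_eq_left (one_div_nonneg.2 (sub_nonneg.2 hp.le))]

end IsFluxSolutionOn

end Poincare

lemma parCyl_eq_of_le_two {p : ℝ} (hp2 : p ≤ 2) (μ ρ : ℝ) (z₀ : Spc n × ℝ) :
    parCyl p μ ρ z₀ = Metric.ball z₀.1 ρ
      ×ˢ Ioo (z₀.2 - μ ^ (p - 2) * ρ ^ p) (z₀.2 + μ ^ (p - 2) * ρ ^ p) := by
  rcases hp2.lt_or_eq with h | h <;> simp [parCyl, h]

theorem parabolic_poincare_subquadratic_general (n : ℕ) (p L K : ℝ)
    (hp : 1 < p) (hp2 : p ≤ 2) (hK : 1 ≤ K) :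
    ∃ c > 0, ∀ (N : ℕ) (u : Spc n × ℝ → Vec N) (Du F M : Spc n × ℝ → Mat N n)
      (z₀ : Spc n × ℝ) (ρ μ : ℝ), 0 < ρ → 0 < μ →
        IsFluxSolutionOn p L (parCyl p μ ρ z₀) u Du F M →
        SubIntrinsic p K μ ρ z₀ u Du F →
        ∀ q ∈ Icc (1 : ℝ) p,
          ⨍ z in parCyl p μ ρ z₀, ‖u z - ⨍ w in parCyl p μ ρ z₀, u w‖ ^ q / ρ ^ q
            ≤ c * (⨍ z in parCyl p μ ρ z₀, (‖Du z‖ ^ q + ‖F z‖ ^ q)) ^ (p - 1)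
                * (⨍ z in parCyl p μ ρ z₀, (‖Du z‖ ^ p + ‖F z‖ ^ p)) ^ (q * (2 - p) / p) := by
  obtain ⟨C, hC, hcut⟩ := exists_isCutoff n
  have hm : 1 ≤ radialMeanConst (p - 1) := one_le_radialMeanConst (by linarith) (by linarith)
  have hp1 : 0 ≤ 1 / (p - 1) := one_div_nonneg.2 (by linarith)
  refine ⟨48 * radialMeanConst (p - 1) ^ 2 * (2 ^ n) ^ 2
    + 6 * ((1 + 8 * (1 / (p - 1)) * 2 ^ n * C * (max L 0 + 1)) ^ 2 * (2 ^ n * K)),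
    by positivity, fun N u Du F M z₀ ρ μ hρ hμ h hsub q ⟨hq, hqp⟩ => ?_⟩
  obtain ⟨η, hη⟩ := hcut z₀.1 ρ hρ
  have hab : z₀.2 - μ ^ (p - 2) * ρ ^ p < z₀.2 + μ ^ (p - 2) * ρ ^ p := by
    linarith [show 0 < μ ^ (p - 2) * ρ ^ p by positivity]
  have hQ0 := volume_ball_prod_Ioo_ne_zero z₀.1 hρ hab
  have := ProbabilityTheory.cond_isProbabilityMeasure_of_finite hQ0
    (volume_ball_prod_Ioo_ne_top _ _ _ _)
  simp only [SubIntrinsic, average, Measure.restrict_apply_univ] at hsub ⊢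
  rw [parCyl_eq_of_le_two hp2] at h hsub ⊢
  rw [integral_div, max_eq_right hp2, sub_self, Real.rpow_zero, one_mul,
    div_le_iff₀ (by positivity)] at hsub
  rw [integral_div, div_le_iff₀ (by positivity)]
  have hosc := h.integral_norm_sub_integral_rpow_le hp hp2 hq hqp hρ hab hη rfl
  rw [show z₀.2 + μ ^ (p - 2) * ρ ^ p - (z₀.2 - μ ^ (p - 2) * ρ ^ p)
    = 2 * (μ ^ (p - 2) * ρ ^ p) by ring] at hosc
  refine hosc.trans ((oscillation_le_of_subIntrinsic hp hp2 hq hqp (one_le_pow₀ one_le_two) hm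
    hp1 hC (le_max_right L 0) hρ hμ hK (by positivity) (by positivity) (by positivity)
    (integral_norm_rpow_add_le (by linarith) hqp (memLp_cond hQ0 h.memLp_Du)
      (memLp_cond hQ0 h.memLp_F)) hsub).trans_eq ?_)
  rw [← ProbabilityTheory.cond]
  ring

/-- Parabolic Poincaré inequality, subquadratic case: let `1 < p ≤ 2` and `u` a weak solution.
On any `μ`-sub-intrinsic cylinder `Q_ρ^{(μ)}(z₀) ⊆ Ω_T`, for any `q ∈ [1, p]`:
`⨍⨍ |u − (u)|^q/ρ^q ≤ c (⨍⨍ (|Du|^q + |F|^q))^{p−1} (⨍⨍ (|Du|^p + |F|^p))^{q(2−p)/p}`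
with `c = c(n, p, L, K)`. -/
theorem parabolic_poincare_subquadratic (n : ℕ) (p L K : ℝ)
    (hp : 1 < p) (hp2 : p ≤ 2) (hK : 1 ≤ K) :
    ∃ c > 0, ∀ (N : ℕ) (ν T : ℝ) (Ω : Set (Spc n))
      (A : Spc n × ℝ → Vec N → Mat N n → Mat N n) (F : Spc n × ℝ → Mat N n)
      (u : Spc n × ℝ → Vec N) (Du : Spc n × ℝ → Mat N n),
      WeakSolution p ν L T Ω A F u Du →
      ∀ (z₀ : Spc n × ℝ) (ρ μ : ℝ), 0 < ρ → 0 < μ →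
        parCyl p μ ρ z₀ ⊆ Ω ×ˢ Ioo 0 T →
        SubIntrinsic p K μ ρ z₀ u Du F →
        ∀ q ∈ Icc (1 : ℝ) p,
          ⨍ z in parCyl p μ ρ z₀, ‖u z - ⨍ w in parCyl p μ ρ z₀, u w‖ ^ q / ρ ^ q
            ≤ c * (⨍ z in parCyl p μ ρ z₀, (‖Du z‖ ^ q + ‖F z‖ ^ q)) ^ (p - 1)
                * (⨍ z in parCyl p μ ρ z₀, (‖Du z‖ ^ p + ‖F z‖ ^ p)) ^ (q * (2 - p) / p) := by
  obtain ⟨c, hc, hpoincare⟩ := parabolic_poincare_subquadratic_general n p L K hp hp2 hK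
  exact ⟨c, hc, fun N ν T Ω A F u Du h z₀ ρ μ hρ hμ hQ => hpoincare N u Du F _ z₀ ρ μ hρ hμ
    ((h.isFluxSolutionOn hp).mono (h.openΩ.prod isOpen_Ioo).measurableSet hQ)⟩
end
end
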